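/- arXiv:2101.07227 — 3 statements merged into one kernel-verified Lean document; each statement's English description precedes it below -/
import Mathlib

section
/- Let k be a number field of degree d over ℚ with ring of integers 𝒪, let v be a nonzero prime ideal of 𝒪 (a finite place of k), and let 𝒪_v denote the ring of integers of the v-adic completion k_v. Then for every positive integer s, every closed subgroup H of the topological group SL_s(𝒪_v) is topologically generated by at most 3d²s² elements; that is, there is a finite subset S of H with |S| ≤ 3d²s² such that the subgroup generated by S is dense in H. -/
/-!
Write `O` for `𝒪ᵥ`, a compact discrete valuation ring of characteristic zero with uniformizer `π`,
residue field `F` of order `q = p ^ f`, and `p = u * π ^ e` with `u` a unit. Since `𝒪 / p` surjects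
onto `O / p`, one has `e * f ≤ d` (`exists_local_data`). By compactness
(`exists_dense_of_quotients`) it is enough to generate every subgroup `Q` of `SL_s(O / π ^ i)`,
`i ≥ e + 1`, by `3 e f s²` elements (`genBy_SL_dvr`).

*`p`-subgroups.* In the congruence subgroup of level `e + 1` the map `x ↦ x ^ p` has fibres of size
at most `q ^ (e s²)`, and `p`-th powers lie in the Frattini subgroup; hence a `p`-subgroup of it is
generated by `e f s²` elements (`genBy_congruence`). The index of this part in a `p`-subgroup of
`SL_s(O / π ^ i)` is at most `p ^ (f s (s - 1) / 2 + e f s²)`, so `p`-subgroups are generated by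
`r = 2 e f s² + f s (s - 1) / 2` elements (`genBy_pgroup_SL`).

*General subgroups* (`genBy_of_pgroup_bound`). The kernel of `Q → SL_s(F)` is a `p`-group. If the
image has order divisible by `p`, let `P` be a Sylow `p`-subgroup of `Q` and `N` its normalizer.
The quotient `N / P` is isomorphic to a `p'`-subgroup of `SL_s(F)`, and its generators lift to
generators of `N` once there are more than `r` of them; this is proved by counting complements of a
minimal normal subgroup by means of crossed homomorphisms (`GenBy.share`). By the Frattini argument
`Q` is generated by `N` and elements of `p`-power order. The index of `N` is prime to `p`, divides
`|SL_s(F)|` and so is less than `p ^ (f s (s + 1) / 2)`; each further `p`-element multiplies the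
order by at least `p`, so fewer than `f s (s + 1) / 2` of them are needed. If the image has order
prime to `p`, lifting generators from the image is enough.

*`p'`-subgroups of `SL_s(F)`* (`genBy_coprime_SL`). Such a group `C` lifts to characteristic zero
by averaging and compactness (`lift_rep`), and `O` embeds into `ℂ` (`exists_ringHom_complex`). The
resulting complex representation can be made unitary, and Jordan's theorem gives an abelian subgroup
of index less than `5 ^ (2 s²)`: elements within `1 / 2` of the identity commute by an argument of
Frobenius, and the index is bounded by packing (`jordan_normed`). When `C` normalizes a nontrivial
`p`-subgroup it preserves the fixed vectors of that subgroup, so it is reducible and the bound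
improves (`jordan_SL_reducible`). The abelian subgroup and the Sylow subgroups for `2` and `3` are
nilpotent linear groups and need at most `s - 1`, `2 (s - 1)` and `2 (s - 1)` generators
(`genBy_nilpotent`); after adjoining them each new generator multiplies the order by at least `5`.
-/

/-! ### Groups generated by `k` elements -/

/-- `GenBy G k`: the group `G` can be generated by at most `k` elements. -/
def GenBy (G : Type*) [Group G] (k : ℕ) : Prop :=
  ∃ S : Finset G, S.card ≤ k ∧ Subgroup.closure (S : Set G) = ⊤

namespace GenBy

theorem mono {G : Type*} [Group G] {a b : ℕ} (h : GenBy G a) (hab : a ≤ b) : GenBy G b := by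
  obtain ⟨S, h1, h2⟩ := h
  exact ⟨S, h1.trans hab, h2⟩

theorem of_surjective {G H : Type*} [Group G] [Group H] {a : ℕ} (h : GenBy G a) (f : G →* H)
    (hf : Function.Surjective f) : GenBy H a := by
  classical
  obtain ⟨S, h1, h2⟩ := h
  refine ⟨S.image f, Finset.card_image_le.trans h1, ?_⟩
  rw [Finset.coe_image, ← MonoidHom.map_closure, h2, ← MonoidHom.range_eq_map,
    MonoidHom.range_eq_top.2 hf]

theorem congr {G H : Type*} [Group G] [Group H] {a : ℕ} (h : GenBy G a) (f : G ≃* H) :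
    GenBy H a := h.of_surjective f.toMonoidHom f.surjective

theorem subgroup_iff {G : Type*} [Group G] {K : Subgroup G} {a : ℕ} :
    GenBy K a ↔ ∃ S : Finset G, S.card ≤ a ∧ Subgroup.closure (S : Set G) = K := by
  classical
  constructor
  · rintro ⟨S, h1, h2⟩
    refine ⟨S.image K.subtype, Finset.card_image_le.trans h1, ?_⟩
    rw [Finset.coe_image, ← MonoidHom.map_closure, h2, ← MonoidHom.range_eq_map,
      Subgroup.range_subtype]
  · rintro ⟨S, h1, rfl⟩
    refine ⟨S.preimage Subtype.val Subtype.val_injective.injOn, ?_, ?_⟩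
    · refine le_trans ?_ h1
      refine Finset.card_le_card_of_injOn Subtype.val ?_ Subtype.val_injective.injOn
      intro x hx
      simpa using hx
    · rw [Finset.coe_preimage]
      exact Subgroup.closure_closure_coe_preimage

theorem sup {G : Type*} [Group G] {K L : Subgroup G} {a b : ℕ} (hK : GenBy K a)
    (hL : GenBy L b) : GenBy (K ⊔ L : Subgroup G) (a + b) := by
  classical
  rw [subgroup_iff] at *
  obtain ⟨S, h1, rfl⟩ := hK
  obtain ⟨T, h2, rfl⟩ := hL
  refine ⟨S ∪ T, (Finset.card_union_le _ _).trans (by lia), ?_⟩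
  rw [Finset.coe_union, Subgroup.closure_union]

theorem top_iff {G : Type*} [Group G] {a : ℕ} : GenBy (⊤ : Subgroup G) a ↔ GenBy G a :=
  ⟨fun h => h.congr Subgroup.topEquiv, fun h => h.congr Subgroup.topEquiv.symm⟩

theorem bot {G : Type*} [Group G] : GenBy (⊥ : Subgroup G) 0 :=
  subgroup_iff.2 ⟨∅, by simp, by simp⟩

theorem of_subsingleton {G : Type*} [Group G] [Subsingleton G] (a : ℕ) : GenBy G a :=
  ⟨∅, by simp, Subsingleton.elim _ _⟩

theorem zpowers {G : Type*} [Group G] (x : G) : GenBy (Subgroup.zpowers x) 1 :=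
  subgroup_iff.2 ⟨{x}, by simp, by simp [Subgroup.zpowers_eq_closure]⟩

theorem of_isCyclic {G : Type*} [Group G] [h : IsCyclic G] : GenBy G 1 := by
  obtain ⟨g, hg⟩ := h
  refine top_iff.1 ?_
  rw [← (Subgroup.eq_top_iff' (Subgroup.zpowers g)).2 hg]
  exact zpowers g

/-- Generators of the kernel together with lifts of generators of the image generate. -/
theorem of_hom {G Q : Type*} [Group G] [Group Q] (f : G →* Q) {a b : ℕ}
    (hk : GenBy f.ker a) (hr : GenBy f.range b) : GenBy G (a + b) := by
  classical
  obtain ⟨T, hT, hTc⟩ := hr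
  have hs : Function.Surjective f.rangeRestrict := f.rangeRestrict_surjective
  have h2 : GenBy (Subgroup.closure (T.image (Function.surjInv hs) : Set G)) b :=
    subgroup_iff.2 ⟨_, Finset.card_image_le.trans hT, rfl⟩
  have h3 := hk.sup h2
  have : Subgroup.map f.rangeRestrict (Subgroup.closure
      (T.image (Function.surjInv hs) : Set G)) = ⊤ := by
    rw [MonoidHom.map_closure, Finset.coe_image, ← Set.image_comp]
    rw [← hTc]
    congr 1
    convert Set.image_id _
    funext x
    simp [Function.surjInv_eq hs]
  have heq : f.ker ⊔ Subgroup.closure (T.image (Function.surjInv hs) : Set G) = ⊤ := by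
    rw [sup_comm, ← f.ker_rangeRestrict, ← Subgroup.comap_map_eq, this, Subgroup.comap_top]
  rw [← top_iff, ← heq]
  exact h3

/-- If every way of enlarging an intermediate subgroup by an element of `X` multiplies its order
by at least `m`, then few elements of `X` suffice to go from `K` to the whole group. -/
theorem chain {G : Type*} [Group G] [Finite G] (m : ℕ) (X : Set G)
    (j : ℕ) : ∀ (K : Subgroup G), K ⊔ Subgroup.closure X = ⊤ →
    (∀ M : Subgroup G, K ≤ M → ∀ x ∈ X, x ∉ M → m * Nat.card M ≤
      Nat.card (M ⊔ Subgroup.zpowers x : Subgroup G)) →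
    Nat.card G < m ^ (j + 1) * Nat.card K →
    ∃ S : Finset G, S.card ≤ j ∧ K ⊔ Subgroup.closure (S : Set G) = ⊤ := by
  classical
  induction j with
  | zero =>
    intro K hX hstep hc
    refine ⟨∅, by simp, ?_⟩
    by_contra hne
    have : ∃ x ∈ X, x ∉ K := by
      by_contra! h
      apply hne
      simp only [Finset.coe_empty, Subgroup.closure_empty, sup_bot_eq]
      rw [← hX, eq_comm, sup_eq_left, Subgroup.closure_le]
      exact h
    obtain ⟨x, hx, hxK⟩ := this
    have h1 := hstep K le_rfl x hx hxK
    have h2 : Nat.card (K ⊔ Subgroup.zpowers x : Subgroup G) ≤ Nat.card G :=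
      Subgroup.card_le_card_group _
    simp at hc
    lia
  | succ j ih =>
    intro K hX hstep hc
    by_cases h : ∀ x ∈ X, x ∈ K
    · refine ⟨∅, by simp, ?_⟩
      simp only [Finset.coe_empty, Subgroup.closure_empty, sup_bot_eq]
      rw [← hX, eq_comm, sup_eq_left, Subgroup.closure_le]
      exact h
    · push Not at h
      obtain ⟨x, hx, hxK⟩ := h
      have h1 := hstep K le_rfl x hx hxK
      obtain ⟨S, hS, hSc⟩ := ih (K ⊔ Subgroup.zpowers x)
        (by rw [eq_top_iff, ← hX]; exact sup_le_sup_right le_sup_left _)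
        (fun M hM => hstep M (le_sup_left.trans hM))
        (by
          refine hc.trans_le ?_
          calc m ^ (j + 1 + 1) * Nat.card K = m ^ (j + 1) * (m * Nat.card K) := by ring
            _ ≤ _ := Nat.mul_le_mul_left _ h1)
      refine ⟨insert x S, (Finset.card_insert_le _ _).trans (by lia), ?_⟩
      rw [Finset.coe_insert, Set.insert_eq, Subgroup.closure_union, ← sup_assoc,
        ← Subgroup.zpowers_eq_closure]
      exact hSc

theorem of_chain {G : Type*} [Group G] [Finite G] (m : ℕ) (X : Set G) {a j : ℕ}
    (K : Subgroup G) (hK : GenBy K a) (hX : K ⊔ Subgroup.closure X = ⊤)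
    (hstep : ∀ M : Subgroup G, K ≤ M → ∀ x ∈ X, x ∉ M → m * Nat.card M ≤
      Nat.card (M ⊔ Subgroup.zpowers x : Subgroup G))
    (hc : Nat.card G < m ^ (j + 1) * Nat.card K) : GenBy G (a + j) := by
  obtain ⟨S, hS, hSc⟩ := chain m X j K hX hstep hc
  rw [← top_iff, ← hSc]
  exact hK.sup (subgroup_iff.2 ⟨S, hS, rfl⟩)

end GenBy

/-- Adjoining to `M` an element of `p`-power order outside `M` multiplies the order by at least
`p`: the orbit of the coset `M` under that element has `p`-power length greater than one. -/
theorem card_step_of_pow {G : Type*} [Group G] [Finite G] {p : ℕ} (hp : p.Prime) {n : ℕ} (x : G)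
    (hx : x ^ p ^ n = 1) (M : Subgroup G) (hxM : x ∉ M) :
    p * Nat.card M ≤ Nat.card (M ⊔ Subgroup.zpowers x : Subgroup G) := by
  classical
  have := Fact.mk hp
  set Z := Subgroup.zpowers x
  have h1 : (Z ⊓ M).relIndex Z ∣ p ^ n := by
    refine (Subgroup.relIndex_dvd_card _ _).trans ?_
    rw [Nat.card_zpowers]
    exact orderOf_dvd_of_pow_eq_one hx
  have h2 : (Z ⊓ M).relIndex Z ≠ 1 := by
    intro h
    rw [Subgroup.relIndex_eq_one] at h
    exact hxM (h (Subgroup.mem_zpowers x)).2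
  have h3 : p ≤ M.relIndex Z := by
    rw [Subgroup.inf_relIndex_left] at h1 h2
    obtain ⟨k, hk, hk'⟩ := (Nat.dvd_prime_pow hp).1 h1
    rw [hk']
    rcases k with _ | k
    · simp [hk'] at h2
    · exact Nat.le_self_pow (by lia) p
  have h4 : M.relIndex Z ≤ M.relIndex (M ⊔ Z) :=
    Subgroup.relIndex_le_of_le_right le_sup_right Subgroup.index_ne_zero_of_finite
  have h5 := Subgroup.relIndex_mul_relIndex ⊥ M (M ⊔ Z) bot_le le_sup_left
  rw [Subgroup.relIndex_bot_left, Subgroup.relIndex_bot_left] at h5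
  rw [← h5, mul_comm]
  exact Nat.mul_le_mul_left _ (h3.trans h4)

/-- In a `p`-group, adjoining an element outside a subgroup multiplies its order by at least `p`, so
`b` elements suffice to get from `K` to `P` when `K` has index at most `p ^ b`. -/
theorem GenBy.of_pgroup {P : Type*} [Group P] [Finite P] {p : ℕ} (hp : p.Prime)
    (hP : IsPGroup p P) {a b : ℕ} (K : Subgroup P) (hK : GenBy K a)
    (hc : Nat.card P ≤ p ^ b * Nat.card K) : GenBy P (a + b) := by
  refine GenBy.of_chain p Set.univ K hK (by simp) ?_ ?_
  · intro M _ x _ hx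
    obtain ⟨n, hn⟩ := hP x
    exact card_step_of_pow hp x hn M hx
  · refine hc.trans_lt ?_
    exact Nat.mul_lt_mul_of_pos_right (Nat.pow_lt_pow_right hp.one_lt (by lia)) Nat.card_pos

/-! ### Lifting generators through a normal `p`-subgroup -/

section Share

open scoped IsMulCommutative

/-- In an elementary abelian group every nontrivial element can be sent anywhere by an
endomorphism. -/
theorem exists_end_map {M : Type*} [CommGroup M] {p : ℕ} (hp : p.Prime)
    (h : ∀ x : M, x ^ p = 1) {m₀ : M} (h0 : m₀ ≠ 1) (m : M) : ∃ φ : M →* M, φ m₀ = m := by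
  have := Fact.mk hp
  let : Module (ZMod p) (Additive M) := AddCommGroup.zmodModule (n := p) (fun x => h x)
  have h0' : (Additive.ofMul m₀) ≠ 0 := h0
  obtain ⟨g, hg⟩ := LinearMap.exists_extend (p := Submodule.span (ZMod p) {Additive.ofMul m₀})
    ((LinearMap.toSpanSingleton (ZMod p) (Additive M) (Additive.ofMul m)).comp
      (LinearEquiv.toSpanNonzeroSingleton (ZMod p) (Additive M) _ h0').symm.toLinearMap)
  refine ⟨MonoidHom.toAdditive.symm g.toAddMonoidHom, ?_⟩
  have h1 := LinearMap.congr_fun hg ⟨Additive.ofMul m₀, Submodule.mem_span_singleton_self _⟩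
  have h2 : (LinearEquiv.toSpanNonzeroSingleton (ZMod p) (Additive M) _ h0').symm
      ⟨Additive.ofMul m₀, Submodule.mem_span_singleton_self _⟩ = 1 := by
    rw [LinearEquiv.symm_apply_eq, LinearEquiv.toSpanNonzeroSingleton_one]
  simp [h2] at h1
  exact h1

/-- A crossed homomorphism from a group of order prime to the exponent `p` of the coefficients is
determined by the product of its values. -/
theorem cocycle_determined {E : Type*} [Group E] {M : Subgroup E} [M.Normal]
    [IsMulCommutative M] {p : ℕ}
    (hM : ∀ x : M, x ^ p = 1) (C : Subgroup E) [Fintype C] (hC : (Nat.card C).Coprime p)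
    (F G : E → M) (hF : ∀ a b : E, (F (a * b) : E) = b⁻¹ * F a * b * F b)
    (hG : ∀ a b : E, (G (a * b) : E) = b⁻¹ * G a * b * G b)
    (hprod : ∏ c : C, F c = ∏ c : C, G c) (h : C) : F h = G h := by
  have key : ∀ F : E → M, (∀ a b : E, (F (a * b) : E) = b⁻¹ * F a * b * F b) →
      ∏ c : C, F c = MulAut.conjNormal (h : E)⁻¹ (∏ c : C, F c) * F h ^ Nat.card C := by
    intro F hF
    calc ∏ c : C, F c = ∏ c : C, F (c * h : C) :=
          (Equiv.prod_comp (Equiv.mulRight h) (fun c : C => F c)).symm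
      _ = ∏ c : C, (MulAut.conjNormal (h : E)⁻¹ (F c) * F h) := by
          refine Finset.prod_congr rfl fun c _ => ?_
          ext
          simp [hF]
      _ = _ := by
          rw [Finset.prod_mul_distrib, map_prod]
          simp
  have h1 := key F hF
  have h2 := key G hG
  rw [hprod, h2] at h1
  have h3 : F h ^ Nat.card C = G h ^ Nat.card C := by
    rw [← h2] at h1
    exact (mul_left_cancel (h2.symm.trans h1)).symm
  have h4 : (F h / G h) ^ Nat.card C = 1 := by rw [div_pow, h3, div_self']
  have h5 : (F h / G h) = 1 := by
    have := pow_gcd_eq_one.2 ⟨h4, hM (F h / G h)⟩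
    rwa [hC, pow_one] at this
  exact div_eq_one.1 h5

theorem genBy_iff_fin {G : Type*} [Group G] {k : ℕ} :
    GenBy G k ↔ ∃ x : Fin k → G, Subgroup.closure (Set.range x) = ⊤ := by
  classical
  constructor
  · rintro ⟨S, h1, h2⟩
    refine ⟨fun i => if h : (i : ℕ) < S.card then (S.equivFin.symm ⟨i, h⟩ : G) else 1, ?_⟩
    rw [eq_top_iff, ← h2, Subgroup.closure_le]
    intro s hs
    refine Subgroup.subset_closure ⟨⟨S.equivFin ⟨s, hs⟩, by lia⟩, ?_⟩
    simp
  · rintro ⟨x, hx⟩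
    refine ⟨Finset.univ.image x, Finset.card_image_le.trans (by simp), by simpa using hx⟩

/-- Counting step: if the generators of `E / M` could never be lifted to generators of `E`, every
lift would generate a complement of `M`, and there are too few complements. -/
theorem share_step {E : Type*} [Group E] [Finite E] {p : ℕ} (hp : p.Prime) (P M : Subgroup E)
    [P.Normal] [M.Normal] [IsMulCommutative M] (hP : (Nat.card P).Coprime P.index)
    (hPp : P.index.Coprime p)
    (hMP : M ≤ P) (hbot : M ≠ ⊥)
    (hmin : ∀ N : Subgroup E, N.Normal → N ≤ M → N = ⊥ ∨ N = M)
    (hcen : ∀ m ∈ M, ∀ x ∈ P, x * m = m * x) (hel : ∀ m : M, m ^ p = 1) {k r : ℕ}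
    (hk : GenBy (E ⧸ M) k) (hr : GenBy P r) (hrk : r < k) : GenBy E k := by
  classical
  have := Fintype.ofFinite E
  rw [genBy_iff_fin] at hk hr ⊢
  obtain ⟨xb, hxb⟩ := hk
  obtain ⟨g, hg⟩ := hr
  choose x hx using fun i => QuotientGroup.mk_surjective (xb i)
  by_contra! hcon
  -- the subgroup generated by the lift of the generators twisted by `μ`
  let Y : (Fin k → M) → Subgroup E := fun μ => Subgroup.closure (Set.range fun i => x i * μ i)
  have hYM : ∀ μ, Y μ ⊔ M = ⊤ := by
    intro μ
    rw [← QuotientGroup.ker_mk' M, ← Subgroup.comap_map_eq, MonoidHom.map_closure,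
      ← Set.range_comp]
    have : (QuotientGroup.mk' M) ∘ (fun i => x i * (μ i : E)) = xb := by
      funext i
      rw [← hx]
      simp
    rw [this, hxb, Subgroup.comap_top]
  have hMcomm : ∀ a ∈ M, ∀ b ∈ M, a * b = b * a := fun a ha b hb => hcen b hb a (hMP ha)
  -- `Y μ ⊓ M` is normalized by `Y μ` and, `M` being commutative, by `M`; as `Y μ` is not everything,
  -- minimality of `M` makes it trivial
  have hYinf : ∀ μ, Y μ ⊓ M = ⊥ := by
    intro μ
    have hn : (Y μ ⊓ M).Normal := by
      rw [← Subgroup.normalizer_eq_top_iff, eq_top_iff, ← hYM μ, sup_le_iff]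
      constructor
      · intro y hy
        rw [Subgroup.mem_normalizer_iff]
        intro n
        refine and_congr ?_ ?_
        · change n ∈ Y μ ↔ _ ∈ Y μ
          rw [Subgroup.mul_mem_cancel_right _ (inv_mem hy), Subgroup.mul_mem_cancel_left _ hy]
        · change n ∈ M ↔ _ ∈ M
          rw [Subgroup.Normal.mem_comm_iff (H := M) inferInstance]
          simp
      · intro y hy
        rw [Subgroup.mem_normalizer_iff]
        intro n
        constructor
        · intro hn
          rw [hMcomm y hy n hn.2]
          simpa using hn
        · intro hn
          have : n = y * n * y⁻¹ := by
            have h1 : y * n * y⁻¹ * y = y * (y * n * y⁻¹) := hMcomm _ hn.2 _ hy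
            simp at h1
            have h2 : n = y * n * y⁻¹ := by
              rw [mul_assoc, ← mul_assoc] at h1
              simpa [mul_assoc] using h1
            exact h2
          rwa [this]
    refine (hmin _ hn inf_le_right).resolve_right fun h => hcon (fun i => x i * μ i) ?_
    rw [eq_top_iff, ← hYM μ, sup_le_iff]
    exact ⟨le_rfl, inf_eq_right.1 h⟩
  have hex : ∀ (μ : Fin k → M) (e : E), ∃ m : M, e * (m : E) ∈ Y μ := by
    intro μ e
    have : e ∈ Y μ ⊔ M := by rw [hYM]; trivial
    obtain ⟨y, hy, m, hm, rfl⟩ := Subgroup.mem_sup_of_normal_right.1 this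
    exact ⟨⟨m⁻¹, inv_mem hm⟩, by simpa using hy⟩
  have huniq : ∀ (μ : Fin k → M) (e : E) (m m' : M),
      e * (m : E) ∈ Y μ → e * (m' : E) ∈ Y μ → m = m' := by
    intro μ e m m' h1 h2
    have h3 : ((m : E)⁻¹ * (m' : E)) ∈ Y μ ⊓ M := by
      refine ⟨?_, M.mul_mem (M.inv_mem m.2) m'.2⟩
      have := mul_mem (inv_mem h1) h2
      simpa [mul_assoc] using this
    rw [hYinf, Subgroup.mem_bot] at h3
    exact Subtype.ext (inv_mul_eq_one.1 h3)
  -- `F μ` is the crossed homomorphism sending `e` to the element of `M` that moves `e` into the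
  -- complement `Y μ`; it determines `μ`, by `hFx` below
  choose F hF using hex
  have hcoc : ∀ μ, ∀ a b : E, (F μ (a * b) : E) = b⁻¹ * F μ a * b * F μ b := by
    intro μ a b
    have hm : b⁻¹ * F μ a * b * F μ b ∈ M := by
      refine mul_mem ?_ (F μ b).2
      have := (inferInstance : M.Normal).conj_mem _ (F μ a).2 b⁻¹
      simpa using this
    refine congrArg Subtype.val (huniq μ (a * b) (F μ (a * b)) ⟨_, hm⟩ (hF _ _) ?_)
    have := mul_mem (hF μ a) (hF μ b)
    simpa [mul_assoc] using this
  have hFx : ∀ μ i, F μ (x i) = μ i := fun μ i =>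
    huniq μ (x i) _ _ (hF _ _) (Subgroup.subset_closure ⟨i, rfl⟩)
  have hFm : ∀ μ (m : M), F μ m = m⁻¹ := fun μ m =>
    huniq μ m _ _ (hF _ _) (by simp)
  let Fh : (Fin k → M) → (P →* M) := fun μ => MonoidHom.mk' (fun y => F μ y) (by
    intro a b
    ext
    simp only [Subgroup.coe_mul, hcoc]
    rw [mul_assoc (b : E)⁻¹, ← hcen _ (F μ a).2 _ b.2]
    simp)
  obtain ⟨C, hC⟩ := Subgroup.exists_right_complement'_of_coprime hP
  have hCcard : (Nat.card C).Coprime p := by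
    rw [← hC.symm.index_eq_card]; exact hPp
  obtain ⟨m₀, hne⟩ := Subgroup.ne_bot_iff_exists_ne_one.1 hbot
  choose φ hφ using fun m : M => exists_end_map hp hel hne m
  -- `μ` is encoded by the values of `F μ` on generators of `P` and its product over `C`. On `M`
  -- every `F μ` is inversion, so twisting by an endomorphism of `M` leaves room for one more factor:
  -- `|M| ^ (k + 1) ≤ |M| ^ (r + 1)`
  let Θ : (Fin k → M) × M → (Fin r → M) × M := fun q =>
    (fun i => (Fh q.1 * (φ q.2).comp (Fh 1)) (g i), ∏ c : C, F q.1 c)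
  have hinj : Function.Injective Θ := by
    rintro ⟨μ, m⟩ ⟨ν, n⟩ h
    simp only [Θ, Prod.mk.injEq] at h
    obtain ⟨h1, h2⟩ := h
    have h3 : Fh μ * (φ m).comp (Fh 1) = Fh ν * (φ n).comp (Fh 1) := by
      refine MonoidHom.eq_of_eqOn_dense hg ?_
      rintro _ ⟨i, rfl⟩
      exact congrFun h1 i
    have hmn : m = n := by
      have := DFunLike.congr_fun h3 ⟨m₀, hMP m₀.2⟩
      simp only [MonoidHom.mul_apply, MonoidHom.comp_apply, Fh, MonoidHom.mk'_apply, hFm,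
        map_inv, hφ] at this
      simpa using this
    subst hmn
    have h4 : Fh μ = Fh ν := mul_right_cancel h3
    have h5 : ∀ e : E, F μ e = F ν e := by
      intro e
      obtain ⟨⟨a, c⟩, rfl⟩ := hC.2 e
      have h6 : F μ a = F ν a := DFunLike.congr_fun h4 a
      have h7 : F μ c = F ν c :=
        cocycle_determined hel C hCcard (F μ) (F ν) (hcoc μ) (hcoc ν) h2 c
      ext
      simp only [hcoc, h6, h7]
    have : μ = ν := by
      funext i
      rw [← hFx μ, ← hFx ν, h5]
    rw [this]
  have hle := Fintype.card_le_of_injective Θ hinj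
  simp only [Fintype.card_prod, Fintype.card_fun, Fintype.card_fin] at hle
  have h1 : 1 < Fintype.card M := by
    rw [Fintype.one_lt_card_iff]
    exact ⟨m₀, 1, hne⟩
  have h2 := Nat.pow_lt_pow_right h1 hrk
  have := Nat.le_of_mul_le_mul_right hle (by lia)
  lia

/-- If `P` is a normal `p`-subgroup of prime-to-`p` index, generators of the quotient can be
lifted to generators of the whole group as soon as there are more of them than `P` needs. Here `P` is
the kernel of `f`, and the bound `n` on the order serves the induction. -/
theorem GenBy.share {C : Type*} [Group C] {p : ℕ} (hp : p.Prime)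
    (hC : (Nat.card C).Coprime p) {k r : ℕ} (hrk : r < k) (hk : GenBy C k) (n : ℕ) :
    ∀ (E : Type*) [Group E] [Finite E] (f : E →* C), Function.Surjective f →
    Nat.card E ≤ n →
    IsPGroup p f.ker → GenBy f.ker r → GenBy E k := by
  have := Fact.mk hp
  induction n with
  | zero =>
    intro E _ _ f hf hn
    have : 0 < Nat.card E := Nat.card_pos
    lia
  | succ n ih =>
    intro E _ _ f hf hn hP hr
    by_cases hbot : f.ker = ⊥
    · exact hk.congr (MulEquiv.ofBijective f ⟨(MonoidHom.ker_eq_bot_iff f).1 hbot, hf⟩).symm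
    set P := f.ker with hPdef
    -- the elements of order dividing `p` of the centre of `P`
    let Z : Subgroup E :=
      { carrier := {z | z ∈ P ∧ (∀ y ∈ P, y * z = z * y) ∧ z ^ p = 1}
        one_mem' := ⟨one_mem _, by simp, by simp⟩
        mul_mem' := by
          rintro a b ⟨ha, ha', ha''⟩ ⟨hb, hb', hb''⟩
          refine ⟨mul_mem ha hb, fun y hy => ?_, ?_⟩
          · rw [← mul_assoc, ha' y hy, mul_assoc, hb' y hy, mul_assoc]
          · rw [Commute.mul_pow (hb' a ha), ha'', hb'', one_mul]
        inv_mem' := by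
          rintro a ⟨ha, ha', ha''⟩
          refine ⟨inv_mem ha, fun y hy => ?_, by rw [inv_pow, ha'', inv_one]⟩
          exact (Commute.inv_right (ha' y hy)) }
    have hZn : Z.Normal := by
      refine ⟨?_⟩
      rintro a ⟨ha, ha', ha''⟩ b
      refine ⟨(inferInstance : P.Normal).conj_mem _ ha b, fun y hy => ?_, ?_⟩
      · have h1 := ha' _ ((inferInstance : P.Normal).conj_mem y hy b⁻¹)
        simp only [inv_inv] at h1
        calc y * (b * a * b⁻¹) = b * (b⁻¹ * y * b * a) * b⁻¹ := by group
          _ = b * (a * (b⁻¹ * y * b)) * b⁻¹ := by rw [h1]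
          _ = _ := by group
      · rw [conj_pow, ha'']; simp
    have hZbot : Z ≠ ⊥ := by
      have hnt : Nontrivial P := (Subgroup.nontrivial_iff_ne_bot P).2 hbot
      have hcn : Nontrivial (Subgroup.center P) := hP.center_nontrivial
      obtain ⟨j, hj, hj'⟩ := IsPGroup.iff_card.1 (hP.to_subgroup (Subgroup.center P)) |>.imp
        (fun a ha => (⟨ha, by
          rintro rfl
          have := Finite.one_lt_card (α := Subgroup.center P)
          simp [ha] at this⟩ : Nat.card (Subgroup.center P) = p ^ a ∧ a ≠ 0))
      obtain ⟨z, hz⟩ := exists_prime_orderOf_dvd_card' (G := Subgroup.center P) p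
        (by rw [hj]; exact dvd_pow_self _ hj')
      intro h
      have hzZ : ((z : P) : E) ∈ Z := by
        refine ⟨(z : P).2, fun y hy => ?_, ?_⟩
        · have := Subgroup.mem_center_iff.1 z.2 ⟨y, hy⟩
          exact congrArg Subtype.val this
        · have := pow_orderOf_eq_one z
          rw [hz] at this
          exact congrArg (fun a : Subgroup.center P => ((a : P) : E)) this
      rw [h, Subgroup.mem_bot] at hzZ
      have : z = 1 := by
        ext; simpa using hzZ
      rw [this, orderOf_one] at hz
      exact hp.one_lt.ne hz
    -- a minimal normal subgroup of `E` inside `Z`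
    obtain ⟨M, ⟨hMn, hMbot, hMZ⟩, hMmin⟩ := (Set.toFinite
      {N : Subgroup E | N.Normal ∧ N ≠ ⊥ ∧ N ≤ Z}).exists_minimal ⟨Z, hZn, hZbot, le_rfl⟩
    have hMP : M ≤ P := fun m hm => (hMZ hm).1
    have : IsMulCommutative M := ⟨⟨fun a b => Subtype.ext ((hMZ b.2).2.1 a (hMP a.2))⟩⟩
    have hidx : P.index = Nat.card C := by
      rw [hPdef, Subgroup.index_ker, MonoidHom.range_eq_top.2 hf, Subgroup.card_top]
    obtain ⟨a, ha⟩ := IsPGroup.iff_card.1 hP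
    refine share_step hp P M ?_ (by rw [hidx]; exact hC) hMP hMbot ?_
      (fun m hm => (hMZ hm).2.1) (fun m => Subtype.ext (hMZ m.2).2.2) ?_ hr hrk
    · rw [ha, hidx]
      exact Nat.Coprime.pow_left _ hC.symm
    · intro N hN hNM
      by_cases h : N = ⊥
      · exact Or.inl h
      · exact Or.inr (le_antisymm hNM (hMmin ⟨hN, h, hNM.trans hMZ⟩ hNM))
    · let f' : E ⧸ M →* C := QuotientGroup.lift M f hMP
      have hker : f'.ker = P.map (QuotientGroup.mk' M) := QuotientGroup.ker_lift M f hMP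
      refine ih (E ⧸ M) f' ?_ ?_ ?_ ?_
      · exact QuotientGroup.lift_surjective_of_surjective M f hf hMP
      · have h1 := Subgroup.card_eq_card_quotient_mul_card_subgroup M
        have h2 : 1 < Nat.card M := (Subgroup.one_lt_card_iff_ne_bot M).2 hMbot
        have h3 : 0 < Nat.card (E ⧸ M) := Nat.card_pos
        have : Nat.card (E ⧸ M) * 2 ≤ Nat.card (E ⧸ M) * Nat.card M := Nat.mul_le_mul_left _ h2
        lia
      · rw [hker]
        exact hP.map _
      · rw [hker]
        exact hr.of_surjective ((QuotientGroup.mk' M).subgroupMap P)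
          (MonoidHom.subgroupMap_surjective _ _)

end Share

/-! ### Nilpotent linear groups -/

/-- An element of finite order prime to the characteristic that acts trivially on an invariant
subspace and on the quotient by it acts trivially. -/
theorem rep_eq_one_of_sub_quot {K L V : Type*} [Field K] [Group L] [Finite L] [AddCommGroup V]
    [Module K V] (ρ : Representation K L V) (hL : (Nat.card L : K) ≠ 0) (W : Submodule K V)
    (g : L) (h1 : ∀ w ∈ W, ρ g w = w) (h2 : ∀ x, ρ g x - x ∈ W) : ρ g = 1 := by
  have key : ∀ (n : ℕ) (x : V), ρ (g ^ n) x = x + (n : K) • (ρ g x - x) := by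
    intro n
    induction n with
    | zero => intro x; simp
    | succ n ih =>
      intro x
      rw [pow_succ', map_mul, Module.End.mul_apply, ih, map_add, map_smul, h1 _ (h2 x)]
      push_cast
      module
  ext x
  have h3 := key (Nat.card L) x
  rw [pow_card_eq_one', map_one, Module.End.one_apply, left_eq_add] at h3
  have := (smul_eq_zero.1 h3).resolve_left hL
  simpa [sub_eq_zero] using this

theorem nat_card_cast_ne_zero_of_dvd {K : Type*} [Field K] {a b : ℕ} (h : a ∣ b)
    (hb : (b : K) ≠ 0) : (a : K) ≠ 0 := by
  rintro h0
  obtain ⟨c, rfl⟩ := h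
  simp [h0] at hb

open Module in
/-- Number of generators of a finite nilpotent linear group of order prime to the characteristic.
The parameter `c` is `1` for abelian groups and `2` in general; the second bound is for groups of
determinant one. -/
theorem genBy_nilpotent {K : Type*} [Field K] [IsAlgClosed K] (c : ℕ) (hc : 1 ≤ c) (s : ℕ) :
    ∀ (L V : Type*) [Group L] [Finite L] [Group.IsNilpotent L] [AddCommGroup V] [Module K V]
      [FiniteDimensional K V] (ρ : Representation K L V),
      finrank K V = s + 1 → (Nat.card L : K) ≠ 0 → Function.Injective ρ →
      ((∀ a b : L, a * b = b * a) ∨ 2 ≤ c) →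
      GenBy L (c * s + 1) ∧ ((∀ g, LinearMap.det (ρ g) = 1) → GenBy L (c * s)) := by
  induction s using Nat.strong_induction_on with
  | _ s ih =>
  intro L V _ _ _ _ _ _ ρ hs hcard hinj hab
  -- the bound for a group preserving a proper nonzero subspace
  have red : ∀ (L' : Subgroup L) (W : Submodule K V), (∀ g ∈ L', W ≤ W.comap (ρ g)) → W ≠ ⊥ →
      W ≠ ⊤ → ∃ s', s = s' + 1 ∧ GenBy L' (c * s' + 2) ∧
        ((∀ g, LinearMap.det (ρ g) = 1) → GenBy L' (c * s' + 1)) := by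
    intro L' W hW hbot htop
    let σ : Representation K L' V := ρ.comp L'.subtype
    have hW' : ∀ g : L', W ≤ W.comap (σ g) := fun g => hW g g.2
    have hσ : Function.Injective σ := hinj.comp Subtype.val_injective
    have hcard' : (Nat.card L' : K) ≠ 0 :=
      nat_card_cast_ne_zero_of_dvd (Subgroup.card_subgroup_dvd_card L') hcard
    have hd := Submodule.finrank_quotient_add_finrank W
    have hd1 : 0 < finrank K W := by
      rw [pos_iff_ne_zero]
      exact fun h => hbot (Submodule.finrank_eq_zero.1 h)
    have hd2 : 0 < finrank K (V ⧸ W) := by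
      have := Submodule.finrank_lt htop
      lia
    obtain ⟨a, ha⟩ := Nat.exists_eq_succ_of_ne_zero hd1.ne'
    obtain ⟨b, hb⟩ := Nat.exists_eq_succ_of_ne_zero hd2.ne'
    let σ1 := σ.subrepresentation W hW'
    let N := σ1.ker
    have hab' : (∀ a b : L', a * b = b * a) ∨ 2 ≤ c :=
      hab.imp (fun h a b => Subtype.ext (h a b)) id
    have h1 := (ih a (by lia) (L' ⧸ N) W (QuotientGroup.lift N σ1 le_rfl) ha
      (nat_card_cast_ne_zero_of_dvd (Subgroup.card_quotient_dvd_card N) hcard')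
      ((QuotientGroup.injective_lift_iff N σ1 le_rfl).2 rfl)
      (hab'.imp (fun h x y => by
        induction x using QuotientGroup.induction_on with | H x => ?_
        induction y using QuotientGroup.induction_on with | H y => ?_
        rw [← QuotientGroup.mk_mul, h, QuotientGroup.mk_mul]) id)).1
    let σ2 : Representation K N (V ⧸ W) := (σ.quotient W hW').comp N.subtype
    have hN : ∀ g : N, ∀ w ∈ W, σ g w = w := by
      intro g w hw
      have := LinearMap.congr_fun (MonoidHom.mem_ker.1 g.2) ⟨w, hw⟩
      exact congrArg Subtype.val this
    have hσ2 : Function.Injective σ2 := by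
      rw [injective_iff_map_eq_one]
      intro g hg
      have h3 : σ g = 1 := by
        refine rep_eq_one_of_sub_quot σ hcard' W g (hN g) fun x => ?_
        have := LinearMap.congr_fun hg (Submodule.Quotient.mk x)
        exact (Submodule.Quotient.eq W).1 this
      ext1
      exact hσ (by rw [h3]; simp)
    have h2 := ih b (by lia) N (V ⧸ W) σ2 hb
      (nat_card_cast_ne_zero_of_dvd (Subgroup.card_subgroup_dvd_card N) hcard') hσ2
      (hab'.imp (fun h a b => Subtype.ext (h a b)) id)
    have hker : (QuotientGroup.mk' N).ker = N := QuotientGroup.ker_mk' N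
    have hran : GenBy (QuotientGroup.mk' N).range (c * a + 1) := by
      rw [MonoidHom.range_eq_top.2 (QuotientGroup.mk'_surjective N)]
      exact GenBy.top_iff.2 h1
    refine ⟨a + b, by lia, ?_, fun hdet => ?_⟩
    · have := GenBy.of_hom (QuotientGroup.mk' N) (a := c * b + 1) (by rw [hker]; exact h2.1) hran
      exact this.mono (by lia)
    · have := GenBy.of_hom (QuotientGroup.mk' N) (a := c * b) (by
        rw [hker]
        refine h2.2 fun g => ?_
        have h4 := LinearMap.det_eq_det_mul_det W (σ g) (hW' g)
        have h5 : (σ g).restrict (hW' g) = 1 := MonoidHom.mem_ker.1 g.2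
        rw [h5, map_one, one_mul] at h4
        exact h4.symm.trans (hdet g)) hran
      exact this.mono (by lia)
  have hnt : Nontrivial V := Module.nontrivial_of_finrank_pos (R := K) (by lia)
  -- eigenspaces of a nonscalar element are invariant under its centralizer
  have eig : ∀ b : L, (¬ ∃ μ : K, ρ b = μ • 1) → ∃ W : Submodule K V, W ≠ ⊥ ∧ W ≠ ⊤ ∧
      ∀ g, g * b = b * g → W ≤ W.comap (ρ g) := by
    intro b hb
    obtain ⟨μ, hμ⟩ := Module.End.exists_eigenvalue (ρ b)
    refine ⟨Module.End.eigenspace (ρ b) μ, hμ, ?_, ?_⟩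
    · intro h
      refine hb ⟨μ, ?_⟩
      ext x
      have : x ∈ Module.End.eigenspace (ρ b) μ := by rw [h]; trivial
      simpa [Module.End.mem_eigenspace_iff] using this
    · intro g hg x hx
      rw [Module.End.mem_eigenspace_iff] at hx
      rw [Submodule.mem_comap, Module.End.mem_eigenspace_iff, ← Module.End.mul_apply, ← map_mul,
        ← hg, map_mul, Module.End.mul_apply, hx, map_smul]
  by_cases hscal : ∀ z ∈ Subgroup.center L, ∃ μ : K, ρ z = μ • 1
  · -- the centre is cyclic
    have hcyc : IsCyclic (Subgroup.center L) := by
      choose μ hμ using fun z : Subgroup.center L => hscal z z.2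
      have hsm : ∀ a b : K, a • (1 : V →ₗ[K] V) = b • 1 → a = b :=
        fun a b h => smul_left_injective K (one_ne_zero) h
      let f : Subgroup.center L →* K :=
        { toFun := μ
          map_one' := hsm _ _ (by rw [← hμ]; simp)
          map_mul' := fun a b => hsm _ _ (by
            rw [← hμ, Subgroup.coe_mul, map_mul, hμ, hμ]
            rw [smul_mul_smul_comm, mul_one]) }
      refine isCyclic_of_injective_ringHom f fun a b h => Subtype.ext (hinj ?_)
      rw [hμ, hμ]
      exact congrArg (· • (1 : V →ₗ[K] V)) h
    by_cases hcomm : ∀ a b : L, a * b = b * a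
    · have htop : Subgroup.center L = ⊤ := by
        rw [eq_top_iff]
        intro x _
        exact Subgroup.mem_center_iff.2 fun g => hcomm g x
      have hg1 : GenBy L 1 := by
        rw [← GenBy.top_iff, ← htop]
        exact GenBy.of_isCyclic
      refine ⟨hg1.mono (by lia), fun hdet => ?_⟩
      rcases s with _ | s
      · have : Subsingleton L := by
          refine subsingleton_of_forall_eq 1 fun g => hinj ?_
          obtain ⟨μ, hμ⟩ := hscal g (by rw [htop]; trivial)
          have h1 := hdet g
          rw [hμ, LinearMap.det_smul, hs] at h1
          simp at h1
          rw [hμ, h1]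
          simp
        exact GenBy.of_subsingleton _
      · refine hg1.mono ?_
        have : 1 * 1 ≤ c * (s + 1) := Nat.mul_le_mul hc (by lia)
        lia
    -- nonabelian case: for a noncentral element that is central modulo the centre, the commutator
    -- with it is a homomorphism to the cyclic centre, whose kernel centralizes that element and so
    -- is reducible
    · have hc2 : 2 ≤ c := hab.resolve_left hcomm
      have hne : Subgroup.center L ≠ ⊤ := by
        intro h
        refine hcomm fun a b => ?_
        have : b ∈ Subgroup.center L := by rw [h]; trivial
        exact Subgroup.mem_center_iff.1 this a
      have : Nontrivial (L ⧸ Subgroup.center L) := QuotientGroup.nontrivial_iff.2 hne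
      obtain ⟨⟨b', hb'⟩, hne'⟩ := Subgroup.ne_bot_iff_exists_ne_one.1
        (Group.IsNilpotent.center_ne_bot (G := L ⧸ Subgroup.center L))
      obtain ⟨b, rfl⟩ := QuotientGroup.mk_surjective b'
      have hbZ : b ∉ Subgroup.center L := by
        intro h
        apply hne'
        ext
        exact (QuotientGroup.eq_one_iff b).2 h
      have hcomb : ∀ g : L, g * b * g⁻¹ * b⁻¹ ∈ Subgroup.center L := by
        intro g
        have := Subgroup.mem_center_iff.1 hb' (g : L ⧸ Subgroup.center L)
        rw [← QuotientGroup.eq_one_iff]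
        rw [QuotientGroup.mk_mul, QuotientGroup.mk_mul, QuotientGroup.mk_mul, this,
          QuotientGroup.mk_inv, QuotientGroup.mk_inv]
        group
      let χ : L →* Subgroup.center L := MonoidHom.mk' (fun g => ⟨_, hcomb g⟩) (by
        intro g h
        ext
        simp only [Subgroup.coe_mul]
        have := Subgroup.mem_center_iff.1 (hcomb h)
        calc g * h * b * (g * h)⁻¹ * b⁻¹ = g * (h * b * h⁻¹ * b⁻¹) * (b * g⁻¹ * b⁻¹) := by group
          _ = (h * b * h⁻¹ * b⁻¹) * (g * b * g⁻¹ * b⁻¹) := by rw [this]; group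
          _ = _ := ((this _).symm))
      have hχ : ∀ g ∈ χ.ker, g * b = b * g := by
        intro g hg
        have := congrArg Subtype.val (MonoidHom.mem_ker.1 hg)
        simp only [χ, MonoidHom.mk'_apply, Subgroup.coe_one] at this
        rw [mul_inv_eq_one, mul_inv_eq_iff_eq_mul] at this
        exact this
      obtain ⟨W, hW1, hW2, hW3⟩ := eig b (by
        rintro ⟨μ, hμ⟩
        refine hbZ (Subgroup.mem_center_iff.2 fun g => hinj ?_)
        rw [map_mul, map_mul, hμ]
        simp)
      obtain ⟨s', rfl, hg, hg'⟩ := red χ.ker W (fun g hg => hW3 g (hχ g hg)) hW1 hW2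
      have hr : GenBy χ.range 1 := GenBy.of_isCyclic
      refine ⟨(GenBy.of_hom χ hg hr).mono (by lia), fun hdet =>
        (GenBy.of_hom χ (hg' hdet) hr).mono (by lia)⟩
  · push Not at hscal
    obtain ⟨z, hz, hz'⟩ := hscal
    obtain ⟨W, hW1, hW2, hW3⟩ := eig z (by push Not; exact hz')
    obtain ⟨s', rfl, hg, hg'⟩ := red ⊤ W
      (fun g _ => hW3 g (Subgroup.mem_center_iff.1 hz g)) hW1 hW2
    refine ⟨(GenBy.top_iff.1 hg).mono (by lia), fun hdet =>
      (GenBy.top_iff.1 (hg' hdet)).mono (by lia)⟩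

theorem genBy_nilpotent_SL {F L : Type*} [Field F] [Group L] [Finite L] [Group.IsNilpotent L]
    (s : ℕ) (φ : L →* Matrix.SpecialLinearGroup (Fin (s + 1)) F) (hφ : Function.Injective φ)
    (hcard : (Nat.card L : F) ≠ 0) (c : ℕ) (hc : 1 ≤ c)
    (hab : (∀ a b : L, a * b = b * a) ∨ 2 ≤ c) : GenBy L (c * s) := by
  let K := AlgebraicClosure F
  let ρ : Representation K L (Fin (s + 1) → K) :=
    { toFun := fun g => Matrix.toLin' ((φ g).1.map (algebraMap F K))
      map_one' := by simp [Module.End.one_eq_id]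
      map_mul' := fun a b => by
        simp [Matrix.map_mul, Matrix.toLin'_mul, Module.End.mul_eq_comp] }
  refine (genBy_nilpotent c hc s L (Fin (s + 1) → K) ρ (by simp) ?_ ?_ hab).2 ?_
  · rw [← map_natCast (algebraMap F K)]
    exact (map_ne_zero _).2 hcard
  · intro a b h
    apply hφ
    ext i j
    have h1 := Matrix.toLin'.injective h
    have h2 := congrFun (congrFun h1 i) j
    exact (algebraMap F K).injective h2
  · intro g
    change LinearMap.det (Matrix.toLin' ((φ g).1.map (algebraMap F K))) = 1
    rw [LinearMap.det_toLin', ← RingHom.mapMatrix_apply, ← RingHom.map_det, (φ g).2, map_one]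

/-! ### Jordan's theorem in normed algebras -/

section FrobeniusCommutation

variable {𝒜 : Type*} [NormedRing 𝒜] [NormedAlgebra ℂ 𝒜]

theorem sum_pow_root {N : ℕ} (z : ℂ) (hz : z ^ N = 1) (h1 : z ≠ 1) :
    ∑ i ∈ Finset.range N, z ^ i = 0 := by
  rw [geom_sum_eq h1, hz, sub_self, zero_div]

/-- The spectral projection of an element `Y` of finite order `N` onto the eigenvalue `z`, where
`z ^ N = 1`. -/
noncomputable def specProj (N : ℕ) (Y : 𝒜) (z : ℂ) : 𝒜 :=
  (N : ℂ)⁻¹ • ∑ i ∈ Finset.range N, (z⁻¹) ^ i • Y ^ i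

theorem mul_specProj {N : ℕ} {Y : 𝒜} (hY : Y ^ N = 1) {z : ℂ} (hz : z ^ N = 1) (h0 : z ≠ 0) :
    Y * specProj N Y z = z • specProj N Y z := by
  have h : ∑ i ∈ Finset.range N, (z⁻¹) ^ (i + 1) • Y ^ (i + 1) =
      ∑ i ∈ Finset.range N, (z⁻¹) ^ i • Y ^ i := by
    have h1 := Finset.sum_range_succ (fun i => (z⁻¹) ^ i • Y ^ i) N
    rw [Finset.sum_range_succ'] at h1
    simpa [hY, hz] using h1
  unfold specProj
  rw [mul_smul_comm, smul_comm z]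
  congr 1
  conv_rhs => rw [← h]
  rw [Finset.mul_sum, Finset.smul_sum]
  refine Finset.sum_congr rfl fun i _ => ?_
  rw [smul_smul, pow_succ' z⁻¹, ← mul_assoc, mul_inv_cancel₀ h0, one_mul, mul_smul_comm, pow_succ']

theorem specProj_mul {N : ℕ} (hN : N ≠ 0) (Y e : 𝒜) {z w : ℂ} (hz : z ^ N = 1) (hw : w ^ N = 1)
    (hz0 : z ≠ 0)
    (he : Y * e = w • e) : specProj N Y z * e = if z = w then e else 0 := by
  have hpow : ∀ i, Y ^ i * e = w ^ i • e := by
    intro i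
    induction i with
    | zero => simp
    | succ i ih => rw [pow_succ, mul_assoc, he, mul_smul_comm, ih, smul_smul, pow_succ']
  have : specProj N Y z * e = ((N : ℂ)⁻¹ * ∑ i ∈ Finset.range N, (z⁻¹ * w) ^ i) • e := by
    unfold specProj
    rw [smul_mul_assoc, Finset.sum_mul, mul_smul, Finset.sum_smul]
    congr 1
    refine Finset.sum_congr rfl fun i _ => ?_
    rw [smul_mul_assoc, hpow, smul_smul, mul_pow]
  rw [this]
  split_ifs with h
  · subst h
    simp [inv_mul_cancel₀ hz0, hN]
  · rw [sum_pow_root, mul_zero, zero_smul]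
    · rw [mul_pow, inv_pow, hz, hw]; simp
    · intro h'
      exact h ((inv_mul_eq_one₀ hz0).1 h')

theorem norm_specProj_le [NormOneClass 𝒜] {N : ℕ} (hN : N ≠ 0) {Y : 𝒜} (hY : ‖Y‖ ≤ 1) {z : ℂ}
    (hz : z ^ N = 1) : ‖specProj N Y z‖ ≤ 1 := by
  have hz1 : ‖z‖ = 1 := Complex.norm_eq_one_of_pow_eq_one hz hN
  unfold specProj
  rw [norm_smul, norm_inv, Complex.norm_natCast]
  have h1 : ‖∑ i ∈ Finset.range N, (z⁻¹) ^ i • Y ^ i‖ ≤ N := by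
    refine (norm_sum_le _ _).trans ?_
    calc _ ≤ ∑ i ∈ Finset.range N, (1 : ℝ) := by
          refine Finset.sum_le_sum fun i _ => ?_
          rw [norm_smul, norm_pow, norm_inv, hz1]
          simpa using (norm_pow_le Y i).trans (pow_le_one₀ (norm_nonneg _) hY)
      _ = N := by simp
  have hN' : (0 : ℝ) < N := by positivity
  rw [inv_mul_le_one₀ hN']
  exact h1

theorem sum_specProj {N : ℕ} (hN : N ≠ 0) (Y : 𝒜) {ζ : ℂ} (hζ : IsPrimitiveRoot ζ N) :
    ∑ j ∈ Finset.range N, specProj N Y (ζ ^ j) = 1 := by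
  unfold specProj
  rw [← Finset.smul_sum, Finset.sum_comm]
  have : ∀ i ∈ Finset.range N, ∑ j ∈ Finset.range N, ((ζ ^ j)⁻¹) ^ i • Y ^ i =
      if i = 0 then (N : ℂ) • (1 : 𝒜) else 0 := by
    intro i hi
    rw [← Finset.sum_smul]
    split_ifs with h
    · subst h; simp
    · have h2 : ∀ j ∈ Finset.range N, ((ζ ^ j)⁻¹) ^ i = ((ζ ^ i)⁻¹) ^ j := by
        intro j _
        rw [inv_pow, inv_pow, ← pow_mul, ← pow_mul, mul_comm]
      rw [Finset.sum_congr rfl h2, sum_pow_root, zero_smul]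
      · rw [inv_pow, ← pow_mul, mul_comm, pow_mul, hζ.pow_eq_one]; simp
      · rw [ne_eq, inv_eq_one]
        exact hζ.pow_ne_one_of_pos_of_lt h (Finset.mem_range.1 hi)
  rw [Finset.sum_congr rfl this, Finset.sum_ite_eq' , if_pos (by simp; lia), smul_smul,
    inv_mul_cancel₀ (by exact_mod_cast hN), one_smul]

/-- Frobenius: if `Y` has finite order and commutes with its conjugate by `X`, where
`X⁻¹` and `Y` are contractions and `X` is at distance less than one from the identity, then `X` and
`Y` commute. -/
theorem frobenius_commute [NormOneClass 𝒜] {N : ℕ} (hN : N ≠ 0) {X X' Y : 𝒜} (hX : X * X' = 1)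
    (hX' : X' * X = 1) (hY : Y ^ N = 1) (nX' : ‖X'‖ ≤ 1) (nY : ‖Y‖ ≤ 1)
    (hcl : ‖X - 1‖ < 1) (hcom : Commute Y (X * Y * X')) : X * Y = Y * X := by
  set Z := X * Y * X' with hZ
  obtain ⟨ζ, hζ⟩ : ∃ ζ : ℂ, IsPrimitiveRoot ζ N := ⟨_, Complex.isPrimitiveRoot_exp N hN⟩
  have hζ0 : ∀ j, ζ ^ j ≠ 0 := fun j => pow_ne_zero _ (hζ.ne_zero hN)
  have hζN : ∀ j, (ζ ^ j) ^ N = 1 := fun j => by rw [← pow_mul, mul_comm, pow_mul, hζ.pow_eq_one,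
    one_pow]
  have hZpow : ∀ i, Z ^ i = X * Y ^ i * X' := by
    intro i
    induction i with
    | zero => simp [hX]
    | succ i ih =>
      rw [pow_succ, ih, hZ, pow_succ]
      calc X * Y ^ i * X' * (X * Y * X') = X * Y ^ i * (X' * X) * Y * X' := by noncomm_ring
        _ = _ := by rw [hX']; noncomm_ring
  have hZN : Z ^ N = 1 := by rw [hZpow, hY, mul_one, hX]
  let e := fun j => specProj N Y (ζ ^ j)
  let f := fun j => specProj N Z (ζ ^ j)
  have hef : ∀ j, f j = X * e j * X' := by
    intro j
    simp only [e, f, specProj, hZpow, mul_smul_comm, smul_mul_assoc, Finset.mul_sum,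
      Finset.sum_mul]
  have hcomm : ∀ i j, Commute (e i) (f j) := by
    intro i j
    refine Commute.smul_left (Commute.smul_right ?_ _) _
    refine Commute.sum_left _ _ _ fun a _ => Commute.sum_right _ _ _ fun b _ => ?_
    exact ((hcom.pow_pow a b).smul_left _).smul_right _
  have hYe : ∀ j, Y * e j = ζ ^ j • e j := fun j => mul_specProj hY (hζN j) (hζ0 j)
  have hZf : ∀ j, Z * f j = ζ ^ j • f j := fun j => mul_specProj hZN (hζN j) (hζ0 j)
  have hee : ∀ i, e i * e i = e i := fun i => by
    rw [specProj_mul hN Y _ (hζN i) (hζN i) (hζ0 i) (hYe i), if_pos rfl]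
  have hff : ∀ i, f i * f i = f i := fun i => by
    rw [specProj_mul hN Z _ (hζN i) (hζN i) (hζ0 i) (hZf i), if_pos rfl]
  -- `e i * f j` is an idempotent of norm less than one, hence zero
  have hzero : ∀ i j, ζ ^ i ≠ ζ ^ j → e i * f j = 0 := by
    intro i j hij
    have h1 : e i * e j = 0 := by
      rw [specProj_mul hN Y _ (hζN i) (hζN j) (hζ0 i) (hYe j), if_neg hij]
    have h2 : e i * f j = e i * (X - 1) * e j * X' := by
      rw [hef, mul_sub, sub_mul, mul_one, h1, sub_zero]; noncomm_ring
    have h3 : ‖e i * f j‖ < 1 := by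
      rw [h2]
      have n1 := norm_specProj_le hN nY (hζN i)
      have n2 := norm_specProj_le hN nY (hζN j)
      calc ‖e i * (X - 1) * e j * X'‖ ≤ ‖e i‖ * ‖X - 1‖ * ‖e j‖ * ‖X'‖ :=
            (norm_mul_le _ _).trans (mul_le_mul_of_nonneg_right ((norm_mul_le _ _).trans
              (mul_le_mul_of_nonneg_right (norm_mul_le _ _) (norm_nonneg _))) (norm_nonneg _))
        _ ≤ 1 * ‖X - 1‖ * 1 * 1 := by gcongr
        _ < 1 := by simpa using hcl
    have h4 : (e i * f j) * (e i * f j) = e i * f j := by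
      calc (e i * f j) * (e i * f j) = e i * (f j * e i) * f j := by noncomm_ring
        _ = (e i * e i) * (f j * f j) := by rw [← (hcomm i j).eq]; noncomm_ring
        _ = _ := by rw [hee, hff]
    by_contra hne
    have h5 : ‖e i * f j‖ ≤ ‖e i * f j‖ * ‖e i * f j‖ := by
      conv_lhs => rw [← h4]
      exact norm_mul_le _ _
    have h6 : 0 < ‖e i * f j‖ := norm_pos_iff.2 hne
    nlinarith
  have hYcom : ∀ i, e i * Y = ζ ^ i • e i := by
    intro i
    have : Commute (e i) Y := by
      refine Commute.smul_left ?_ _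
      exact Commute.sum_left _ _ _ fun a _ => ((Commute.refl Y).pow_left a).smul_left _
    rw [this.eq, hYe]
  have hYZ : Y = Z := by
    have h1 : ∀ i j, e i * Y * f j = e i * Z * f j := by
      intro i j
      rw [hYcom, mul_assoc (e i), hZf, smul_mul_assoc, mul_smul_comm]
      by_cases h : ζ ^ i = ζ ^ j
      · rw [h]
      · rw [hzero i j h]; simp
    have h2 : ∀ T : 𝒜, T = ∑ i ∈ Finset.range N, ∑ j ∈ Finset.range N, e i * T * f j := by
      intro T
      simp_rw [← Finset.mul_sum, ← Finset.sum_mul]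
      rw [sum_specProj hN Y hζ, sum_specProj hN Z hζ, one_mul, mul_one]
    rw [h2 Y, h2 Z]
    exact Finset.sum_congr rfl fun i _ => Finset.sum_congr rfl fun j _ => h1 i j
  calc X * Y = X * Y * (X' * X) := by rw [hX', mul_one]
    _ = Z * X := by rw [hZ]; noncomm_ring
    _ = Y * X := by rw [← hYZ]

end FrobeniusCommutation

open Module in
/-- Jordan's theorem with an explicit bound: a finite group of contractions in a normed algebra
has an abelian subgroup of bounded index. -/
theorem jordan_normed {𝒜 : Type*} [NormedRing 𝒜] [NormedAlgebra ℂ 𝒜] [NormOneClass 𝒜]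
    [FiniteDimensional ℂ 𝒜] {C : Type*} [Group C] [Finite C] (ρ : C →* 𝒜)
    (hinj : Function.Injective ρ) (hρ : ∀ g, ‖ρ g‖ ≤ 1) :
    ∃ A : Subgroup C, (∀ a ∈ A, ∀ b ∈ A, a * b = b * a) ∧ A.index + 1 ≤ 5 ^ (2 * finrank ℂ 𝒜) := by
  classical
  have hinv : ∀ g, ρ g * ρ g⁻¹ = 1 := fun g => by rw [← map_mul, mul_inv_cancel, map_one]
  have hinv' : ∀ g, ρ g⁻¹ * ρ g = 1 := fun g => by rw [← map_mul, inv_mul_cancel, map_one]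
  have hcontr : ∀ x y : C, ‖ρ (x * y * x⁻¹ * y⁻¹) - 1‖ ≤ 2 * ‖ρ x - 1‖ * ‖ρ y - 1‖ := by
    intro x y
    have h1 : ρ (x * y * x⁻¹ * y⁻¹) - 1 =
        ((ρ x - 1) * (ρ y - 1) - (ρ y - 1) * (ρ x - 1)) * (ρ x⁻¹ * ρ y⁻¹) := by
      have h2 : (ρ x - 1) * (ρ y - 1) - (ρ y - 1) * (ρ x - 1) = ρ x * ρ y - ρ y * ρ x := by
        noncomm_ring
      rw [h2, sub_mul, map_mul, map_mul, map_mul]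
      have h3 : ρ y * ρ x * (ρ x⁻¹ * ρ y⁻¹) = 1 := by
        rw [mul_assoc, ← mul_assoc (ρ x), hinv, one_mul, hinv]
      rw [h3]
      noncomm_ring
    rw [h1]
    have h4 : ‖ρ x⁻¹ * ρ y⁻¹‖ ≤ 1 := by rw [← map_mul]; exact hρ _
    calc _ ≤ ‖(ρ x - 1) * (ρ y - 1) - (ρ y - 1) * (ρ x - 1)‖ * 1 :=
          (norm_mul_le _ _).trans (by gcongr)
      _ ≤ ‖ρ x - 1‖ * ‖ρ y - 1‖ + ‖ρ y - 1‖ * ‖ρ x - 1‖ := by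
          rw [mul_one]
          exact (norm_sub_le _ _).trans (add_le_add (norm_mul_le _ _) (norm_mul_le _ _))
      _ = _ := by ring
  -- a counterexample `y` closest to the identity has a commutator with `x` that is closer still and
  -- so commutes with `x`, whence the Frobenius lemma applies
  have hcomm : ∀ x y : C, ‖ρ x - 1‖ < 1 / 2 → ‖ρ y - 1‖ < 1 → x * y = y * x := by
    intro x y hx
    by_contra! hcon
    obtain ⟨hy, hne⟩ := hcon
    obtain ⟨y, ⟨hy, hne⟩, hmin⟩ := (Set.toFinite {y : C | ‖ρ y - 1‖ < 1 ∧ x * y ≠ y * x}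
      ).exists_minimalFor (fun y => ‖ρ y - 1‖) _ ⟨y, hy, hne⟩
    have hpos : 0 < ‖ρ y - 1‖ := by
      rw [norm_pos_iff, sub_ne_zero]
      intro h
      rw [← map_one ρ] at h
      exact hne (by rw [hinj h]; simp)
    have hlt : ‖ρ (x * y * x⁻¹ * y⁻¹) - 1‖ < ‖ρ y - 1‖ := by
      refine (hcontr x y).trans_lt ?_
      nlinarith
    have h1 : x * (x * y * x⁻¹ * y⁻¹) = x * y * x⁻¹ * y⁻¹ * x := by
      by_contra h
      have := hmin (j := x * y * x⁻¹ * y⁻¹) ⟨hlt.trans hy, h⟩ hlt.le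
      exact absurd this (not_le.2 hlt)
    have h2 : Commute x (y * x * y⁻¹) := by
      have h3 : Commute x (x⁻¹ * (x * y * x⁻¹ * y⁻¹)) :=
        ((Commute.refl x).inv_right).mul_right h1
      have h4 := h3.inv_right
      have h5 : (x⁻¹ * (x * y * x⁻¹ * y⁻¹))⁻¹ = y * x * y⁻¹ := by group
      rwa [h5] at h4
    apply hne
    apply hinj
    rw [map_mul, map_mul]
    have hN : Nat.card C ≠ 0 := Nat.card_pos.ne'
    refine (frobenius_commute (N := Nat.card C) hN (X := ρ y) (X' := ρ y⁻¹) (Y := ρ x) (hinv y)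
      (hinv' y) ?_ (hρ _) (hρ _) hy ?_).symm
    · rw [← map_pow, pow_card_eq_one', map_one]
    · have := h2.map ρ
      simpa only [map_mul] using this
  let A : Subgroup C := Subgroup.closure {g | ‖ρ g - 1‖ < 1 / 2}
  refine ⟨A, ?_, ?_⟩
  · intro a ha b hb
    have hb' : b ∈ Subgroup.centralizer (A : Set C) := by
      revert b
      change A ≤ Subgroup.centralizer (A : Set C)
      rw [Subgroup.closure_le]
      intro g hg
      rw [SetLike.mem_coe, Subgroup.mem_centralizer_iff]
      intro h hh
      have : A ≤ Subgroup.centralizer {g} := by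
        rw [Subgroup.closure_le]
        intro k hk
        rw [SetLike.mem_coe, Subgroup.mem_centralizer_singleton_iff]
        exact hcomm k g hk (lt_trans (show ‖ρ g - 1‖ < 1 / 2 from hg) (by norm_num))
      exact (Subgroup.mem_centralizer_singleton_iff.1 (this hh))
    exact Subgroup.mem_centralizer_iff.1 hb' a ha
  · have := Fintype.ofFinite (C ⧸ A)
    have hsep : ∀ g h : C, g⁻¹ * h ∉ A → 1 / 2 ≤ ‖ρ g - ρ h‖ := by
      intro g h hgh
      by_contra! hlt
      refine hgh (Subgroup.subset_closure ?_)
      have h1 : ρ (g⁻¹ * h) - 1 = ρ g⁻¹ * (ρ h - ρ g) := by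
        rw [mul_sub, hinv', map_mul]
      have h2 : ‖ρ (g⁻¹ * h) - 1‖ ≤ 1 * ‖ρ h - ρ g‖ := by
        rw [h1]
        exact (norm_mul_le _ _).trans (by gcongr; exact hρ _)
      rw [one_mul, norm_sub_rev (ρ h)] at h2
      exact h2.trans_lt hlt
    -- the points `2 ρ(g)`, one for each coset, and `0` are `1`-separated in the ball of radius `2`
    let pt : C ⧸ A → 𝒜 := fun q => (2 : ℂ) • ρ q.out
    have hptsep : ∀ a b, a ≠ b → 1 ≤ ‖pt a - pt b‖ := by
      intro a b hab
      have h1 : (a.out)⁻¹ * b.out ∉ A := by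
        intro h
        apply hab
        rw [← QuotientGroup.out_eq' a, ← QuotientGroup.out_eq' b]
        exact QuotientGroup.eq.2 h
      have h2 := hsep _ _ h1
      simp only [pt]
      rw [← smul_sub, norm_smul]
      simp
      linarith
    have hpt0 : ∀ a, 1 ≤ ‖pt a‖ := by
      intro a
      have h1 : (1 : ℝ) ≤ ‖ρ a.out‖ * ‖ρ (a.out)⁻¹‖ := by
        rw [← norm_one (α := 𝒜), ← hinv a.out]
        exact norm_mul_le _ _
      have h2 := hρ (a.out)⁻¹
      simp only [pt]
      rw [norm_smul]
      simp
      nlinarith [norm_nonneg (ρ a.out)]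
    have hptinj : Function.Injective pt := by
      intro a b h
      by_contra hab
      have := hptsep a b hab
      rw [h, sub_self, norm_zero] at this
      linarith
    let S : Finset 𝒜 := insert 0 (Finset.univ.image pt)
    have hS : S.card = A.index + 1 := by
      rw [Finset.card_insert_of_notMem, Finset.card_image_of_injective _ hptinj, Finset.card_univ,
        Subgroup.index_eq_card, Nat.card_eq_fintype_card]
      intro h
      obtain ⟨a, -, ha⟩ := Finset.mem_image.1 h
      have := hpt0 a
      rw [ha, norm_zero] at this
      linarith
    rw [← hS, ← finrank_real_of_complex 𝒜]
    have : FiniteDimensional ℝ 𝒜 := FiniteDimensional.complexToReal 𝒜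
    refine Besicovitch.card_le_of_separated S ?_ ?_
    · intro c hc
      rcases Finset.mem_insert.1 hc with rfl | hc
      · simp
      · obtain ⟨a, -, rfl⟩ := Finset.mem_image.1 hc
        simp only [pt]
        rw [norm_smul]
        simp
        exact hρ _
    · intro c hc d hd hcd
      rcases Finset.mem_insert.1 hc with rfl | hc <;> rcases Finset.mem_insert.1 hd with rfl | hd
      · exact absurd rfl hcd
      · obtain ⟨a, -, rfl⟩ := Finset.mem_image.1 hd
        rw [zero_sub, norm_neg]
        exact hpt0 a
      · obtain ⟨a, -, rfl⟩ := Finset.mem_image.1 hc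
        rw [sub_zero]
        exact hpt0 a
      · obtain ⟨a, -, rfl⟩ := Finset.mem_image.1 hc
        obtain ⟨b, -, rfl⟩ := Finset.mem_image.1 hd
        exact hptsep a b fun h => hcd (by rw [h])

/-! ### Jordan's theorem for complex matrix groups -/

open scoped ComplexOrder MatrixOrder Matrix.Norms.L2Operator in
/-- Weyl's unitary trick: a complex matrix representation of a finite group is conjugate to a
contractive one. -/
theorem exists_unitary_rep {C : Type*} [Group C] [Finite C] {n : ℕ}
    (ρ : C →* Matrix (Fin n) (Fin n) ℂ) :
    ∃ ρ' : C →* Matrix (Fin n) (Fin n) ℂ, (∀ g, ρ' g = 1 → ρ g = 1) ∧ ∀ g, ‖ρ' g‖ ≤ 1 := by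
  classical
  have := Fintype.ofFinite C
  set S : Matrix (Fin n) (Fin n) ℂ := ∑ g, (ρ g).conjTranspose * ρ g with hS
  have hS1 : S.PosDef := by
    rw [hS, ← Finset.add_sum_erase _ _ (Finset.mem_univ (1 : C))]
    refine Matrix.PosDef.add_posSemidef (by simpa using Matrix.PosDef.one) ?_
    exact Matrix.posSemidef_sum _ fun g _ => Matrix.posSemidef_conjTranspose_mul_self _
  have hinv : ∀ h, (ρ h).conjTranspose * S * ρ h = S := by
    intro h
    rw [hS, Finset.mul_sum, Finset.sum_mul]
    conv_rhs => rw [← Equiv.sum_comp (Equiv.mulRight h)]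
    refine Finset.sum_congr rfl fun g _ => ?_
    simp [Matrix.mul_assoc]
  obtain ⟨B, hB⟩ := CStarAlgebra.nonneg_iff_eq_star_mul_self.1
    (Matrix.nonneg_iff_posSemidef.2 hS1.posSemidef)
  have hBu : IsUnit B := by
    have := hS1.isUnit
    rw [hB] at this
    rw [Matrix.isUnit_iff_isUnit_det] at this ⊢
    rw [Matrix.det_mul] at this
    exact isUnit_of_mul_isUnit_right this
  obtain ⟨u, rfl⟩ := hBu
  refine ⟨⟨⟨fun g => u * ρ g * (u⁻¹).val, by simp⟩, fun g h => ?_⟩, fun g hg => ?_, fun g => ?_⟩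
  · simp [mul_assoc]
  · have h2 : (u : Matrix (Fin n) (Fin n) ℂ) * ρ g * (u⁻¹).val = 1 := hg
    rw [Units.mul_inv_eq_iff_eq_mul, one_mul] at h2
    exact u.isUnit.mul_left_cancel (by rw [h2, mul_one])
  · change ‖(u : Matrix (Fin n) (Fin n) ℂ) * ρ g * (u⁻¹).val‖ ≤ 1
    set U := (u : Matrix (Fin n) (Fin n) ℂ) * ρ g * (u⁻¹).val with hU
    have h1 : U.conjTranspose * U = 1 := by
      have h3 : U.conjTranspose * U = ((u⁻¹).val).conjTranspose *
          ((ρ g).conjTranspose * (star (u : Matrix (Fin n) (Fin n) ℂ) * u) * ρ g) * (u⁻¹).val := by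
        rw [hU, Matrix.star_eq_conjTranspose, Matrix.conjTranspose_mul, Matrix.conjTranspose_mul]
        simp only [Matrix.mul_assoc]
      rw [h3, ← hB, hinv, hB, Matrix.star_eq_conjTranspose, ← Matrix.mul_assoc,
        ← Matrix.conjTranspose_mul, Matrix.mul_assoc]
      simp
    have h2 := Matrix.l2_opNorm_conjTranspose_mul_self U
    rw [h1] at h2
    have h4 : ‖(1 : Matrix (Fin n) (Fin n) ℂ)‖ ≤ 1 := by
      rcases isEmpty_or_nonempty (Fin n) with h | h
      · rw [Subsingleton.elim (1 : Matrix (Fin n) (Fin n) ℂ) 0]; simp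
      · exact le_of_eq CStarRing.norm_one
    nlinarith [norm_nonneg U]

open scoped Matrix.Norms.L2Operator in
theorem jordan_one {C : Type*} [Group C] [Finite C] {n : ℕ} (hn : 0 < n)
    (ρ : C →* Matrix (Fin n) (Fin n) ℂ) (hρ : ∀ g, ρ g = 1 → g = 1) :
    ∃ A : Subgroup C, (∀ a ∈ A, ∀ b ∈ A, a * b = b * a) ∧ A.index + 1 ≤ 5 ^ (2 * n ^ 2) := by
  obtain ⟨ρ', h1, h2⟩ := exists_unitary_rep ρ
  have : Nonempty (Fin n) := ⟨⟨0, hn⟩⟩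
  have : NormOneClass (Matrix (Fin n) (Fin n) ℂ) := ⟨CStarRing.norm_one⟩
  obtain ⟨A, hA, hA2⟩ := jordan_normed ρ'
    ((injective_iff_map_eq_one ρ').2 fun g hg => hρ g (h1 g hg)) h2
  refine ⟨A, hA, hA2.trans (le_of_eq ?_)⟩
  simp [Module.finrank_matrix, sq]

open scoped Matrix.Norms.L2Operator in
/-- Jordan's theorem for a pair of representations that are jointly faithful. -/
theorem jordan_two {C : Type*} [Group C] [Finite C] {m n : ℕ} (hm : 0 < m) (hn : 0 < n)
    (ρ : C →* Matrix (Fin m) (Fin m) ℂ) (σ : C →* Matrix (Fin n) (Fin n) ℂ)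
    (hρ : ∀ g, ρ g = 1 → σ g = 1 → g = 1) :
    ∃ A : Subgroup C, (∀ a ∈ A, ∀ b ∈ A, a * b = b * a) ∧
      A.index + 1 ≤ 5 ^ (2 * (m ^ 2 + n ^ 2)) := by
  obtain ⟨ρ', h1, h2⟩ := exists_unitary_rep ρ
  obtain ⟨σ', h3, h4⟩ := exists_unitary_rep σ
  have : Nonempty (Fin n) := ⟨⟨0, hn⟩⟩
  have : Nonempty (Fin m) := ⟨⟨0, hm⟩⟩
  have : NormOneClass (Matrix (Fin n) (Fin n) ℂ) := ⟨CStarRing.norm_one⟩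
  have : NormOneClass (Matrix (Fin m) (Fin m) ℂ) := ⟨CStarRing.norm_one⟩
  obtain ⟨A, hA, hA2⟩ := jordan_normed (ρ'.prod σ')
    ((injective_iff_map_eq_one _).2 fun g hg => hρ g (h1 g (congrArg Prod.fst hg))
      (h3 g (congrArg Prod.snd hg))) (fun g => max_le (h2 g) (h4 g))
  refine ⟨A, hA, hA2.trans (le_of_eq ?_)⟩
  rw [Module.finrank_prod]
  simp [Module.finrank_matrix, sq]

/-! ### Embedding into the complex numbers -/

open Cardinal in
/-- A domain of characteristic zero and of cardinality at most the continuum embeds into `ℂ`: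
adjoin continuum many indeterminates and pass to the algebraic closure. -/
theorem exists_ringHom_complex (O : Type*) [CommRing O] [IsDomain O] [CharZero O]
    (f : O → ℕ → ℕ) (hf : Function.Injective f) :
    ∃ ι : O →+* ℂ, Function.Injective ι := by
  let P := MvPolynomial ℝ O
  let L := AlgebraicClosure (FractionRing P)
  have hPL : Function.Injective (algebraMap P L) := by
    rw [IsScalarTower.algebraMap_eq P (FractionRing P) L]
    exact (algebraMap (FractionRing P) L).injective.comp (IsFractionRing.injective _ _)
  have hO : Cardinal.lift.{0} (Cardinal.mk O) ≤ 𝔠 := by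
    have := Cardinal.mk_le_of_injective (f := fun x : O => ULift.up (f x))
      (fun a b h => hf (ULift.up_injective h))
    simpa using this
  have hP : Cardinal.mk P = 𝔠 := by
    have := MvPolynomial.cardinalMk_eq_max_lift (σ := ℝ) (R := O)
    rw [show P = MvPolynomial ℝ O from rfl, this, Cardinal.mk_real]
    simp only [Cardinal.lift_continuum]
    rw [sup_eq_right.2 hO, sup_eq_left.2 Cardinal.aleph0_le_continuum]
  have hL : Cardinal.mk L = 𝔠 := by
    refine le_antisymm ?_ (hP ▸ Cardinal.mk_le_of_injective hPL)
    refine (Algebra.IsAlgebraic.cardinalMk_le_max (FractionRing P) L).trans ?_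
    refine max_le ?_ Cardinal.aleph0_le_continuum
    rw [Cardinal.mk_fractionRing, hP]
  have : CharZero L := charZero_of_injective_algebraMap
    (R := O) (A := L) (by
      rw [IsScalarTower.algebraMap_eq O P L]
      exact hPL.comp (MvPolynomial.C_injective ℝ O))
  obtain ⟨e⟩ := IsAlgClosed.ringEquiv_of_equiv_of_charZero (K := L) (L := ℂ)
    (by rw [hL]; exact Cardinal.aleph0_lt_continuum)
    (by rw [← Cardinal.lift_mk_eq', hL]; simp [Cardinal.mk_complex])
  refine ⟨(e : L →+* ℂ).comp ((algebraMap P L).comp MvPolynomial.C), ?_⟩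
  exact e.injective.comp (hPL.comp (MvPolynomial.C_injective ℝ O))

/-! ### Lifting representations to characteristic zero -/

/-- Newton step for multiplicative maps: averaging improves multiplicativity modulo `t` to
multiplicativity modulo `t ^ 2`, changing the map only modulo `t`. -/
theorem rep_newton {R M C : Type*} [CommRing R] [Ring M] [Algebra R M] [Group C] [Finite C]
    (c : R) (hc : c * (Nat.card C : R) = 1) (t : R) (φ : C → M) (h1 : φ 1 = 1)
    (hmul : ∀ g h, ∃ B, φ g * φ h = φ (g * h) + t • B) :
    ∃ ψ : C → M, ψ 1 = 1 ∧ (∀ g, ∃ B, ψ g = φ g + t • B) ∧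
      ∀ g h, ∃ B, ψ g * ψ h = ψ (g * h) + t ^ 2 • B := by
  classical
  have := Fintype.ofFinite C
  rw [Nat.card_eq_fintype_card] at hc
  choose α hα using hmul
  -- the cocycle identity, from associativity
  have hco : ∀ g h k, t • α g (h * k) + t • (φ g * α h k) = t • α (g * h) k + t • (α g h * φ k) := by
    intro g h k
    have e1 : φ g * φ h * φ k = φ (g * h * k) + t • α (g * h) k + t • (α g h * φ k) := by
      rw [hα g h, add_mul, hα (g * h) k, smul_mul_assoc]
    have e2 : φ g * (φ h * φ k) = φ (g * h * k) + t • α g (h * k) + t • (φ g * α h k) := by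
      rw [hα h k, mul_add, hα g (h * k), mul_smul_comm, mul_assoc g h k]
    rw [mul_assoc, e2, add_assoc, add_assoc] at e1
    exact add_left_cancel e1
  let b : C → M := fun g => c • ∑ k, α g k * φ k⁻¹
  have hα1 : ∀ h, t • α 1 h = 0 := fun h => by
    have := hα 1 h
    rw [h1, one_mul, one_mul] at this
    simpa using this.symm
  have hb : ∀ g, t • b g = c • ∑ k, t • α g k * φ k⁻¹ := fun g => by
    simp only [b, smul_mul_assoc, ← Finset.smul_sum]
    rw [smul_comm]
  refine ⟨fun g => φ g - t • b g, ?_, fun g => ⟨-b g, by simp only [smul_neg, sub_eq_add_neg]⟩,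
    fun g h => ⟨b g * b h - c • ∑ k, α g (h * k) * α (k⁻¹ * h⁻¹) h
      - c • ∑ k, α g h * α k k⁻¹, ?_⟩⟩
  · change φ 1 - t • b 1 = 1
    rw [hb]; simp [hα1, h1]
  change (φ g - t • b g) * (φ h - t • b h) = φ (g * h) - t • b (g * h) + _
  have e1 : t • b g * φ h = c • ∑ k, t • α g (h * k) * φ k⁻¹ +
      t ^ 2 • c • ∑ k, α g (h * k) * α (k⁻¹ * h⁻¹) h := by
    rw [hb, smul_mul_assoc, Finset.sum_mul, ← Equiv.sum_comp (Equiv.mulLeft h),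
      smul_comm (t ^ 2) c, ← smul_add, Finset.smul_sum (r := t ^ 2), ← Finset.sum_add_distrib]
    congr 1
    refine Finset.sum_congr rfl fun k _ => ?_
    simp only [Equiv.coe_mulLeft, mul_inv_rev]
    rw [mul_assoc, hα (k⁻¹ * h⁻¹) h, inv_mul_cancel_right, mul_add, smul_mul_smul_comm, sq]
  have e2 : t • α g h = c • ∑ k, t • α g h * φ k * φ k⁻¹ - t ^ 2 • c • ∑ k, α g h * α k k⁻¹ := by
    have : ∀ k, t • α g h * φ k * φ k⁻¹ = t • α g h + t ^ 2 • (α g h * α k k⁻¹) := fun k => by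
      rw [mul_assoc, hα k k⁻¹, mul_inv_cancel, h1, mul_add, mul_one, smul_mul_smul_comm, sq]
    simp_rw [this]
    rw [Finset.sum_add_distrib, smul_add, ← Finset.smul_sum (r := t ^ 2), smul_comm c (t ^ 2),
      add_sub_cancel_right, Finset.sum_const, Finset.card_univ, ← Nat.cast_smul_eq_nsmul R,
      smul_smul, hc, one_smul]
  have e3 : c • ∑ k, t • α g (h * k) * φ k⁻¹ + φ g * (t • b h) =
      t • b (g * h) + c • ∑ k, t • α g h * φ k * φ k⁻¹ := by
    rw [hb, hb, mul_smul_comm, ← smul_add, ← smul_add, Finset.mul_sum, ← Finset.sum_add_distrib,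
      ← Finset.sum_add_distrib]
    congr 1
    refine Finset.sum_congr rfl fun k _ => ?_
    have := congrArg (· * φ k⁻¹) (hco g h k)
    simp only [add_mul] at this
    simpa [smul_mul_assoc, mul_assoc] using this
  have e4 : t • b g * t • b h = t ^ 2 • (b g * b h) := by rw [smul_mul_smul_comm, sq]
  rw [sub_mul, mul_sub, mul_sub, e1, e4, hα g h, smul_sub, smul_sub]
  rw [e2, eq_sub_of_add_eq e3]
  abel

theorem matrix_eq_zero_of_forall_pow_smul {R : Type*} [CommRing R] (π : R)
    (hπ : ∀ x : R, (∀ j : ℕ, π ^ j ∣ x) → x = 0) {n : ℕ} (A : Matrix (Fin n) (Fin n) R)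
    (h : ∀ j : ℕ, ∃ B : Matrix (Fin n) (Fin n) R, A = π ^ j • B) : A = 0 := by
  ext a b
  refine hπ _ fun j => ?_
  obtain ⟨B, rfl⟩ := h j
  exact ⟨B a b, rfl⟩

/-- Over a compact ring that is separated for the `π`-adic topology, representations of a finite
group of invertible order lift from residue matrices. -/
theorem lift_rep {R C : Type*} [CommRing R] [TopologicalSpace R] [IsTopologicalRing R]
    [CompactSpace R] [T2Space R] [Group C] [Finite C] (π : R)
    (hπ : ∀ x : R, (∀ j : ℕ, π ^ j ∣ x) → x = 0)
    (c : R) (hc : c * (Nat.card C : R) = 1) {n : ℕ} (φ₀ : C → Matrix (Fin n) (Fin n) R)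
    (h1 : φ₀ 1 = 1) (hmul : ∀ g h, ∃ B, φ₀ g * φ₀ h = φ₀ (g * h) + π • B) :
    ∃ φ : C →* Matrix (Fin n) (Fin n) R, ∀ g, ∃ B, φ g = φ₀ g + π • B := by
  let M := Matrix (Fin n) (Fin n) R
  have hcl : ∀ j : ℕ, IsClosed {A : M | ∃ B : M, A = π ^ j • B} := fun j => by
    have : {A : M | ∃ B : M, A = π ^ j • B} = Set.range fun B : M => π ^ j • B := by
      ext A; simp [eq_comm]
    rw [this]
    have : CompactSpace M := inferInstanceAs (CompactSpace (Fin n → Fin n → R))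
    exact (isCompact_range (by fun_prop)).isClosed
  let Φ : ℕ → Set (C → M) := fun j => {φ | φ 1 = 1 ∧ (∀ g, φ g - φ₀ g ∈ {A : M | ∃ B : M, A = π ^ 1 • B}) ∧
    ∀ g h, φ g * φ h - φ (g * h) ∈ {A : M | ∃ B : M, A = π ^ j • B}}
  have hΦcl : ∀ j, IsClosed (Φ j) := fun j => by
    refine IsClosed.and (isClosed_eq (continuous_apply 1) continuous_const) (IsClosed.and ?_ ?_)
    · rw [Set.ofPred_forall]
      exact isClosed_iInter fun g => (hcl 1).preimage (by fun_prop)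
    · simp only [Set.ofPred_forall]
      refine isClosed_iInter fun g => isClosed_iInter fun h => (hcl j).preimage ?_
      fun_prop
  have hmono : ∀ i j, i ≤ j → Φ j ⊆ Φ i := by
    rintro i j hij φ ⟨h1, h2, h3⟩
    refine ⟨h1, h2, fun g h => ?_⟩
    obtain ⟨B, hB⟩ := h3 g h
    exact ⟨π ^ (j - i) • B, by rw [hB, smul_smul, ← pow_add, Nat.add_sub_cancel' hij]⟩
  have hpow : ∀ j : ℕ, ∃ φ : C → M, φ 1 = 1 ∧ (∀ g, ∃ B, φ g = φ₀ g + π • B) ∧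
      ∀ g h, ∃ B, φ g * φ h = φ (g * h) + π ^ 2 ^ j • B := by
    intro j
    induction j with
    | zero => exact ⟨φ₀, h1, fun g => ⟨0, by simp⟩, by simpa using hmul⟩
    | succ j ih =>
      obtain ⟨φ, a1, a2, a3⟩ := ih
      obtain ⟨ψ, b1, b2, b3⟩ := rep_newton c hc (π ^ 2 ^ j) φ a1 a3
      refine ⟨ψ, b1, fun g => ?_, fun g h => ?_⟩
      · obtain ⟨B, hB⟩ := a2 g
        obtain ⟨B', hB'⟩ := b2 g
        refine ⟨B + π ^ (2 ^ j - 1) • B', ?_⟩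
        rw [hB', hB, smul_add, smul_smul, ← pow_succ', Nat.sub_add_cancel Nat.one_le_two_pow,
          add_assoc]
      · obtain ⟨B, hB⟩ := b3 g h
        exact ⟨B, by rw [hB, ← pow_mul, pow_succ]⟩
  have hne : ∀ j, (Φ j).Nonempty := fun j => by
    obtain ⟨φ, a1, a2, a3⟩ := hpow j
    refine ⟨φ, hmono j (2 ^ j) Nat.lt_two_pow_self.le ⟨a1, fun g => ?_, fun g h => ?_⟩⟩
    · obtain ⟨B, hB⟩ := a2 g
      exact ⟨B, by rw [hB]; simp⟩
    · obtain ⟨B, hB⟩ := a3 g h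
      exact ⟨B, by rw [hB]; simp⟩
  have : CompactSpace (C → M) := inferInstanceAs (CompactSpace (C → Fin n → Fin n → R))
  obtain ⟨φ, hφ⟩ := IsCompact.nonempty_iInter_of_sequence_nonempty_isCompact_isClosed Φ
    (fun j => hmono j (j + 1) (Nat.le_succ j)) hne (hΦcl 0).isCompact hΦcl
  rw [Set.mem_iInter] at hφ
  refine ⟨⟨⟨φ, (hφ 0).1⟩, fun g h => ?_⟩, fun g => ?_⟩
  · refine (sub_eq_zero.1 ?_).symm
    refine matrix_eq_zero_of_forall_pow_smul π hπ _ fun j => ?_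
    obtain ⟨B, hB⟩ := (hφ j).2.2 g h
    exact ⟨B, hB⟩
  · obtain ⟨B, hB⟩ := (hφ 0).2.1 g
    exact ⟨B, by rw [← sub_eq_iff_eq_add'.1 (by simpa using hB)]; rfl⟩

/-! ### Jordan's theorem in coprime characteristic -/

/-- Every matrix representation over `F` of a finite group of order prime to the characteristic
has a complex representation of the same degree with kernel at most as large. -/
def ComplexLift.{w, u} (F : Type u) [Field F] : Prop :=
  ∀ (C : Type w) [Group C] [Finite C], (Nat.card C : F) ≠ 0 →
    ∀ (n : ℕ) (ρ : C →* Matrix (Fin n) (Fin n) F),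
      ∃ σ : C →* Matrix (Fin n) (Fin n) ℂ, ∀ g, σ g = 1 → ρ g = 1

/-- Representations over the residue field lift to `O`, which embeds into `ℂ`; the injection `f`
bounds the cardinality of `O` by the continuum. -/
theorem complexLift_of_res.{w, u, u'} {O : Type u} {F : Type u'} [CommRing O] [IsDomain O] [CharZero O]
    [TopologicalSpace O] [IsTopologicalRing O] [CompactSpace O] [T2Space O] [Field F]
    (π : O) (hπ : ∀ x : O, (∀ j : ℕ, π ^ j ∣ x) → x = 0) (res : O →+* F)
    (hres : Function.Surjective res) (hker : ∀ x, res x = 0 ↔ π ∣ x)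
    (hunit : ∀ x, res x ≠ 0 → IsUnit x) (f : O → ℕ → ℕ) (hf : Function.Injective f) :
    ComplexLift.{w} F := by
  classical
  intro C _ _ hcard n ρ
  obtain ⟨ι, hι⟩ := exists_ringHom_complex O f hf
  obtain ⟨l, hl⟩ := hres.hasRightInverse
  have hmod : ∀ A B : Matrix (Fin n) (Fin n) O, A.map res = B.map res →
      ∃ D : Matrix (Fin n) (Fin n) O, A = B + π • D := by
    intro A B h
    have : ∀ i j, π ∣ A i j - B i j := fun i j => by
      rw [← hker, map_sub, sub_eq_zero]
      exact congrFun (congrFun h i) j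
    choose D hD using this
    refine ⟨Matrix.of D, ?_⟩
    ext i j
    simp [← hD]
  have hmap : ∀ A B : Matrix (Fin n) (Fin n) O, (A * B).map res = A.map res * B.map res :=
    fun A B => Matrix.map_mul
  have hmapl : ∀ A : Matrix (Fin n) (Fin n) F, (A.map l).map res = A := fun A => by
    ext i j; exact hl _
  have hmap1 : (1 : Matrix (Fin n) (Fin n) O).map res = 1 :=
    Matrix.map_one _ (map_zero _) (map_one _)
  let φ₀ : C → Matrix (Fin n) (Fin n) O := fun g => if g = 1 then 1 else (ρ g).map l
  have hφ₀ : ∀ g, (φ₀ g).map res = ρ g := fun g => by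
    by_cases hg : g = 1
    · subst hg
      simp only [φ₀, if_true, hmap1, map_one]
    · simp only [φ₀, if_neg hg, hmapl]
  obtain ⟨c, hc⟩ := (hunit (Nat.card C : O) (by rwa [map_natCast])).exists_left_inv
  obtain ⟨φ, hφ⟩ := lift_rep (C := C) π hπ c hc φ₀ (by simp [φ₀])
    (fun g h => hmod _ _ (by rw [hmap, hφ₀, hφ₀, hφ₀, map_mul]))
  refine ⟨((ι.mapMatrix : Matrix (Fin n) (Fin n) O →+* _) : _ →* _).comp φ, fun g hg => ?_⟩
  have h1 : φ g = 1 := Matrix.map_injective hι (by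
    change (φ g).map ι = (1 : Matrix (Fin n) (Fin n) O).map ι
    rw [Matrix.map_one _ (map_zero _) (map_one _)]
    exact hg)
  obtain ⟨B, hB⟩ := hφ g
  rw [← hφ₀ g, ← hmap1, ← h1, hB]
  ext i j
  simp [(hker π).2 dvd_rfl]

theorem jordan_SL.{w, u} {F : Type u} {C : Type w} [Field F] [Group C] [Finite C] (hF : ComplexLift.{w} F)
    (hcard : (Nat.card C : F) ≠ 0) {s : ℕ} (hs : 0 < s)
    (φ : C →* Matrix.SpecialLinearGroup (Fin s) F) (hφ : Function.Injective φ) :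
    ∃ A : Subgroup C, (∀ a ∈ A, ∀ b ∈ A, a * b = b * a) ∧ A.index + 1 ≤ 5 ^ (2 * s ^ 2) := by
  let ρ : C →* Matrix (Fin s) (Fin s) F :=
    { toFun := fun g => (φ g).1, map_one' := by simp, map_mul' := by simp }
  obtain ⟨σ, hσ⟩ := hF C hcard s ρ
  exact jordan_one hs σ fun g hg => hφ (by rw [map_one]; exact Subtype.ext (hσ g hg))

/-- The improvement of `jordan_SL` for reducible groups: the sum of an invariant subspace and its
quotient is still faithful, by Maschke's theorem. -/
theorem jordan_SL_reducible.{w, u} {F : Type u} {C : Type w} [Field F] [Group C] [Finite C] (hF : ComplexLift.{w} F)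
    (hcard : (Nat.card C : F) ≠ 0) {s : ℕ}
    (φ : C →* Matrix.SpecialLinearGroup (Fin (s + 1)) F) (hφ : Function.Injective φ)
    (W : Submodule F (Fin (s + 1) → F)) (hW : W ≠ ⊥) (hW' : W ≠ ⊤)
    (hinv : ∀ g, ∀ w ∈ W, (φ g).1.mulVec w ∈ W) :
    ∃ A : Subgroup C, (∀ a ∈ A, ∀ b ∈ A, a * b = b * a) ∧
      A.index + 1 ≤ 5 ^ (2 * (s ^ 2 + 1)) := by
  let ρ : Representation F C (Fin (s + 1) → F) :=
    { toFun := fun g => Matrix.toLin' (φ g).1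
      map_one' := by simp; rfl
      map_mul' := fun g h => by simp [Matrix.toLin'_mul]; rfl }
  have hle : ∀ g, W ≤ W.comap (ρ g) := fun g w hw => by
    simpa [ρ] using hinv g w hw
  let ρ₁ := ρ.subrepresentation W hle
  let ρ₂ := ρ.quotient W hle
  let b₁ := Module.finBasis F W
  let b₂ := Module.finBasis F ((Fin (s + 1) → F) ⧸ W)
  have hsum := Submodule.finrank_quotient_add_finrank W
  have hp1 : 0 < Module.finrank F W := by
    rw [Module.finrank_pos_iff]; exact Submodule.nontrivial_iff_ne_bot.2 hW
  have hp2 : 0 < Module.finrank F ((Fin (s + 1) → F) ⧸ W) := by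
    rw [Module.finrank_pos_iff]; exact Submodule.Quotient.nontrivial_iff.2 hW'
  obtain ⟨σ₁, hσ₁⟩ := hF C hcard _ ((LinearMap.toMatrixAlgEquiv b₁).toMulEquiv.toMonoidHom.comp ρ₁)
  obtain ⟨σ₂, hσ₂⟩ := hF C hcard _ ((LinearMap.toMatrixAlgEquiv b₂).toMulEquiv.toMonoidHom.comp ρ₂)
  obtain ⟨A, hA, hA2⟩ := jordan_two hp1 hp2 σ₁ σ₂ (fun g e1 e2 => by
    have e1' : ρ₁ g = 1 := (LinearMap.toMatrixAlgEquiv b₁).injective (by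
      rw [map_one]; exact hσ₁ g e1)
    have e2' : ρ₂ g = 1 := (LinearMap.toMatrixAlgEquiv b₂).injective (by
      rw [map_one]; exact hσ₂ g e2)
    have : ρ g = 1 := rep_eq_one_of_sub_quot ρ hcard W g
      (fun w hw => congrArg Subtype.val (LinearMap.congr_fun e1' ⟨w, hw⟩))
      (fun x => by
        have := LinearMap.congr_fun e2' (Submodule.Quotient.mk x)
        exact (Submodule.Quotient.eq W).1 this)
    refine hφ ?_
    rw [map_one]
    refine Subtype.ext (Matrix.toLin'.injective ?_)
    exact this.trans (by simp; rfl))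
  refine ⟨A, hA, hA2.trans (Nat.pow_le_pow_right (by norm_num) ?_)⟩
  obtain ⟨x, hx⟩ := Nat.exists_eq_add_of_lt hp1
  obtain ⟨y, hy⟩ := Nat.exists_eq_add_of_lt hp2
  simp only [zero_add] at hx hy
  rw [hx, hy] at hsum ⊢
  have : s = x + y + 1 := by simp at hsum; omega
  subst this
  nlinarith [Nat.zero_le (x * y)]

/-! ### Linear groups of order prime to the characteristic -/

/-- A finite subgroup of `SL_{s+1}(F)` of order prime to the characteristic, with an abelian
subgroup of index less than `5 ^ (j + 1)`. Adjoining Sylow `2`- and `3`-subgroups to the abelian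
subgroup makes the remaining index coprime to `6`, so that each further generator enlarges the
group at least by a factor `5`. -/
theorem genBy_coprime_SL {F C : Type*} [Field F] [Group C] [Finite C]
    (hcard : (Nat.card C : F) ≠ 0) {s : ℕ}
    (φ : C →* Matrix.SpecialLinearGroup (Fin (s + 1)) F) (hφ : Function.Injective φ)
    (A : Subgroup C) (hA : ∀ a ∈ A, ∀ b ∈ A, a * b = b * a) {j : ℕ}
    (hj : A.index < 5 ^ (j + 1)) : GenBy C (5 * s + j) := by
  have hsub : ∀ L : Subgroup C, (Nat.card L : F) ≠ 0 := fun L =>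
    nat_card_cast_ne_zero_of_dvd L.card_subgroup_dvd_card hcard
  have hinj : ∀ L : Subgroup C, Function.Injective (φ.comp L.subtype) := fun L =>
    hφ.comp L.subtype_injective
  have hA' : GenBy A (1 * s) := by
    have hc : ∀ a b : A, a * b = b * a := fun a b => Subtype.ext (hA a a.2 b b.2)
    let : CommGroup A := { (inferInstance : Group A) with mul_comm := hc }
    have : Group.IsNilpotent A := CommGroup.isNilpotent
    exact genBy_nilpotent_SL s (φ.comp A.subtype) (hinj A) (hsub A) 1 le_rfl (Or.inl hc)
  have hSyl : ∀ (ℓ : ℕ) [Fact ℓ.Prime] (P : Sylow ℓ C), GenBy (P : Subgroup C) (2 * s) := by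
    intro ℓ _ P
    have : Group.IsNilpotent (P : Subgroup C) := P.isPGroup'.isNilpotent
    exact genBy_nilpotent_SL s (φ.comp (P : Subgroup C).subtype) (hinj P) (hsub P) 2 (by norm_num)
      (Or.inr le_rfl)
  have := Fact.mk Nat.prime_two
  have := Fact.mk Nat.prime_three
  let P2 : Sylow 2 C := default
  let P3 : Sylow 3 C := default
  let K : Subgroup C := A ⊔ P2 ⊔ P3
  have hK : GenBy K (1 * s + 2 * s + 2 * s) := (hA'.sup (hSyl 2 P2)).sup (hSyl 3 P3)
  have h2 : (P2 : Subgroup C) ≤ K := le_sup_right.trans le_sup_left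
  have h3 : (P3 : Subgroup C) ≤ K := le_sup_right
  have hAK : A ≤ K := le_sup_left.trans le_sup_left
  have hKcard := K.card_mul_index
  refine (GenBy.of_chain 5 Set.univ (j := j) K hK (by simp) ?_ ?_).mono (by omega)
  · intro M hM x _ hx
    have hle : M ≤ M ⊔ Subgroup.zpowers x := le_sup_left
    have hmul := Subgroup.relIndex_mul_relIndex ⊥ M (M ⊔ Subgroup.zpowers x) bot_le hle
    rw [Subgroup.relIndex_bot_left, Subgroup.relIndex_bot_left] at hmul
    have hdvd : M.relIndex (M ⊔ Subgroup.zpowers x) ∣ M.index :=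
      Subgroup.relIndex_dvd_index_of_le hle
    have hdvd' : ∀ ℓ, ℓ ∣ M.relIndex (M ⊔ Subgroup.zpowers x) → ∀ L : Subgroup C, L ≤ K →
        ℓ ∣ L.index := fun ℓ h L hL =>
      (h.trans hdvd).trans (Subgroup.index_dvd_of_le (hL.trans hM))
    have n2 : ¬ 2 ∣ M.relIndex (M ⊔ Subgroup.zpowers x) := fun h =>
      P2.not_dvd_index (hdvd' 2 h _ h2)
    have n3 : ¬ 3 ∣ M.relIndex (M ⊔ Subgroup.zpowers x) := fun h =>
      P3.not_dvd_index (hdvd' 3 h _ h3)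
    have n1 : M.relIndex (M ⊔ Subgroup.zpowers x) ≠ 1 := fun h => hx <|
      Subgroup.relIndex_eq_one.1 h (le_sup_right (a := M) (Subgroup.mem_zpowers x))
    have n5 : 5 ≤ M.relIndex (M ⊔ Subgroup.zpowers x) := by omega
    rw [← hmul, mul_comm]
    exact Nat.mul_le_mul_left _ n5
  · have : K.index ≤ A.index :=
      Nat.le_of_dvd (Nat.pos_of_ne_zero Subgroup.index_ne_zero_of_finite)
        (Subgroup.index_dvd_of_le hAK)
    rw [← hKcard, mul_comm]
    exact Nat.mul_lt_mul_of_pos_right (this.trans_lt hj) Nat.card_pos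

/-! ### Orders of special linear groups over finite fields -/

open Finset in
theorem card_GL_factor {F : Type*} [Field F] [Finite F] (n : ℕ) :
    Nat.card (Matrix.GeneralLinearGroup (Fin n) F) = Nat.card F ^ (n * (n - 1) / 2) *
      ∏ j ∈ range n, (Nat.card F ^ (j + 1) - 1) := by
  have := Fintype.ofFinite F
  rw [Matrix.card_GL_field, Fin.prod_univ_eq_prod_range (fun i => Fintype.card F ^ n - Fintype.card F ^ i),
    ← Finset.sum_range_id, ← Finset.prod_pow_eq_pow_sum, ← Finset.prod_range_reflect (fun j => _ - 1),
    ← Finset.prod_mul_distrib, Nat.card_eq_fintype_card]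
  refine Finset.prod_congr rfl fun i hi => ?_
  rw [Finset.mem_range] at hi
  rw [Nat.mul_sub, mul_one, ← pow_add]
  congr 2
  omega

theorem card_SL_dvd_card_GL {F : Type*} [Field F] [Finite F] (n : ℕ) :
    Nat.card (Matrix.SpecialLinearGroup (Fin n) F) ∣
      Nat.card (Matrix.GeneralLinearGroup (Fin n) F) := by
  refine Subgroup.card_dvd_of_injective (Matrix.SpecialLinearGroup.toGL) ?_
  intro A B h
  exact Subtype.ext (congrArg Units.val h)

open Finset in
theorem coprime_prod_pow_sub_one {p q : ℕ} (hp : p.Prime) (hq : p ∣ q) (hq0 : 0 < q) (n : ℕ) :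
    p.Coprime (∏ j ∈ range n, (q ^ (j + 1) - 1)) := by
  refine Nat.Coprime.prod_right fun j _ => ?_
  rw [hp.coprime_iff_not_dvd]
  intro h
  have h1 : p ∣ q ^ (j + 1) := dvd_pow hq (Nat.succ_ne_zero j)
  have h2 := (Nat.dvd_sub_iff_right (Nat.one_le_pow _ _ hq0) h1).1 h
  exact hp.one_lt.ne' (Nat.dvd_one.1 h2)

open Finset in
/-- A bound for the divisors prime to `p` of the order of `SL_{s+1}(𝔽_q)`. -/
theorem lt_of_dvd_card_SL {F : Type*} [Field F] [Finite F] {p f : ℕ} (hp : p.Prime) (hf : 0 < f)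
    (hF : Nat.card F = p ^ f) {s m : ℕ} (hm : m.Coprime p)
    (hdvd : m ∣ Nat.card (Matrix.SpecialLinearGroup (Fin (s + 1)) F)) :
    m < p ^ (f * ((s + 1) * (s + 2) / 2)) := by
  have h1 := hdvd.trans (card_SL_dvd_card_GL (s + 1))
  rw [card_GL_factor, hF] at h1
  have h2 : m ∣ ∏ j ∈ range (s + 1), ((p ^ f) ^ (j + 1) - 1) :=
    (Nat.Coprime.pow_right _ (Nat.Coprime.pow_right _ hm)).dvd_of_dvd_mul_left h1
  have hpos : ∀ j ∈ range (s + 1), 0 < (p ^ f) ^ (j + 1) - 1 := fun j _ => by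
    rw [← pow_mul]
    exact Nat.sub_pos_of_lt (Nat.one_lt_pow (mul_pos hf j.succ_pos).ne' hp.one_lt)
  refine (Nat.le_of_dvd (Finset.prod_pos hpos) h2).trans_lt ?_
  calc ∏ j ∈ range (s + 1), ((p ^ f) ^ (j + 1) - 1) < ∏ j ∈ range (s + 1), (p ^ f) ^ (j + 1) :=
        Finset.prod_lt_prod_of_nonempty hpos (fun j hj => by have := hpos j hj; omega) (by simp)
    _ = (p ^ f) ^ (∑ j ∈ range (s + 1), (j + 1)) := Finset.prod_pow_eq_pow_sum _ _ _
    _ = _ := by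
      rw [← pow_mul]
      congr 2
      have := Finset.sum_range_id (s + 2)
      rw [Finset.sum_range_succ'] at this
      simp only [add_zero] at this
      rw [this, mul_comm]
      congr 2

/-- A bound for the `p`-subgroups of `SL_n(𝔽_q)`, coming from the `p`-part of the order. -/
theorem card_pgroup_SL_le {F : Type*} [Field F] [Finite F] {p f : ℕ} (hp : p.Prime) (hf : 0 < f)
    (hF : Nat.card F = p ^ f) {n : ℕ} (P : Subgroup (Matrix.SpecialLinearGroup (Fin n) F))
    (hP : IsPGroup p P) : Nat.card P ≤ p ^ (f * (n * (n - 1) / 2)) := by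
  have := Fact.mk hp
  have h1 := P.card_subgroup_dvd_card.trans (card_SL_dvd_card_GL n)
  rw [card_GL_factor, hF, ← pow_mul] at h1
  obtain ⟨m, hm⟩ := IsPGroup.iff_card.1 hP
  refine Nat.le_of_dvd (pow_pos hp.pos _) (Nat.Coprime.dvd_of_dvd_mul_right ?_ h1)
  rw [hm]
  exact Nat.Coprime.pow_left _
    (coprime_prod_pow_sub_one hp (dvd_pow_self p hf.ne') (pow_pos hp.pos _) n)

/-! ### Reduction to `p`-groups -/

theorem card_cast_ne_zero_iff {F : Type*} [Field F] {p : ℕ} [CharP F p] (hp : p.Prime) {m : ℕ} :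
    (m : F) ≠ 0 ↔ m.Coprime p := by
  rw [Ne, CharP.cast_eq_zero_iff F p, Nat.coprime_comm, hp.coprime_iff_not_dvd]

/-- A nontrivial `p`-group of matrices in characteristic `p` has a nonzero proper space of fixed
vectors; it is invariant under everything normalizing the `p`-group. -/
theorem exists_fixed_submodule {F Q : Type*} [Field F] [Finite F] [Group Q] [Finite Q] {p : ℕ}
    (hp : p.Prime) [CharP F p] {n : ℕ} (hn : 0 < n) (φ : Q →* Matrix.SpecialLinearGroup (Fin n) F)
    (P : Subgroup Q) (hP : IsPGroup p P) (hne : ¬ P ≤ φ.ker) :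
    ∃ W : Submodule F (Fin n → F), W ≠ ⊥ ∧ W ≠ ⊤ ∧
      ∀ g ∈ Subgroup.normalizer (P : Set Q), ∀ w ∈ W, (φ g).1.mulVec w ∈ W := by
  classical
  have := Fact.mk hp
  let W : Submodule F (Fin n → F) :=
    { carrier := {w | ∀ x ∈ P, (φ x).1.mulVec w = w}
      add_mem' := fun {a b} ha hb x hx => by rw [Matrix.mulVec_add, ha x hx, hb x hx]
      zero_mem' := fun x _ => Matrix.mulVec_zero _
      smul_mem' := fun c a ha x hx => by rw [Matrix.mulVec_smul, ha x hx] }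
  refine ⟨W, ?_, ?_, ?_⟩
  · let act : MulAction P (Fin n → F) :=
      { smul := fun x w => (φ x).1.mulVec w
        one_smul := fun w => by
          change (φ ((1 : P) : Q)).1.mulVec w = w
          simp
        mul_smul := fun x y w => by
          change (φ ((x * y : P) : Q)).1.mulVec w = (φ x).1.mulVec ((φ y).1.mulVec w)
          simp [Matrix.mulVec_mulVec] }
    have hdvd : p ∣ Nat.card (Fin n → F) := by
      rw [Nat.card_fun, Nat.card_fin]
      refine dvd_pow ?_ hn.ne'
      rw [← CharP.cast_eq_zero_iff F p]
      have := Fintype.ofFinite F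
      rw [Nat.card_eq_fintype_card, FiniteField.cast_card_eq_zero]
    obtain ⟨b, hb, hb0⟩ := hP.exists_fixed_point_of_prime_dvd_card_of_fixed_point
      (Fin n → F) hdvd (a := 0) (fun x => Matrix.mulVec_zero _)
    intro hW
    have : b ∈ W := fun x hx => hb ⟨x, hx⟩
    rw [hW, Submodule.mem_bot] at this
    exact hb0 this.symm
  · intro hW
    refine hne fun x hx => ?_
    rw [MonoidHom.mem_ker]
    refine Subtype.ext (Matrix.toLin'.injective (LinearMap.ext fun w => ?_))
    have : w ∈ W := hW ▸ Submodule.mem_top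
    simpa using this x hx
  · intro g hg w hw x hx
    have hx' : g⁻¹ * x * g ∈ P := by
      have := (Subgroup.mem_normalizer_iff''.1 hg x).1 hx
      exact this
    have := hw _ hx'
    calc (φ x).1.mulVec ((φ g).1.mulVec w) = (φ (x * g)).1.mulVec w := by
          simp [Matrix.mulVec_mulVec]
      _ = (φ (g * (g⁻¹ * x * g))).1.mulVec w := by
            rw [show g * (g⁻¹ * x * g) = x * g by group]
      _ = (φ g).1.mulVec ((φ (g⁻¹ * x * g)).1.mulVec w) := by
          rw [map_mul φ g, Matrix.SpecialLinearGroup.coe_mul, Matrix.mulVec_mulVec]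
      _ = _ := by rw [this]

theorem ker_inf_eq_bot_of_coprime {Q R : Type*} [Group Q] [Finite Q] [Group R] {p : ℕ}
    (hp : p.Prime) (φ : Q →* R) (hker : IsPGroup p φ.ker) (C : Subgroup Q)
    (hC : (Nat.card C).Coprime p) : Function.Injective (φ.comp C.subtype) := by
  have := Fact.mk hp
  rw [injective_iff_map_eq_one]
  intro x hx
  obtain ⟨m, hm⟩ := hker ⟨x, hx⟩
  have hm' : x ^ p ^ m = 1 := Subtype.ext (by
    have := congrArg Subtype.val hm
    simpa using this)
  have h1 := orderOf_dvd_of_pow_eq_one hm'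
  have h2 := orderOf_dvd_natCard x
  exact orderOf_eq_one_iff.1 (Nat.eq_one_of_dvd_coprimes (Nat.Coprime.pow_right m hC) h2 h1)

/-- The bound for finite groups that are extensions of a subgroup of `SL_{s+1}(𝔽_q)` by a
`p`-group, in terms of a bound `r` for the `p`-subgroups. -/
theorem genBy_of_pgroup_bound.{w, u} {F : Type u} {Q : Type w} [Field F] [Finite F] [Group Q]
    [Finite Q] {p f : ℕ} (hp : p.Prime) [CharP F p] (hf : 0 < f) (hF : Nat.card F = p ^ f)
    (hlift : ComplexLift.{w} F) {s : ℕ}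
    (φ : Q →* Matrix.SpecialLinearGroup (Fin (s + 1)) F) (hker : IsPGroup p φ.ker) {r k : ℕ}
    (hr : ∀ P : Subgroup Q, IsPGroup p P → GenBy P r)
    (hk1 : r + f * ((s + 1) * (s + 2) / 2) ≤ k) (hk2 : 3 * f * (s + 1) ^ 2 ≤ k) :
    GenBy Q k := by
  have := Fact.mk hp
  obtain ⟨T, hT⟩ : ∃ T, T = (s + 1) * (s + 2) / 2 := ⟨_, rfl⟩
  have hT2 : 2 * T = (s + 1) * (s + 2) := by
    rw [hT]; exact Nat.mul_div_cancel' (Nat.even_mul_succ_self (s + 1)).two_dvd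
  rw [← hT] at hk1
  have hTpos : 0 < T := by nlinarith
  have hfT : 0 < f * T := mul_pos hf hTpos
  have hindex : φ.ker.index ∣ Nat.card (Matrix.SpecialLinearGroup (Fin (s + 1)) F) := by
    rw [Subgroup.index_ker]
    exact φ.range.card_subgroup_dvd_card
  by_cases hcase : φ.ker.index.Coprime p
  · -- the image has order prime to `p`
    have hcard : (Nat.card (Q ⧸ φ.ker) : F) ≠ 0 := by
      rw [card_cast_ne_zero_iff hp]; exact hcase
    obtain ⟨A, hA, hA2⟩ := jordan_SL hlift hcard (Nat.succ_pos s)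
      (QuotientGroup.kerLift φ) (QuotientGroup.kerLift_injective φ)
    have hgen : GenBy (Q ⧸ φ.ker) k := by
      refine (genBy_coprime_SL hcard (QuotientGroup.kerLift φ) (QuotientGroup.kerLift_injective φ)
        A hA (j := 2 * (s + 1) ^ 2 - 1) ?_).mono ?_
      · rw [Nat.sub_add_cancel (by nlinarith)]
        exact hA2
      · have : 5 * s + 2 * (s + 1) ^ 2 ≤ 3 * f * (s + 1) ^ 2 + 1 := by
          have h1 : (s + 1) ^ 2 ≤ f * (s + 1) ^ 2 := Nat.le_mul_of_pos_left _ hf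
          have h2 : 5 * s + 2 * (s + 1) ^ 2 ≤ 3 * (s + 1) ^ 2 + 1 := by
            rcases Nat.lt_or_ge s 3 with h | h
            · interval_cases s <;> norm_num
            · nlinarith
          nlinarith
        have : 1 ≤ (s + 1) ^ 2 := Nat.one_le_pow _ _ (Nat.succ_pos s)
        omega
    refine GenBy.share hp hcase (r := r) (k := k) (by omega) hgen (Nat.card Q) Q
      (QuotientGroup.mk' φ.ker) (QuotientGroup.mk'_surjective _) le_rfl ?_ ?_
    · rwa [QuotientGroup.ker_mk']
    · rw [QuotientGroup.ker_mk']
      exact hr _ hker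
  -- the image has order divisible by `p`: the complement `C` of `P` in its normalizer preserves the
  -- space of vectors fixed by `P`
  · let P : Sylow p Q := default
    have hkerP : φ.ker ≤ P := by
      have h1 : IsPGroup p ((P : Subgroup Q) ⊔ φ.ker : Subgroup Q) :=
        P.isPGroup'.to_sup_of_normal_right hker
      have h2 := P.is_maximal' h1 le_sup_left
      exact le_sup_right.trans h2.le
    have hPker : ¬ (P : Subgroup Q) ≤ φ.ker := fun h => by
      refine hcase (Nat.Coprime.symm ((hp.coprime_iff_not_dvd).2 fun hd => ?_))
      exact P.not_dvd_index (hd.trans (Subgroup.index_dvd_of_le h))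
    obtain ⟨W, hW1, hW2, hW3⟩ := exists_fixed_submodule hp (Nat.succ_pos s) φ P P.isPGroup' hPker
    set N : Subgroup Q := Subgroup.normalizer (P : Set Q) with hN
    have hPN : (P : Subgroup Q) ≤ N := Subgroup.le_normalizer
    let P' : Subgroup N := (P : Subgroup Q).subgroupOf N
    have hP'n : P'.Normal := Subgroup.normal_in_normalizer
    have hP' : IsPGroup p P' := P.isPGroup'.comap_subtype
    have hP'i : P'.index ∣ (P : Subgroup Q).index := Subgroup.relIndex_dvd_index_of_le hPN
    have hP'c : P'.index.Coprime p := Nat.Coprime.symm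
      ((hp.coprime_iff_not_dvd).2 fun hd => P.not_dvd_index (hd.trans hP'i))
    have hcop : (Nat.card P').Coprime P'.index := by
      obtain ⟨m, hm⟩ := IsPGroup.iff_card.1 hP'
      rw [hm]
      exact (Nat.Coprime.pow_right _ hP'c).symm
    obtain ⟨C, hC⟩ := Subgroup.exists_right_complement'_of_coprime hcop
    have hCc : Nat.card C = P'.index := hC.symm.index_eq_card.symm
    let ψ : N →* Matrix.SpecialLinearGroup (Fin (s + 1)) F := φ.comp N.subtype
    have hψker : IsPGroup p ψ.ker := by
      have : ψ.ker = φ.ker.subgroupOf N := rfl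
      rw [this]
      exact hker.comap_subtype
    have hCinj := ker_inf_eq_bot_of_coprime hp ψ hψker C (hCc ▸ hP'c)
    have hCcard : (Nat.card C : F) ≠ 0 := (card_cast_ne_zero_iff hp).2 (hCc ▸ hP'c)
    obtain ⟨A, hA, hA2⟩ := jordan_SL_reducible hlift hCcard _ hCinj W hW1 hW2
      (fun g w hw => hW3 _ g.1.2 w hw)
    have hgenC : GenBy C (5 * s + (2 * s ^ 2 + 1)) :=
      genBy_coprime_SL hCcard _ hCinj A hA (by
        rw [show 2 * s ^ 2 + 1 + 1 = 2 * (s ^ 2 + 1) by ring]; exact hA2)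
    have hgenq : GenBy (N ⧸ P') (max (5 * s + (2 * s ^ 2 + 1)) (r + 1)) := by
      refine (hgenC.of_surjective ((QuotientGroup.mk' P').comp C.subtype) ?_).mono (le_max_left _ _)
      intro x
      obtain ⟨y, rfl⟩ := QuotientGroup.mk'_surjective P' x
      obtain ⟨⟨c, a⟩, hca⟩ := hC.symm.2 y
      refine ⟨c, ?_⟩
      change c.1 * a.1 = y at hca
      rw [← hca]
      simp
    have hgenN : GenBy N (max (5 * s + (2 * s ^ 2 + 1)) (r + 1)) := by
      refine GenBy.share hp (C := N ⧸ P') hP'c (r := r) (by omega) hgenq (Nat.card N) N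
        (QuotientGroup.mk' P') (QuotientGroup.mk'_surjective _) le_rfl ?_ ?_
      · rwa [QuotientGroup.ker_mk']
      · rw [QuotientGroup.ker_mk']
        exact (hr P P.isPGroup').congr (Subgroup.subgroupOfEquivOfLe hPN).symm
    -- `Q` is generated by the normalizer and the elements of `p`-power order
    let X : Set Q := {x | ∃ m, x ^ p ^ m = 1}
    have hXn : (Subgroup.closure X).Normal := by
      have : Subgroup.closure X = Subgroup.normalClosure X := by
        rw [Subgroup.normalClosure]
        congr 1
        refine Set.Subset.antisymm Group.subset_conjugatesOfSet ?_
        rintro y hy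
        obtain ⟨x, ⟨m, hm⟩, hxy⟩ := Group.mem_conjugatesOfSet_iff.1 hy
        obtain ⟨g, rfl⟩ := isConj_iff.1 hxy
        exact ⟨m, by rw [conj_pow, hm]; simp⟩
      rw [this]
      infer_instance
    have hPX : (P : Subgroup Q) ≤ Subgroup.closure X := fun x hx => by
      obtain ⟨m, hm⟩ := P.isPGroup' ⟨x, hx⟩
      exact Subgroup.subset_closure ⟨m, congrArg Subtype.val hm⟩
    have htop : N ⊔ Subgroup.closure X = ⊤ := Sylow.normalizer_sup_eq_top' P hPX
    have hNi : N.index < p ^ (f * T) := by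
      rw [hT]
      refine lt_of_dvd_card_SL hp hf hF (s := s) (m := N.index) ?_ ?_
      · refine Nat.Coprime.symm ((hp.coprime_iff_not_dvd).2 fun hd => P.not_dvd_index ?_)
        exact hd.trans (Subgroup.index_dvd_of_le hPN)
      · exact ((Subgroup.index_dvd_of_le hPN).trans (Subgroup.index_dvd_of_le hkerP)).trans hindex
    refine (GenBy.of_chain p X (j := f * T - 1) N hgenN htop ?_ ?_).mono ?_
    · rintro M _ x ⟨m, hm⟩ hx
      exact card_step_of_pow hp x hm M hx
    · rw [Nat.sub_add_cancel hfT, ← N.card_mul_index, mul_comm]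
      exact Nat.mul_lt_mul_of_pos_right hNi Nat.card_pos
    · have h1 : 5 * s + 2 * s ^ 2 + f * T ≤ 3 * f * (s + 1) ^ 2 := by
        obtain ⟨f', rfl⟩ : ∃ f', f = f' + 1 := ⟨f - 1, by omega⟩
        have h3 : 5 * s + 2 * s ^ 2 + T ≤ 3 * (s + 1) ^ 2 := by
          rcases Nat.eq_zero_or_pos s with h | h
          · subst h; omega
          · nlinarith
        have h4 : T ≤ 3 * (s + 1) ^ 2 := by omega
        nlinarith [Nat.mul_le_mul_left f' h4]
      rw [max_def]
      split_ifs <;> omega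

/-! ### `p`-subgroups of congruence quotients -/

/-- Maximal subgroups of a finite `p`-group contain all `p`-th powers, being normal of index `p`. -/
theorem pow_mem_of_isCoatom {G : Type*} [Group G] [Finite G] {p : ℕ} (hp : p.Prime)
    (hG : IsPGroup p G) {K : Subgroup G} (hK : IsCoatom K) (x : G) : x ^ p ∈ K := by
  have := Fact.mk hp
  have : Group.IsNilpotent G := hG.isNilpotent
  have hn : K.Normal := Subgroup.NormalizerCondition.normal_of_coatom K
    Group.normalizerCondition_of_isNilpotent hK
  by_contra h
  have htop : K ⊔ Subgroup.zpowers (x ^ p) = ⊤ :=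
    hK.2 _ (lt_of_le_of_ne le_sup_left fun h' => h
      (h'.symm ▸ (le_sup_right (a := K) (Subgroup.mem_zpowers (x ^ p)))))
  have hx : x ∈ K ⊔ Subgroup.zpowers (x ^ p) := htop ▸ Subgroup.mem_top x
  obtain ⟨a, ha, b, hb, hab⟩ := Subgroup.mem_sup_of_normal_left.1 hx
  obtain ⟨t, rfl⟩ := Subgroup.mem_zpowers_iff.1 hb
  obtain ⟨m, hm⟩ := hG x
  -- modulo `K`, `x = x ^ (p * t)` and `x` has `p`-power order
  have h1 : x ^ (1 - (p : ℤ) * t) ∈ K := by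
    have : x ^ (1 - (p : ℤ) * t) = a := by
      rw [zpow_sub, zpow_one, zpow_mul, zpow_natCast]
      nth_rewrite 1 [← hab]
      group
    rw [this]; exact ha
  have h2 : x ^ ((p ^ m : ℕ) : ℤ) ∈ K := by
    rw [zpow_natCast, hm]; exact K.one_mem
  have hcop : IsCoprime (1 - (p : ℤ) * t) ((p ^ m : ℕ) : ℤ) := by
    rw [Nat.cast_pow]
    exact IsCoprime.pow_right ⟨1, t, by ring⟩
  obtain ⟨c, d, hcd⟩ := hcop
  have h3 : x ∈ K := by
    have : x = (x ^ (1 - (p : ℤ) * t)) ^ c * (x ^ ((p ^ m : ℕ) : ℤ)) ^ d := by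
      rw [← zpow_mul, ← zpow_mul, ← zpow_add, mul_comm _ c, mul_comm _ d, hcd, zpow_one]
    rw [this]
    exact K.mul_mem (K.zpow_mem h1 c) (K.zpow_mem h2 d)
  exact h (K.pow_mem h3 p)

theorem genBy_of_card_frattini {G : Type*} [Group G] [Finite G] {p : ℕ} (hp : p.Prime)
    (hG : IsPGroup p G) {b : ℕ} (h : Nat.card G ≤ p ^ b * Nat.card (frattini G)) : GenBy G b := by
  obtain ⟨S, hS, hSc⟩ := GenBy.chain p Set.univ b (frattini G) (by simp)
    (fun M _ x _ hx => by
      obtain ⟨m, hm⟩ := hG x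
      exact card_step_of_pow hp x hm M hx)
    (h.trans_lt (Nat.mul_lt_mul_of_pos_right (Nat.pow_lt_pow_right hp.one_lt (Nat.lt_succ_self b))
      Nat.card_pos))
  exact ⟨S, hS, frattini_nongenerating (by rw [sup_comm]; exact hSc)⟩

/-- `p`-th powers separate elements of a congruence subgroup of level `e + 1`, up to
congruence modulo `π ^ (i - e)`, where `p` is a unit times `π ^ e` and, for `j < i`, `π ^ j`
annihilates only multiples of `π`. -/
theorem congr_of_pow_eq {R M : Type*} [CommRing R] [Ring M] [Algebra R M] (π u : R) (hu : IsUnit u)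
    {e i p : ℕ} (hp : (p : R) = u * π ^ e)
    (hann : ∀ j < i, ∀ A : M, π ^ j • A = 0 → ∃ B : M, A = π • B) (X Y : M)
    (h : (1 + π ^ (e + 1) • X) ^ p = (1 + π ^ (e + 1) • Y) ^ p) :
    ∃ B : M, (1 + π ^ (e + 1) • X) - (1 + π ^ (e + 1) • Y) = π ^ (i - e) • B := by
  set x : M := 1 + π ^ (e + 1) • X with hx
  set y : M := 1 + π ^ (e + 1) • Y with hy
  have hpow : ∀ m : ℕ, ∃ E : M, x ^ m = 1 + π ^ (e + 1) • E := by
    intro m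
    induction m with
    | zero => exact ⟨0, by simp⟩
    | succ m ih =>
      obtain ⟨E, hE⟩ := ih
      exact ⟨E * x + X, by rw [pow_succ, hE, add_mul, one_mul, smul_add, smul_mul_assoc, hx]; abel⟩
  have key : ∀ (j : ℕ) (D : M), x - y = π ^ j • D → ∀ m : ℕ,
      ∃ E : M, x ^ m - y ^ m = (m : R) • π ^ j • D + π ^ (j + (e + 1)) • E := by
    intro j D hD m
    induction m with
    | zero => exact ⟨0, by simp⟩
    | succ m ih =>
      obtain ⟨E, hE⟩ := ih
      obtain ⟨X', hX'⟩ := hpow m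
      refine ⟨X' * D + (m : R) • (D * Y) + E * y, ?_⟩
      have e0 : x ^ (m + 1) - y ^ (m + 1) = x ^ m * (x - y) + (x ^ m - y ^ m) * y := by
        rw [pow_succ, pow_succ]; noncomm_ring
      have e1 : x ^ m * (π ^ j • D) = π ^ j • D + π ^ (j + (e + 1)) • (X' * D) := by
        rw [hX', add_mul, one_mul, smul_mul_smul_comm, ← pow_add, add_comm (e + 1)]
      have e2 : (m : R) • π ^ j • D * y =
          (m : R) • π ^ j • D + π ^ (j + (e + 1)) • (m : R) • (D * Y) := by
        rw [hy, mul_add, mul_one, smul_mul_assoc, smul_mul_smul_comm, ← pow_add, smul_comm (m : R)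
          (π ^ (j + (e + 1)))]
      rw [e0, hD, hE, add_mul, e1, e2, smul_mul_assoc, smul_add, smul_add, Nat.cast_succ, add_smul,
        one_smul]
      abel
  have step : ∀ j, ∃ B : M, x - y = π ^ (min (e + 1 + j) (i - e)) • B := by
    intro j
    induction j with
    | zero =>
      refine ⟨π ^ (e + 1 - min (e + 1 + 0) (i - e)) • (X - Y), ?_⟩
      rw [smul_smul, ← pow_add, add_zero, Nat.add_sub_cancel' (min_le_left _ _), smul_sub, hx, hy]
      abel
    | succ j ih =>
      rcases le_or_gt (i - e) (e + 1 + j) with hij | hij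
      · rw [min_eq_right hij] at ih
        rwa [min_eq_right (by omega)]
      · rw [min_eq_left hij.le] at ih
        rw [min_eq_left (by omega)]
        obtain ⟨D, hD⟩ := ih
        obtain ⟨E, hE⟩ := key _ D hD p
        have h0 : π ^ (e + 1 + j + e) • (u • D + π • E) = 0 := by
          have h1 : x ^ p - y ^ p = 0 := sub_eq_zero.2 h
          rw [hE, hp] at h1
          rw [← h1, smul_add, smul_smul, smul_smul, smul_smul, ← pow_succ]
          congr 2
          ring
        obtain ⟨B, hB⟩ := hann _ (by omega) _ h0
        obtain ⟨w, hw⟩ := hu.exists_left_inv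
        refine ⟨w • (B - E), ?_⟩
        have : D = π • (w • (B - E)) := by
          have h2 : u • D = π • (B - E) := by rw [smul_sub, ← hB]; abel
          rw [smul_comm, ← h2, smul_smul, hw, one_smul]
        rw [hD]
        nth_rewrite 1 [this]
        rw [smul_smul, ← pow_succ]
        rfl
  have := step i
  rwa [min_eq_right (by omega)] at this

/-- A `p`-subgroup of the congruence subgroup of level `e + 1` is generated by `e * f * n ^ 2`
elements: the `p`-th power map has small fibres, so the Frattini subgroup is large. -/
theorem genBy_congruence {R : Type*} [CommRing R] [Finite R] (π u : R) (hu : IsUnit u)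
    {e i p f n : ℕ} (hp : p.Prime) (hpu : (p : R) = u * π ^ e)
    (hann : ∀ j < i, ∀ a : R, π ^ j * a = 0 → π ∣ a)
    (hcard : Nat.card {a : R // π ^ (i - e) ∣ a} ≤ p ^ (f * e))
    {U : Type*} [Group U] [Finite U] (hU : IsPGroup p U)
    (ι : U →* Matrix.SpecialLinearGroup (Fin n) R) (hι : Function.Injective ι)
    (hlev : ∀ x : U, ∃ X, (ι x).1 = 1 + π ^ (e + 1) • X) : GenBy U (f * e * n ^ 2) := by
  classical
  refine genBy_of_card_frattini hp hU ?_
  have hΦ : ∀ x : U, x ^ p ∈ frattini U := fun x => by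
    rw [frattini, Order.radical]
    simp only [Subgroup.mem_iInf]
    exact fun K hK => pow_mem_of_isCoatom hp hU hK x
  have hann' : ∀ j < i, ∀ A : Matrix (Fin n) (Fin n) R, π ^ j • A = 0 →
      ∃ B : Matrix (Fin n) (Fin n) R, A = π • B := by
    intro j hj A hA
    have : ∀ a b, π ∣ A a b := fun a b => hann j hj _ (congrFun (congrFun hA a) b)
    choose B hB using this
    exact ⟨Matrix.of B, by ext a b; exact hB a b⟩
  have hfib : ∀ x y : U, x ^ p = y ^ p → ∀ a b, π ^ (i - e) ∣ (ι x).1 a b - (ι y).1 a b := by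
    intro x y hxy a b
    obtain ⟨X, hX⟩ := hlev x
    obtain ⟨Y, hY⟩ := hlev y
    obtain ⟨B, hB⟩ := congr_of_pow_eq π u hu hpu hann' X Y (by
      rw [← hX, ← hY, ← Matrix.SpecialLinearGroup.coe_pow, ← Matrix.SpecialLinearGroup.coe_pow,
        ← map_pow, ← map_pow, hxy])
    rw [← hX, ← hY] at hB
    exact ⟨B a b, congrFun (congrFun hB a) b⟩
  -- a section of the `p`-th power map
  let sec : U → U := fun z => if h : ∃ y, y ^ p = z then h.choose else 1
  have hsec : ∀ x : U, sec (x ^ p) ^ p = x ^ p := fun x => by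
    have h : ∃ y, y ^ p = x ^ p := ⟨x, rfl⟩
    simp only [sec, dif_pos h]
    exact h.choose_spec
  let m : U → frattini U × (Fin n → Fin n → {a : R // π ^ (i - e) ∣ a}) := fun x =>
    (⟨x ^ p, hΦ x⟩, fun a b => ⟨_, hfib x (sec (x ^ p)) (hsec x).symm a b⟩)
  have hm : Function.Injective m := by
    intro x y hxy
    have h1 : x ^ p = y ^ p := congrArg (fun z => (z.1 : U)) hxy
    have h2 : ∀ a b, (ι x).1 a b - (ι (sec (x ^ p))).1 a b =
        (ι y).1 a b - (ι (sec (y ^ p))).1 a b := fun a b => congrArg (fun z => (z.2 a b).1) hxy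
    refine hι (Subtype.ext (Matrix.ext fun a b => ?_))
    have := h2 a b
    rw [h1] at this
    exact sub_left_inj.1 this
  have := Nat.card_le_card_of_injective m hm
  rw [Nat.card_prod, Nat.card_fun, Nat.card_fun, Nat.card_fin, ← pow_mul, ← sq, mul_comm] at this
  refine this.trans (Nat.mul_le_mul_right _ ?_)
  rw [pow_mul]
  exact Nat.pow_le_pow_left hcard _

theorem card_pgroup_SL_ring {R F : Type*} [CommRing R] [Finite R] [Field F] [Finite F] {p f n : ℕ}
    (hp : p.Prime) (hf : 0 < f) (hF : Nat.card F = p ^ f) (r : R →+* F) {c : ℕ}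
    (hcard : Nat.card {a : R // r a = 0} ≤ p ^ c)
    (P : Subgroup (Matrix.SpecialLinearGroup (Fin n) R)) (hP : IsPGroup p P) :
    Nat.card P ≤ p ^ (f * (n * (n - 1) / 2) + c * n ^ 2) := by
  let φ : P →* Matrix.SpecialLinearGroup (Fin n) F :=
    (Matrix.SpecialLinearGroup.map r).comp P.subtype
  have h1 : Nat.card φ.ker * Nat.card φ.range = Nat.card P := by
    rw [← Subgroup.index_ker, Subgroup.card_mul_index]
  have h2 : Nat.card φ.range ≤ p ^ (f * (n * (n - 1) / 2)) :=
    card_pgroup_SL_le hp hf hF _ (hP.of_surjective φ.rangeRestrict φ.rangeRestrict_surjective)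
  have hk : ∀ x : φ.ker, ∀ a b, r ((x : P).1.1 a b - (1 : Matrix (Fin n) (Fin n) R) a b) = 0 := by
    intro x a b
    have h : Matrix.SpecialLinearGroup.map r (x : P).1 = 1 := x.2
    have h' := congrFun (congrFun (congrArg Subtype.val h) a) b
    simp only [Matrix.SpecialLinearGroup.map_apply_coe, RingHom.mapMatrix_apply, Matrix.map_apply,
      Matrix.SpecialLinearGroup.coe_one] at h'
    rw [map_sub, h', Matrix.one_apply, Matrix.one_apply]
    split_ifs <;> simp
  have h3 : Nat.card φ.ker ≤ p ^ (c * n ^ 2) := by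
    have := Nat.card_le_card_of_injective
      (fun (x : φ.ker) (a b : Fin n) => (⟨_, hk x a b⟩ : {a : R // r a = 0})) (by
        intro x y hxy
        refine Subtype.ext (Subtype.ext (Subtype.ext (Matrix.ext fun a b => ?_)))
        have := congrArg Subtype.val (congrFun (congrFun hxy a) b)
        exact sub_left_inj.1 this)
    rw [Nat.card_fun, Nat.card_fun, Nat.card_fin, ← pow_mul, ← sq] at this
    exact this.trans ((Nat.pow_le_pow_left hcard _).trans_eq (pow_mul _ _ _).symm)
  rw [← h1, pow_add, mul_comm]
  exact Nat.mul_le_mul h2 h3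

/-- Raising to the `p`-th power deepens the congruence level, so the first congruence subgroup
consists of elements of `p`-power order when `π` is nilpotent. -/
theorem pow_eq_one_of_congr {R M : Type*} [CommRing R] [Ring M] [Algebra R M] (π : R) {p i : ℕ}
    (hp : π ∣ (p : R)) (hi : π ^ i = 0) (X : M) : (1 + π • X) ^ p ^ i = 1 := by
  have key : ∀ (j : ℕ) (Y : M), ∃ Z : M, (1 + π ^ (j + 1) • Y) ^ p = 1 + π ^ (j + 2) • Z := by
    intro j Y
    set y : M := 1 + π ^ (j + 1) • Y with hy
    have hpow : ∀ m : ℕ, ∃ E : M, y ^ m = 1 + π • E := by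
      intro m
      induction m with
      | zero => exact ⟨0, by simp⟩
      | succ m ih =>
        obtain ⟨E, hE⟩ := ih
        refine ⟨E * y + π ^ j • Y, ?_⟩
        rw [pow_succ, hE, add_mul, one_mul, smul_add, smul_mul_assoc, smul_smul, ← pow_succ', hy]
        abel
    choose E hE using hpow
    obtain ⟨c, hc⟩ := hp
    refine ⟨Y * (c • 1 + ∑ k ∈ Finset.range p, E k), ?_⟩
    have h1 : ∑ k ∈ Finset.range p, y ^ k = π • (c • 1 + ∑ k ∈ Finset.range p, E k) := by
      simp_rw [hE]
      rw [Finset.sum_add_distrib, ← Finset.smul_sum, Finset.sum_const, Finset.card_range,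
        smul_add, smul_smul, ← hc, Nat.cast_smul_eq_nsmul]
    have h2 := mul_geom_sum y p
    rw [h1, hy, add_sub_cancel_left, ← hy, smul_mul_smul_comm, ← pow_succ] at h2
    rw [h2]; abel
  have h : ∀ j, ∃ Y : M, (1 + π • X) ^ p ^ j = 1 + π ^ (j + 1) • Y := by
    intro j
    induction j with
    | zero => exact ⟨X, by simp⟩
    | succ j ih =>
      obtain ⟨Y, hY⟩ := ih
      obtain ⟨Z, hZ⟩ := key j Y
      exact ⟨Z, by rw [pow_succ, pow_mul, hY, hZ]⟩
  obtain ⟨Y, hY⟩ := h i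
  rw [hY, pow_succ, hi, zero_mul, zero_smul, add_zero]

/-- Generators of the kernel of reduction to `R'` come from `genBy_congruence`; the number of further
generators is bounded through the order of the image. In the application `R`, `R'` and `F` are
`O / π ^ i`, `O / π ^ (e + 1)` and the residue field. -/
theorem genBy_pgroup_SL {R R' F : Type*} [CommRing R] [Finite R] [CommRing R'] [Finite R']
    [Field F] [Finite F] (π u : R) (hu : IsUnit u)
    {e i p f n : ℕ} (hp : p.Prime) (hf : 0 < f) (hF : Nat.card F = p ^ f)
    (hpu : (p : R) = u * π ^ e)
    (hann : ∀ j < i, ∀ a : R, π ^ j * a = 0 → π ∣ a)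
    (hcard : Nat.card {a : R // π ^ (i - e) ∣ a} ≤ p ^ (f * e))
    (ρ : R →+* R') (hρ : ∀ a, ρ a = 0 → π ^ (e + 1) ∣ a)
    (r : R' →+* F) (hr : Nat.card {a : R' // r a = 0} ≤ p ^ (f * e))
    {P : Type*} [Group P] [Finite P] (hP : IsPGroup p P)
    (ι : P →* Matrix.SpecialLinearGroup (Fin n) R) (hι : Function.Injective ι) :
    GenBy P (f * e * n ^ 2 + (f * (n * (n - 1) / 2) + f * e * n ^ 2)) := by
  let φ : P →* Matrix.SpecialLinearGroup (Fin n) R' := (Matrix.SpecialLinearGroup.map ρ).comp ι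
  have h1 : Nat.card φ.ker * Nat.card φ.range = Nat.card P := by
    rw [← Subgroup.index_ker, Subgroup.card_mul_index]
  have h2 : Nat.card φ.range ≤ p ^ (f * (n * (n - 1) / 2) + f * e * n ^ 2) :=
    card_pgroup_SL_ring hp hf hF r hr _
      (hP.of_surjective φ.rangeRestrict φ.rangeRestrict_surjective)
  have hK : GenBy φ.ker (f * e * n ^ 2) := by
    refine genBy_congruence π u hu hp hpu hann hcard (hP.to_subgroup _) (ι.comp φ.ker.subtype)
      (hι.comp Subtype.val_injective) fun x => ?_
    have h : ∀ a b, π ^ (e + 1) ∣ (ι x).1 a b - (1 : Matrix (Fin n) (Fin n) R) a b := by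
      intro a b
      have h : Matrix.SpecialLinearGroup.map ρ (ι x) = 1 := x.2
      have h' := congrFun (congrFun (congrArg Subtype.val h) a) b
      simp only [Matrix.SpecialLinearGroup.map_apply_coe, RingHom.mapMatrix_apply, Matrix.map_apply,
        Matrix.SpecialLinearGroup.coe_one] at h'
      apply hρ
      rw [map_sub, h', Matrix.one_apply, Matrix.one_apply]
      split_ifs <;> simp
    choose X hX using h
    refine ⟨Matrix.of X, Matrix.ext fun a b => ?_⟩
    have := hX a b
    rw [sub_eq_iff_eq_add'] at this
    exact this
  refine GenBy.of_pgroup hp hP φ.ker hK ?_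
  rw [← h1, mul_comm]
  exact Nat.mul_le_mul_right _ h2

/-- The bound for subgroups of `SL` over a finite quotient `R` of a `p`-adic integer ring,
with `R`, `R'` and `F` as in `genBy_pgroup_SL`. -/
theorem genBy_SL_quotient.{w, u} {R R' : Type*} {F : Type u} [CommRing R] [Finite R] [CommRing R']
    [Finite R'] [Field F] [Finite F] (π u : R) (hu : IsUnit u)
    {e i p f s : ℕ} (hp : p.Prime) [CharP F p] (hf : 0 < f) (he : 0 < e)
    (hF : Nat.card F = p ^ f) (hlift : ComplexLift.{w} F)
    (hpu : (p : R) = u * π ^ e) (hi : π ^ i = 0)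
    (hann : ∀ j < i, ∀ a : R, π ^ j * a = 0 → π ∣ a)
    (hcard : Nat.card {a : R // π ^ (i - e) ∣ a} ≤ p ^ (f * e))
    (ρ : R →+* R') (hρ : ∀ a, ρ a = 0 → π ^ (e + 1) ∣ a)
    (r : R' →+* F) (hr : Nat.card {a : R' // r a = 0} ≤ p ^ (f * e))
    (hrρ : ∀ a, r (ρ a) = 0 → π ∣ a)
    {Q : Type w} [Group Q] [Finite Q]
    (ι : Q →* Matrix.SpecialLinearGroup (Fin (s + 1)) R) (hι : Function.Injective ι) :
    GenBy Q (3 * (e * f) * (s + 1) ^ 2) := by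
  let φ : Q →* Matrix.SpecialLinearGroup (Fin (s + 1)) F :=
    (Matrix.SpecialLinearGroup.map (r.comp ρ)).comp ι
  have hker : IsPGroup p φ.ker := by
    intro x
    refine ⟨i, Subtype.ext (hι (Subtype.ext ?_))⟩
    have h : ∀ a b, π ∣ (ι x).1 a b - (1 : Matrix (Fin (s + 1)) (Fin (s + 1)) R) a b := by
      intro a b
      have h : Matrix.SpecialLinearGroup.map (r.comp ρ) (ι x) = 1 := x.2
      have h' := congrFun (congrFun (congrArg Subtype.val h) a) b
      simp only [Matrix.SpecialLinearGroup.map_apply_coe, RingHom.mapMatrix_apply, Matrix.map_apply,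
        Matrix.SpecialLinearGroup.coe_one, RingHom.comp_apply] at h'
      apply hrρ
      rw [map_sub, map_sub, h', Matrix.one_apply, Matrix.one_apply]
      split_ifs <;> simp
    choose X hX using h
    have hX' : (ι x).1 = 1 + π • Matrix.of X := by
      refine Matrix.ext fun a b => ?_
      have := hX a b
      rw [sub_eq_iff_eq_add'] at this
      exact this
    have hpπ : π ∣ (p : R) := hpu ▸ dvd_mul_of_dvd_right (dvd_pow_self π he.ne') u
    have := pow_eq_one_of_congr π hpπ hi (Matrix.of X)
    rw [← hX'] at this
    simpa using this
  have hn : (s + 1) * (s + 1 - 1) / 2 + (s + 1) * (s + 2) / 2 = (s + 1) ^ 2 := by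
    obtain ⟨t, ht⟩ := (Nat.even_mul_succ_self s).two_dvd
    have h1 : (s + 1) * (s + 1 - 1) = 2 * t := by rw [← ht]; simp [mul_comm]
    have h2 : (s + 1) * (s + 2) = 2 * (t + (s + 1)) := by rw [mul_add 2, ← ht]; ring
    rw [h1, h2, Nat.mul_div_cancel_left _ two_pos, Nat.mul_div_cancel_left _ two_pos]
    nlinarith
  have hfe : f * (s + 1) ^ 2 ≤ e * f * (s + 1) ^ 2 :=
    Nat.mul_le_mul_right _ (Nat.le_mul_of_pos_left f he)
  refine genBy_of_pgroup_bound hp hf hF hlift φ hker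
    (r := f * e * (s + 1) ^ 2 + (f * ((s + 1) * (s + 1 - 1) / 2) + f * e * (s + 1) ^ 2))
    (fun P hP => genBy_pgroup_SL π u hu hp hf hF hpu hann hcard ρ hρ r hr hP
      (ι.comp P.subtype) (hι.comp Subtype.val_injective)) ?_ ?_
  · have : f * ((s + 1) * (s + 1 - 1) / 2) + f * ((s + 1) * (s + 2) / 2) = f * (s + 1) ^ 2 := by
      rw [← mul_add, hn]
    rw [mul_comm f e]
    nlinarith
  · nlinarith

/-! ### Finite quotients of a discrete valuation ring -/

theorem card_quotient_pow {O : Type*} [CommRing O] [IsDomain O] [IsDiscreteValuationRing O]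
    {π : O} (hπ : Irreducible π) (e : ℕ) :
    Nat.card (O ⧸ Ideal.span {π ^ e}) = Nat.card (IsLocalRing.ResidueField O) ^ e := by
  have hm : IsLocalRing.maximalIdeal O = Ideal.span {π} := hπ.maximalIdeal_eq
  have := cardQuot_pow_of_prime (P := IsLocalRing.maximalIdeal O) (i := e)
    (IsDiscreteValuationRing.not_a_field O)
  rw [hm, Ideal.span_singleton_pow, ← hm] at this
  exact this

theorem card_dvd_quotient_le {O : Type*} [CommRing O] [IsDomain O] [IsDiscreteValuationRing O]
    [Finite (IsLocalRing.ResidueField O)] {π : O} (hπ : Irreducible π) (j e i : ℕ)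
    (hi : i = j + e) :
    Nat.card {a : O ⧸ Ideal.span {π ^ i} // Ideal.Quotient.mk _ π ^ j ∣ a} ≤
      Nat.card (IsLocalRing.ResidueField O) ^ e := by
  rw [← card_quotient_pow hπ]
  have : Finite (O ⧸ Ideal.span {π ^ e}) := by
    apply Nat.finite_of_card_ne_zero
    rw [card_quotient_pow hπ]
    exact pow_ne_zero _ Nat.card_pos.ne'
  refine Nat.card_le_card_of_surjective (fun b : O ⧸ Ideal.span {π ^ e} =>
    (⟨Ideal.Quotient.mk _ π ^ j * Ideal.Quotient.mk _ b.out, dvd_mul_right _ _⟩ :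
      {a : O ⧸ Ideal.span {π ^ i} // Ideal.Quotient.mk _ π ^ j ∣ a})) ?_
  rintro ⟨a, c, rfl⟩
  obtain ⟨y, rfl⟩ := Ideal.Quotient.mk_surjective c
  refine ⟨Ideal.Quotient.mk _ y, Subtype.ext ?_⟩
  have h : Ideal.Quotient.mk (Ideal.span {π ^ e}) (Quotient.out (Ideal.Quotient.mk _ y)) =
      Ideal.Quotient.mk _ y := Quotient.out_eq _
  rw [Ideal.Quotient.eq, Ideal.mem_span_singleton] at h
  simp only [← map_pow, ← map_mul]
  rw [Ideal.Quotient.eq, Ideal.mem_span_singleton, ← mul_sub, hi, pow_add]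
  exact mul_dvd_mul_left _ h

/-- The bound for all subgroups of `SL` over the quotients modulo `π ^ i` of a discrete valuation
ring with finite residue field in which `p` is a unit times `π ^ e`. -/
theorem genBy_SL_dvr.{w, u} {O : Type u} [CommRing O] [IsDomain O] [IsDiscreteValuationRing O]
    [Finite (IsLocalRing.ResidueField O)] (hlift : ComplexLift.{w} (IsLocalRing.ResidueField O))
    {π : O} (hπ : Irreducible π) (u : Oˣ)
    {e i p f s : ℕ} (hp : p.Prime) (he : 0 < e)
    (hF : Nat.card (IsLocalRing.ResidueField O) = p ^ f)
    (hpu : (p : O) = u * π ^ e) (hi : e + 1 ≤ i)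
    {Q : Type w} [Group Q] [Finite Q]
    (ι : Q →* Matrix.SpecialLinearGroup (Fin (s + 1)) (O ⧸ Ideal.span {π ^ i}))
    (hι : Function.Injective ι) :
    GenBy Q (3 * (e * f) * (s + 1) ^ 2) := by
  have hfin : ∀ j : ℕ, Finite (O ⧸ Ideal.span {π ^ j}) := fun j => by
    apply Nat.finite_of_card_ne_zero
    rw [card_quotient_pow hπ]
    exact pow_ne_zero _ Nat.card_pos.ne'
  have hm : IsLocalRing.maximalIdeal O = Ideal.span {π} := hπ.maximalIdeal_eq
  have hπ0 : π ≠ 0 := hπ.ne_zero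
  have hpm : IsLocalRing.residue O (p : O) = 0 := by
    rw [IsLocalRing.residue_eq_zero_iff, hm, Ideal.mem_span_singleton, hpu]
    exact dvd_mul_of_dvd_right (dvd_pow_self π he.ne') _
  have hchar : CharP (IsLocalRing.ResidueField O) p := by
    rw [CharP.charP_iff_prime_eq_zero hp]
    simpa using hpm
  have hf : 0 < f := by
    rcases Nat.eq_zero_or_pos f with rfl | h
    · have := Finite.one_lt_card (α := IsLocalRing.ResidueField O)
      rw [hF] at this; simp at this
    · exact h
  have hle : ∀ a ∈ Ideal.span {π ^ i}, Ideal.Quotient.mk (Ideal.span {π ^ (e + 1)}) a = 0 := by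
    intro a ha
    rw [Ideal.Quotient.eq_zero_iff_mem, Ideal.mem_span_singleton]
    exact (pow_dvd_pow π hi).trans (Ideal.mem_span_singleton.1 ha)
  have hle' : ∀ a ∈ Ideal.span {π ^ (e + 1)}, IsLocalRing.residue O a = 0 := by
    intro a ha
    rw [IsLocalRing.residue_eq_zero_iff, hm, Ideal.mem_span_singleton]
    exact (dvd_pow_self π (by omega)).trans (Ideal.mem_span_singleton.1 ha)
  have hr : ∀ a, Ideal.Quotient.lift (Ideal.span {π ^ (e + 1)}) (IsLocalRing.residue O) hle' a = 0
      → Ideal.Quotient.mk _ π ^ 1 ∣ a := by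
    intro a ha
    obtain ⟨a, rfl⟩ := Ideal.Quotient.mk_surjective a
    rw [Ideal.Quotient.lift_mk, IsLocalRing.residue_eq_zero_iff, hm,
      Ideal.mem_span_singleton] at ha
    rw [pow_one]
    exact map_dvd _ ha
  refine genBy_SL_quotient (Ideal.Quotient.mk _ π) (Ideal.Quotient.mk _ (u : O))
    (u.isUnit.map _) (i := i) hp hf he hF hlift ?_ ?_ ?_ ?_
    (Ideal.Quotient.lift _ (Ideal.Quotient.mk (Ideal.span {π ^ (e + 1)})) hle) ?_
    (Ideal.Quotient.lift _ (IsLocalRing.residue O) hle') ?_ ?_ ι hι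
  · rw [← map_natCast (Ideal.Quotient.mk _), hpu, map_mul, map_pow]
  · rw [← map_pow, Ideal.Quotient.eq_zero_iff_mem, Ideal.mem_span_singleton]
  · intro j hj a ha
    obtain ⟨a, rfl⟩ := Ideal.Quotient.mk_surjective a
    rw [← map_pow, ← map_mul, Ideal.Quotient.eq_zero_iff_mem, Ideal.mem_span_singleton,
      show i = j + (i - j - 1 + 1) by omega, pow_add,
      mul_dvd_mul_iff_left (pow_ne_zero _ hπ0)] at ha
    exact map_dvd _ ((dvd_pow_self π (by omega)).trans ha)
  · rw [pow_mul, ← hF]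
    exact card_dvd_quotient_le hπ _ _ _ (by omega)
  · intro a ha
    obtain ⟨a, rfl⟩ := Ideal.Quotient.mk_surjective a
    rw [Ideal.Quotient.lift_mk, Ideal.Quotient.eq_zero_iff_mem, Ideal.mem_span_singleton] at ha
    rw [← map_pow]
    exact map_dvd _ ha
  · rw [pow_mul, ← hF]
    refine le_trans ?_ (card_dvd_quotient_le hπ 1 e (e + 1) (by omega))
    exact Nat.card_le_card_of_injective (fun x => ⟨x.1, hr x.1 x.2⟩) fun x y h =>
      Subtype.ext (Subtype.mk.inj h)
  · intro a ha
    obtain ⟨a, rfl⟩ := Ideal.Quotient.mk_surjective a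
    rw [Ideal.Quotient.lift_mk, Ideal.Quotient.lift_mk, IsLocalRing.residue_eq_zero_iff, hm,
      Ideal.mem_span_singleton] at ha
    exact map_dvd _ ha

/-! ### Passage to the limit -/

theorem eq_zero_of_forall_pow_dvd {O : Type*} [CommRing O] [IsDomain O] [IsDiscreteValuationRing O]
    {π : O} (hπ : Irreducible π) (x : O) (h : ∀ j : ℕ, π ^ j ∣ x) : x = 0 := by
  have := Ideal.iInf_pow_eq_bot_of_isLocalRing (IsLocalRing.maximalIdeal O)
    (Ideal.IsPrime.ne_top inferInstance)
  rw [← Ideal.mem_bot, ← this, Ideal.mem_iInf]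
  intro j
  rw [hπ.maximalIdeal_eq, Ideal.span_singleton_pow, Ideal.mem_span_singleton]
  exact h j

theorem finite_quotient_pow {O : Type*} [CommRing O] [IsDomain O] [IsDiscreteValuationRing O]
    [Finite (IsLocalRing.ResidueField O)] {π : O} (hπ : Irreducible π) (j : ℕ) :
    Finite (O ⧸ Ideal.span {π ^ j}) := by
  apply Nat.finite_of_card_ne_zero
  rw [card_quotient_pow hπ]
  exact pow_ne_zero _ Nat.card_pos.ne'

/-- The hypothesis `ComplexLift` holds for residue fields of compact discrete valuation rings of
characteristic zero. -/
theorem complexLift_dvr.{w, u} {O : Type u} [CommRing O] [IsDomain O] [IsDiscreteValuationRing O]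
    [Finite (IsLocalRing.ResidueField O)] [CharZero O] [TopologicalSpace O] [IsTopologicalRing O]
    [CompactSpace O] [T2Space O] : ComplexLift.{w} (IsLocalRing.ResidueField O) := by
  obtain ⟨π, hπ⟩ := IsDiscreteValuationRing.exists_irreducible O
  have hfin := finite_quotient_pow hπ
  -- an element of `O` is determined by its residues modulo the powers of `π`
  refine complexLift_of_res π (eq_zero_of_forall_pow_dvd hπ) (IsLocalRing.residue O)
    IsLocalRing.residue_surjective (fun x => ?_) (fun x hx => ?_)
    (fun x j => (Finite.equivFin (O ⧸ Ideal.span {π ^ j}) (Ideal.Quotient.mk _ x) : ℕ)) ?_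
  · rw [IsLocalRing.residue_eq_zero_iff, hπ.maximalIdeal_eq, Ideal.mem_span_singleton]
  · by_contra h
    exact hx ((IsLocalRing.residue_eq_zero_iff x).2 h)
  · intro x y hxy
    rw [← sub_eq_zero]
    refine eq_zero_of_forall_pow_dvd hπ _ fun j => ?_
    have := (Finite.equivFin (O ⧸ Ideal.span {π ^ j})).injective (Fin.ext (congrFun hxy j))
    rwa [Ideal.Quotient.eq, Ideal.mem_span_singleton] at this

/-- A compact group with a decreasing sequence of open normal subgroups forming a neighbourhood
basis of the identity is topologically generated by `k` elements as soon as its quotients by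
these subgroups are generated by `k` elements. -/
theorem exists_dense_of_quotients {H : Type*} [Group H] [TopologicalSpace H]
    [IsTopologicalGroup H] [CompactSpace H] {k : ℕ} {Q : ℕ → Type*} [∀ i, Group (Q i)]
    (φ : ∀ i, H →* Q i) (hsurj : ∀ i, Function.Surjective (φ i))
    (hopen : ∀ i, IsOpen ((φ i).ker : Set H))
    (hanti : ∀ i, (φ (i + 1)).ker ≤ (φ i).ker)
    (hbasis : ∀ U : Set H, IsOpen U → (1 : H) ∈ U → ∃ i, ((φ i).ker : Set H) ⊆ U)
    (hgen : ∀ i, GenBy (Q i) k) :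
    ∃ S : Finset H, S.card ≤ k ∧ Dense ((Subgroup.closure (S : Set H) : Subgroup H) : Set H) := by
  classical
  -- the set of `k`-tuples generating `H` modulo the `i`-th subgroup
  let T : ℕ → Set (Fin k → H) := fun i =>
    {x | ∀ h : H, ∃ g ∈ Subgroup.closure (Set.range x), φ i g = φ i h}
  have hT : ∀ i x, x ∈ T i ↔ Subgroup.closure (Set.range fun a => φ i (x a)) = ⊤ := by
    intro i x
    have : (Set.range fun a => φ i (x a)) = Set.image (φ i) (Set.range x) := by
      rw [← Set.range_comp]; rfl
    rw [this, ← MonoidHom.map_closure, Subgroup.eq_top_iff']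
    constructor
    · intro h y
      obtain ⟨h', rfl⟩ := hsurj i y
      obtain ⟨g, hg, hgh⟩ := h h'
      exact ⟨g, hg, hgh⟩
    · intro h h'
      obtain ⟨g, hg, hgh⟩ := h (φ i h')
      exact ⟨g, hg, hgh⟩
  have hcont : ∀ i, @Continuous _ _ _ ⊥ (φ i) := by
    intro i
    let _ : TopologicalSpace (Q i) := ⊥
    have : DiscreteTopology (Q i) := ⟨rfl⟩
    refine continuous_of_continuousAt_one (φ i) ?_
    rw [ContinuousAt, map_one, nhds_discrete (Q i), Filter.tendsto_pure]
    exact (hopen i).mem_nhds (φ i).ker.one_mem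
  have hclosed : ∀ i, IsClosed (T i) := by
    intro i
    let _ : TopologicalSpace (Q i) := ⊥
    have : DiscreteTopology (Q i) := ⟨rfl⟩
    have : T i = (fun x : Fin k → H => fun a => φ i (x a)) ⁻¹'
        {y | Subgroup.closure (Set.range y) = ⊤} := by
      ext x; exact hT i x
    rw [this]
    exact (isClosed_discrete _).preimage
      (continuous_pi fun a => (hcont i).comp (continuous_apply a))
  have hne : ∀ i, (T i).Nonempty := by
    intro i
    obtain ⟨y, hy⟩ := genBy_iff_fin.1 (hgen i)
    choose x hx using fun a => hsurj i (y a)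
    exact ⟨x, (hT i x).2 (by simp_rw [hx]; exact hy)⟩
  have hdec : ∀ i, T (i + 1) ⊆ T i := by
    intro i x hx h
    obtain ⟨g, hg, hgh⟩ := hx h
    refine ⟨g, hg, ?_⟩
    have : g⁻¹ * h ∈ (φ (i + 1)).ker := by
      rw [MonoidHom.mem_ker, map_mul, map_inv, hgh, inv_mul_cancel]
    have := hanti i this
    rw [MonoidHom.mem_ker, map_mul, map_inv, inv_mul_eq_one] at this
    exact this
  obtain ⟨x, hx⟩ := IsCompact.nonempty_iInter_of_sequence_nonempty_isCompact_isClosed T hdec hne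
    (hclosed 0).isCompact hclosed
  refine ⟨Finset.univ.image x, Finset.card_image_le.trans (by simp), ?_⟩
  rw [Finset.coe_image, Finset.coe_univ, Set.image_univ]
  rw [dense_iff_inter_open]
  rintro U hU ⟨h, hh⟩
  obtain ⟨i, hi⟩ := hbasis ((fun g => h * g) ⁻¹' U) (hU.preimage (continuous_const_mul h))
    (by simpa using hh)
  obtain ⟨g, hg, hgh⟩ := (Set.mem_iInter.1 hx i) h
  refine ⟨g, ?_, hg⟩
  have : h⁻¹ * g ∈ (φ i).ker := by
    rw [MonoidHom.mem_ker, map_mul, map_inv, hgh, inv_mul_cancel]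
  simpa using hi this

/-! ### Completions of number fields -/

open IsDedekindDomain

/-- The ring of integers of `k` is dense in its completion: it meets every residue class modulo a
nonzero element. -/
theorem exists_dvd_sub_algebraMap (k : Type*) [Field k] [NumberField k]
    (v : HeightOneSpectrum (NumberField.RingOfIntegers k)) (c : v.adicCompletionIntegers k)
    (hc : c ≠ 0) (x : v.adicCompletionIntegers k) :
    ∃ r : NumberField.RingOfIntegers k,
      c ∣ x - algebraMap (NumberField.RingOfIntegers k) (v.adicCompletionIntegers k) r := by
  have hc' : Valued.v (c : v.adicCompletion k) ≠ 0 := by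
    rw [Valuation.ne_zero_iff]
    exact fun h => hc (Subtype.ext h)
  have hc1 : Valued.v (c : v.adicCompletion k) ≤ 1 := c.2
  have hopen : {z : v.adicCompletion k | Valued.v (z - x) < Valued.v (c : v.adicCompletion k)} ∈
      nhds (x : v.adicCompletion k) := by
    refine Valued.mem_nhds.2 ⟨Units.mk0 (Valued.v.restrict (c : v.adicCompletion k)) ?_,
      fun z hz => ?_⟩
    · rwa [ne_eq, Valuation.restrict_eq_zero_iff]
    · exact Valued.v.restrict_lt_iff.1 hz
  obtain ⟨y, hy⟩ := (HeightOneSpectrum.denseRange_algebraMap k v).mem_nhds hopen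
  replace hy : Valued.v (algebraMap k (v.adicCompletion k) y - x) <
    Valued.v (c : v.adicCompletion k) := hy
  have hy1 : v.valuation k y ≤ 1 := by
    have h1 : Valued.v (algebraMap k (v.adicCompletion k) y) ≤ 1 := by
      have := Valued.v.map_add (algebraMap k (v.adicCompletion k) y - x) (x : v.adicCompletion k)
      rw [sub_add_cancel] at this
      exact this.trans (max_le (hy.le.trans hc1) x.2)
    rwa [← HeightOneSpectrum.valuedAdicCompletion_eq_valuation']
  obtain ⟨r, hr⟩ := HeightOneSpectrum.exists_valuation_sub_lt_of_integer v hy1 (Units.mk0 _ hc')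
  refine ⟨r, (HeightOneSpectrum.adicCompletionIntegers.integers k v).dvd_of_le ?_⟩
  rw [← HeightOneSpectrum.valuedAdicCompletion_eq_valuation'] at hr
  have e1 : algebraMap (v.adicCompletionIntegers k) (v.adicCompletion k)
      (x - algebraMap (NumberField.RingOfIntegers k) (v.adicCompletionIntegers k) r) =
      -((algebraMap k (v.adicCompletion k) y - x) +
        algebraMap k (v.adicCompletion k)
          (algebraMap (NumberField.RingOfIntegers k) k r - y)) := by
    have : algebraMap (v.adicCompletionIntegers k) (v.adicCompletion k)
        (algebraMap (NumberField.RingOfIntegers k) (v.adicCompletionIntegers k) r) =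
        algebraMap k (v.adicCompletion k) (algebraMap (NumberField.RingOfIntegers k) k r) := rfl
    rw [map_sub, this, map_sub]
    change (x : v.adicCompletion k) - _ = _
    ring
  rw [e1, Valuation.map_neg]
  exact (Valued.v.map_add _ _).trans (max_le hy.le hr.le)

theorem charZero_adic (k : Type*) [Field k] [NumberField k]
    (v : HeightOneSpectrum (NumberField.RingOfIntegers k)) : CharZero (v.adicCompletionIntegers k) :=
  charZero_of_injective_algebraMap
    (FaithfulSMul.algebraMap_injective (NumberField.RingOfIntegers k) (v.adicCompletionIntegers k))

theorem finite_residueField_adic (k : Type*) [Field k] [NumberField k]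
    (v : HeightOneSpectrum (NumberField.RingOfIntegers k)) :
    Finite (IsLocalRing.ResidueField (v.adicCompletionIntegers k)) := by
  obtain ⟨π, hπ⟩ := IsDiscreteValuationRing.exists_irreducible (v.adicCompletionIntegers k)
  let g : NumberField.RingOfIntegers k →+* IsLocalRing.ResidueField (v.adicCompletionIntegers k) :=
    (IsLocalRing.residue _).comp
      (algebraMap (NumberField.RingOfIntegers k) (v.adicCompletionIntegers k))
  have hg : Function.Surjective g := by
    intro y
    obtain ⟨x, rfl⟩ := IsLocalRing.residue_surjective y
    obtain ⟨r, hr⟩ := exists_dvd_sub_algebraMap k v π hπ.ne_zero x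
    refine ⟨r, ?_⟩
    rw [← Ideal.mem_span_singleton, ← hπ.maximalIdeal_eq, ← IsLocalRing.residue_eq_zero_iff,
      map_sub, sub_eq_zero] at hr
    exact hr.symm
  have hker : RingHom.ker g ≠ ⊥ := by
    obtain ⟨a, ha, ha0⟩ := Submodule.exists_mem_ne_zero_of_ne_bot v.ne_bot
    intro h
    apply ha0
    rw [← Ideal.mem_bot, ← h, RingHom.mem_ker]
    change IsLocalRing.residue _ _ = 0
    rw [IsLocalRing.residue_eq_zero_iff, IsLocalRing.mem_maximalIdeal, mem_nonunits_iff,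
      HeightOneSpectrum.adicCompletionIntegers.isUnit_iff_valued_eq_one]
    have h1 := (HeightOneSpectrum.valuation_lt_one_iff_mem (K := k) v a).2 ha
    rw [← HeightOneSpectrum.valuedAdicCompletion_eq_valuation'] at h1
    exact h1.ne
  have := Ideal.finiteQuotientOfFreeOfNeBot _ hker
  exact Finite.of_equiv _ (RingHom.quotientKerEquivOfSurjective hg).toEquiv

theorem compactSpace_adic (k : Type*) [Field k] [NumberField k]
    (v : HeightOneSpectrum (NumberField.RingOfIntegers k)) :
    CompactSpace (v.adicCompletionIntegers k) := by
  have h1 : CompleteSpace (Valued.integer (v.adicCompletion k)) :=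
    (Valued.isClosed_integer (v.adicCompletion k)).completeSpace_coe
  have h2 : IsDiscreteValuationRing (Valued.integer (v.adicCompletion k)) :=
    inferInstanceAs (IsDiscreteValuationRing (v.adicCompletionIntegers k))
  have h3 : Finite (IsLocalRing.ResidueField (Valued.integer (v.adicCompletion k))) :=
    finite_residueField_adic k v
  exact Valued.integer.compactSpace_iff_completeSpace_and_isDiscreteValuationRing_and_finite_residueField.2
    ⟨h1, h2, h3⟩


/-- The residue degree `f` and the ramification index `e` of a finite place satisfy
`e * f ≤ [k : ℚ]`: the ring of integers modulo `p` has `p ^ [k : ℚ]` elements and surjects onto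
`𝒪ᵥ / p`, which has `p ^ (e * f)` elements. -/
theorem exists_local_data (k : Type*) [Field k] [NumberField k]
    (v : HeightOneSpectrum (NumberField.RingOfIntegers k)) {π : v.adicCompletionIntegers k}
    (hπ : Irreducible π) :
    ∃ (p e f : ℕ) (u : (v.adicCompletionIntegers k)ˣ), p.Prime ∧ 0 < e ∧
      Nat.card (IsLocalRing.ResidueField (v.adicCompletionIntegers k)) = p ^ f ∧
      (p : v.adicCompletionIntegers k) = u * π ^ e ∧ e * f ≤ Module.finrank ℚ k := by
  have := charZero_adic k v
  have := finite_residueField_adic k v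
  have := Fintype.ofFinite (IsLocalRing.ResidueField (v.adicCompletionIntegers k))
  obtain ⟨p, hchar, f, hp, hF⟩ :=
    FiniteField.card' (IsLocalRing.ResidueField (v.adicCompletionIntegers k))
  rw [← Nat.card_eq_fintype_card] at hF
  have hp0 : (p : v.adicCompletionIntegers k) ≠ 0 := Nat.cast_ne_zero.2 hp.ne_zero
  obtain ⟨e, u, hu⟩ := IsDiscreteValuationRing.eq_unit_mul_pow_irreducible hp0 hπ
  have hpm : (p : v.adicCompletionIntegers k) ∈
      IsLocalRing.maximalIdeal (v.adicCompletionIntegers k) := by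
    rw [← IsLocalRing.residue_eq_zero_iff, map_natCast, CharP.cast_eq_zero]
  have he : 0 < e := by
    rcases Nat.eq_zero_or_pos e with rfl | h
    · exact absurd hpm (by simp [hu])
    · exact h
  refine ⟨p, e, f, u, hp, he, hF, hu, ?_⟩
  have hspan : Ideal.span {π ^ e} = Ideal.span {(p : v.adicCompletionIntegers k)} := by
    rw [hu, Ideal.span_singleton_mul_left_unit u.isUnit]
  have hcard := card_quotient_pow hπ e
  rw [hF, ← pow_mul, hspan] at hcard
  have hcard' : Nat.card (NumberField.RingOfIntegers k ⧸
      Ideal.span {(p : NumberField.RingOfIntegers k)}) = p ^ Module.finrank ℚ k := by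
    rw [← NumberField.RingOfIntegers.rank k, ← Ideal.absNorm_span_natCast,
      Ideal.absNorm_apply, Submodule.cardQuot_apply]
  have hfin : Finite (NumberField.RingOfIntegers k ⧸
      Ideal.span {(p : NumberField.RingOfIntegers k)}) :=
    Nat.finite_of_card_ne_zero (by rw [hcard']; exact pow_ne_zero _ hp.ne_zero)
  have hle : Nat.card (v.adicCompletionIntegers k ⧸
      Ideal.span {(p : v.adicCompletionIntegers k)}) ≤ Nat.card (NumberField.RingOfIntegers k ⧸
      Ideal.span {(p : NumberField.RingOfIntegers k)}) := by
    refine Nat.card_le_card_of_surjective (Ideal.Quotient.lift _ ((Ideal.Quotient.mk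
      (Ideal.span {(p : v.adicCompletionIntegers k)})).comp
        (algebraMap (NumberField.RingOfIntegers k) (v.adicCompletionIntegers k))) ?_) ?_
    · intro a ha
      rw [RingHom.comp_apply, Ideal.Quotient.eq_zero_iff_mem, Ideal.mem_span_singleton,
        ← map_natCast (algebraMap (NumberField.RingOfIntegers k) (v.adicCompletionIntegers k))]
      exact map_dvd _ (Ideal.mem_span_singleton.1 ha)
    · intro y
      obtain ⟨x, rfl⟩ := Ideal.Quotient.mk_surjective y
      obtain ⟨r, hr⟩ := exists_dvd_sub_algebraMap k v _ hp0 x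
      refine ⟨Ideal.Quotient.mk _ r, ?_⟩
      rw [Ideal.Quotient.lift_mk, RingHom.comp_apply, eq_comm, Ideal.Quotient.eq,
        Ideal.mem_span_singleton]
      exact hr
  rw [hcard, hcard', Nat.pow_le_pow_iff_right hp.one_lt] at hle
  rwa [mul_comm]

/-! ### Closed subgroups -/

/-- Closed subgroups of `SL` over a compact discrete valuation ring of characteristic zero: the
kernels of reduction modulo `π ^ (i + e + 1)` form a neighbourhood basis of the identity, by
compactness, and the images are covered by `genBy_SL_dvr`. -/
theorem topGen_SL_dvr {O : Type*} [CommRing O] [IsDomain O] [IsDiscreteValuationRing O]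
    [Finite (IsLocalRing.ResidueField O)] [CharZero O] [TopologicalSpace O] [IsTopologicalRing O]
    [CompactSpace O] [T2Space O] {π : O} (hπ : Irreducible π) (u : Oˣ)
    {e p f s : ℕ} (hp : p.Prime) (he : 0 < e)
    (hF : Nat.card (IsLocalRing.ResidueField O) = p ^ f) (hpu : (p : O) = u * π ^ e)
    (H : Subgroup (Matrix.SpecialLinearGroup (Fin (s + 1)) O))
    (hH : IsClosed (H : Set (Matrix.SpecialLinearGroup (Fin (s + 1)) O))) :
    ∃ S : Finset H, S.card ≤ 3 * (e * f) * (s + 1) ^ 2 ∧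
      Dense ((Subgroup.closure (S : Set H) : Subgroup H) : Set H) := by
  have hfin := finite_quotient_pow hπ
  have : CompactSpace (Matrix (Fin (s + 1)) (Fin (s + 1)) O) :=
    inferInstanceAs (CompactSpace (Fin (s + 1) → Fin (s + 1) → O))
  have : CompactSpace (Matrix.SpecialLinearGroup (Fin (s + 1)) O) :=
    Matrix.SpecialLinearGroup.isClosedEmbedding_val.compactSpace
  have : CompactSpace H := isCompact_iff_compactSpace.1 hH.isCompact
  let φ : ∀ i : ℕ, H →* Matrix.SpecialLinearGroup (Fin (s + 1))
      (O ⧸ Ideal.span {π ^ (i + (e + 1))}) := fun i =>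
    (Matrix.SpecialLinearGroup.map (Ideal.Quotient.mk _)).comp H.subtype
  have hφ : ∀ i x, x ∈ (φ i).ker ↔ ∀ a b, π ^ (i + (e + 1)) ∣
      (x : Matrix.SpecialLinearGroup (Fin (s + 1)) O).1 a b -
        (1 : Matrix (Fin (s + 1)) (Fin (s + 1)) O) a b := by
    intro i x
    rw [MonoidHom.mem_ker]
    refine (Matrix.SpecialLinearGroup.ext_iff _ _).trans ?_
    refine forall_congr' fun a => forall_congr' fun b => ?_
    rw [← Ideal.mem_span_singleton, ← Ideal.Quotient.eq]
    have : (1 : Matrix.SpecialLinearGroup (Fin (s + 1)) (O ⧸ Ideal.span {π ^ (i + (e + 1))})).1 a b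
        = Ideal.Quotient.mk _ ((1 : Matrix (Fin (s + 1)) (Fin (s + 1)) O) a b) := by
      rw [Matrix.SpecialLinearGroup.coe_one, Matrix.one_apply, Matrix.one_apply]
      split_ifs <;> simp
    rw [this]
    rfl
  have hopenI : ∀ j : ℕ, IsOpen {a : O | π ^ j ∣ a} := by
    intro j
    have h : IsOpen ((Ideal.span {π ^ j} : Ideal O) : Set O) := by
      refine (IsDedekindDomain.isOpen_iff (IsDiscreteValuationRing.not_isField O)).2 ?_
      rw [ne_eq, Ideal.span_singleton_eq_bot]
      exact pow_ne_zero _ hπ.ne_zero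
    convert h using 1
    ext a
    exact Ideal.mem_span_singleton.symm
  have hopen : ∀ i, IsOpen ((φ i).ker : Set H) := by
    intro i
    have h : ((φ i).ker : Set H) = ⋂ a, ⋂ b, (fun x : H =>
        (x : Matrix.SpecialLinearGroup (Fin (s + 1)) O).1 a b -
        (1 : Matrix (Fin (s + 1)) (Fin (s + 1)) O) a b) ⁻¹' {a : O | π ^ (i + (e + 1)) ∣ a} := by
      ext x
      simp only [Set.mem_iInter]
      exact hφ i x
    rw [h]
    refine isOpen_iInter_of_finite fun a => isOpen_iInter_of_finite fun b =>
      (hopenI _).preimage (Continuous.sub ?_ continuous_const)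
    have hval : Continuous fun x : H => (x : Matrix.SpecialLinearGroup (Fin (s + 1)) O).1 :=
      Matrix.SpecialLinearGroup.isClosedEmbedding_val.continuous.comp continuous_subtype_val
    exact hval.matrix_elem a b
  have hanti : ∀ i, (φ (i + 1)).ker ≤ (φ i).ker := by
    intro i x hx
    rw [hφ] at hx ⊢
    exact fun a b => (pow_dvd_pow π (by omega)).trans (hx a b)
  have hclosed : ∀ i, IsClosed ((φ i).ker : Set H) := fun i =>
    Subgroup.isClosed_of_isOpen _ (hopen i)
  have hbasis : ∀ U : Set H, IsOpen U → (1 : H) ∈ U → ∃ i, ((φ i).ker : Set H) ⊆ U := by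
    intro U hU h1
    by_contra! hcon
    obtain ⟨x, hx⟩ := IsCompact.nonempty_iInter_of_sequence_nonempty_isCompact_isClosed
      (fun i => ((φ i).ker : Set H) ∩ Uᶜ) (fun i => Set.inter_subset_inter_left _ (hanti i))
      (fun i => Set.inter_compl_nonempty_iff.2 (hcon i))
      ((hclosed 0).inter hU.isClosed_compl).isCompact
      (fun i => (hclosed i).inter hU.isClosed_compl)
    rw [Set.mem_iInter] at hx
    have hx1 : x = 1 := by
      refine Subtype.ext (Subtype.ext (Matrix.ext fun a b => ?_))
      rw [← sub_eq_zero]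
      exact eq_zero_of_forall_pow_dvd hπ _ fun j =>
        (pow_dvd_pow π (by omega)).trans ((hφ j x).1 (hx j).1 a b)
    exact (hx 0).2 (hx1 ▸ h1)
  have hker : ∀ i, (φ i).rangeRestrict.ker = (φ i).ker := fun i => (φ i).ker_rangeRestrict
  refine exists_dense_of_quotients (fun i => (φ i).rangeRestrict)
    (fun i => (φ i).rangeRestrict_surjective) (fun i => by rw [hker]; exact hopen i)
    (fun i => by rw [hker, hker]; exact hanti i)
    (fun U hU h1 => by simp_rw [hker]; exact hbasis U hU h1) fun i => ?_
  have : Finite (Matrix.SpecialLinearGroup (Fin (s + 1)) (O ⧸ Ideal.span {π ^ (i + (e + 1))})) :=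
    inferInstanceAs (Finite (Subtype _))
  exact genBy_SL_dvr complexLift_dvr hπ u hp he hF hpu (by omega) (φ i).range.subtype
    Subtype.val_injective

/-- Let `k` be a number field of degree `d` over `ℚ` with ring of integers
`𝒪`, let `v` be a nonzero prime ideal of `𝒪` (a finite place, i.e. a point of the height-one
spectrum), and let `𝒪ᵥ` be the ring of integers of the `v`-adic completion `kᵥ`. Then for
every positive integer `s`, every closed subgroup `H` of `SL_s(𝒪ᵥ)` (with the subspace
topology from the matrices over `𝒪ᵥ`) is topologically generated by at most `3d²s²`
elements. -/
theorem stmt2 (k : Type*) [Field k] [NumberField k] (d : ℕ)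
    (hd : Module.finrank ℚ k = d) (s : ℕ) (hs : 0 < s)
    (v : HeightOneSpectrum (NumberField.RingOfIntegers k)) :
    letI : TopologicalSpace (Matrix.SpecialLinearGroup (Fin s) (v.adicCompletionIntegers k)) :=
      TopologicalSpace.induced
        (fun A => (A : Matrix (Fin s) (Fin s) (v.adicCompletionIntegers k))) inferInstance
    ∀ H : Subgroup (Matrix.SpecialLinearGroup (Fin s) (v.adicCompletionIntegers k)),
      IsClosed (H : Set (Matrix.SpecialLinearGroup (Fin s) (v.adicCompletionIntegers k))) →
      ∃ S : Finset H, S.card ≤ 3 * d ^ 2 * s ^ 2 ∧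
        Dense ((Subgroup.closure (S : Set H) : Subgroup H) : Set H) := by
  intro H hH
  obtain ⟨t, rfl⟩ := Nat.exists_eq_add_one.2 hs
  have := charZero_adic k v
  have := finite_residueField_adic k v
  have := compactSpace_adic k v
  obtain ⟨π, hπ⟩ := IsDiscreteValuationRing.exists_irreducible (v.adicCompletionIntegers k)
  obtain ⟨p, e, f, u, hp, he, hF, hpu, hef⟩ := exists_local_data k v hπ
  obtain ⟨S, hS, hdense⟩ := topGen_SL_dvr hπ u hp he hF hpu H hH
  refine ⟨S, hS.trans (Nat.mul_le_mul_right _ (Nat.mul_le_mul_left _ ?_)), hdense⟩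
  rw [hd] at hef
  exact hef.trans (Nat.le_self_pow two_ne_zero d)
end

section
/- Let k be a number field of degree d over ℚ with ring of integers 𝒪, let v be a nonzero prime ideal of 𝒪, let 𝒪_v denote the ring of integers of the v-adic completion k_v, and let 𝔪_v be the maximal ideal of 𝒪_v, so that 𝒪_v/𝔪_v is the (finite) residue field of v. For a positive integer s, let Γ_v(1) be the kernel of the reduction homomorphism SL_s(𝒪_v) → SL_s(𝒪_v/𝔪_v). Then Γ_v(1) is topologically generated by at most s²d² elements. -/
/-!
The proof exhibits `s² · rank v ≤ s² d` topological generators, all of them transvections with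
entries from the number field.

Let `o` be a fixed index, and put `N i j = E i j` for `i ≠ j` and
`N i i = (e i + e o) (e i - e o)ᵀ`. These are rank-one matrices `u vᵀ` with `v ⬝ u = 0`, so
`b ↦ 1 + b • N i j` is a homomorphism from the additive group of `𝒪ᵥ` to `SL_s(𝒪ᵥ)`
(`transvectionHom`), and together they span the matrices of trace zero. The prime `v` itself is a
`ℤ`-module generated by at most `d` elements `b l`; the generators are the `1 + b l • N i j`. The
group `H` they generate contains `1 + b • N i j` for every `b ∈ v`.

Let `ϖ ∈ v` be a uniformizer. As `𝓞 k` surjects onto the residue field and `ϖ ^ m 𝓞 k ⊆ v` for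
`m ≥ 1`, the group `H` contains, for each `r ∈ 𝒪ᵥ`, an element `1 + ϖ ^ m r • N i j` up to an error
in `ϖ ^ (m + 1)` (`isLeading_smul`). Multiplying such elements, `H` realizes
`1 + ϖ ^ m • M + O(ϖ ^ (m + 1))` whenever `tr M ≡ 0` modulo `ϖ` (`isLeading_of_trace`), and that
congruence holds whenever `det (1 + ϖ ^ m • M) = 1` (`trace_of_det_eq_one`). So any element of
`Γᵥ(1)` is approximated by elements of `H` modulo successive powers of `ϖ` (`exists_approx`), hence
`H` is dense.
-/

open IsDedekindDomain

namespace CongruenceGenerators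

open Matrix

/-! ### Transvections and leading coefficients -/

section Algebra

variable {n R : Type*} [DecidableEq n] [CommRing R]

/-- Column vectors of the rank-one matrices `N i j`: `N i j = E i j` for `i ≠ j`, and
`N i i = (e i + e o) (e i - e o)ᵀ`, where `o` is a fixed index. -/
def colVec (o i j : n) : n → R :=
  if i = j then Pi.single i 1 + Pi.single o 1 else Pi.single i 1

/-- Row vectors of the rank-one matrices `N i j` of `colVec`. -/
def rowVec (o i j : n) : n → R :=
  if i = j then Pi.single i 1 - Pi.single o 1 else Pi.single j 1

theorem vecMulVec_off (o : n) {i j : n} (h : i ≠ j) :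
    vecMulVec (colVec o i j) (rowVec o i j) = (single i j 1 : Matrix n n R) := by
  simp [colVec, rowVec, h, single_eq_single_vecMulVec_single]

theorem vecMulVec_diag (o i : n) :
    vecMulVec (colVec o i i) (rowVec o i i) =
      (single i i 1 - single o o 1 + single o i 1 - single i o 1 : Matrix n n R) := by
  simp [colVec, rowVec, single_eq_single_vecMulVec_single, add_vecMulVec, vecMulVec_sub]
  abel

variable [Fintype n]

/-- The one-parameter group `b ↦ 1 + b • u vᵀ` of transvections in `SL_n(R)` attached to vectors
`u`, `v` with `v ⬝ u = 0`. -/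
def transvectionHom (u v : n → R) (h : v ⬝ᵥ u = 0) :
    Multiplicative R →* Matrix.SpecialLinearGroup n R where
  toFun b := ⟨1 + b.toAdd • vecMulVec u v, by
    rw [← smul_vecMulVec, vecMulVec_eq Unit, det_one_add_replicateCol_mul_replicateRow]
    simp [h]⟩
  map_one' := by ext; simp
  map_mul' a b := by
    apply Subtype.ext
    have hN : vecMulVec u v * vecMulVec u v = 0 := by
      rw [vecMulVec_mul_vecMulVec, h, zero_smul, vecMulVec_zero]
    change 1 + (a * b).toAdd • vecMulVec u v =
      (1 + a.toAdd • vecMulVec u v) * (1 + b.toAdd • vecMulVec u v)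
    simp only [toAdd_mul, add_mul, mul_add, one_mul, mul_one,
      smul_mul_assoc, mul_smul_comm, hN, smul_zero, add_zero, add_smul]
    abel

@[simp]
theorem coe_transvectionHom (u v : n → R) (h : v ⬝ᵥ u = 0) (b : Multiplicative R) :
    (transvectionHom u v h b : Matrix n n R) = 1 + b.toAdd • vecMulVec u v := rfl

theorem rowVec_dotProduct_colVec (o i j : n) :
    (rowVec o i j : n → R) ⬝ᵥ colVec o i j = 0 := by
  unfold rowVec colVec
  split_ifs with h
  · by_cases ho : o = i
    · simp [ho]
    · simp [ho, Ne.symm ho]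
  · simp [h]

variable (H : Subgroup (Matrix.SpecialLinearGroup n R)) (ϖ : R) (m : ℕ)

/-- `M` is a leading coefficient at level `m`: some element of `H` has the form
`1 + ϖ ^ m M + O(ϖ ^ (m + 1))`. -/
def IsLeading (M : Matrix n n R) : Prop :=
  ∃ h ∈ H, ∃ C : Matrix n n R, (h : Matrix n n R) = 1 + ϖ ^ m • M + ϖ ^ (m + 1) • C

variable {H ϖ m}

theorem IsLeading.zero : IsLeading H ϖ m 0 := ⟨1, H.one_mem, 0, by simp⟩

theorem IsLeading.congr {M : Matrix n n R} (hM : IsLeading H ϖ m M) (D : Matrix n n R) :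
    IsLeading H ϖ m (M + ϖ • D) := by
  obtain ⟨h, hh, C, e⟩ := hM
  refine ⟨h, hh, C - D, ?_⟩
  rw [e, smul_add, smul_sub, smul_smul, ← pow_succ]
  abel

theorem IsLeading.add (hm : 1 ≤ m) {M M' : Matrix n n R} (hM : IsLeading H ϖ m M)
    (hM' : IsLeading H ϖ m M') : IsLeading H ϖ m (M + M') := by
  obtain ⟨h, hh, C, e⟩ := hM
  obtain ⟨h', hh', C', e'⟩ := hM'
  obtain ⟨t, rfl⟩ := Nat.exists_eq_add_of_le' hm
  refine ⟨h * h', H.mul_mem hh hh',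
    C + C' + ϖ ^ t • ((M + ϖ • C) * (M' + ϖ • C')), ?_⟩
  rw [Matrix.SpecialLinearGroup.coe_mul, e, e']
  simp only [add_mul, mul_add, smul_add, smul_mul_assoc, mul_smul_comm, smul_smul, one_mul, mul_one]
  module

theorem IsLeading.sum (hm : 1 ≤ m) {ι : Type*} (S : Finset ι) (f : ι → Matrix n n R)
    (hf : ∀ i ∈ S, IsLeading H ϖ m (f i)) : IsLeading H ϖ m (∑ i ∈ S, f i) :=
  Finset.sum_induction f _ (fun _ _ => IsLeading.add hm) .zero hf

/-- If `H` realizes all multiples of the rank-one matrices `N i j` at level `m`, it realizes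
every matrix whose trace is divisible by `ϖ`: the `N i j` span the matrices of trace zero. -/
theorem isLeading_of_trace (hm : 1 ≤ m) (o : n)
    (hN : ∀ i j (r : R), IsLeading H ϖ m (r • vecMulVec (colVec o i j) (rowVec o i j)))
    (M : Matrix n n R) (c : R) (hM : M.trace = ϖ * c) : IsLeading H ϖ m M := by
  have hoff : ∀ i j, i ≠ j → ∀ r : R, IsLeading H ϖ m (single i j r) := by
    intro i j hij r
    have := hN i j r
    rwa [vecMulVec_off o hij, smul_single, smul_eq_mul, mul_one] at this
  have hdiag : ∀ i, ∀ r : R, IsLeading H ϖ m (single i i r - single o o r) := by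
    intro i r
    by_cases hi : i = o
    · subst hi; simpa using IsLeading.zero
    · have := ((hN i i r).add hm (hoff i o hi r)).add hm (hoff o i (Ne.symm hi) (-r))
      have hneg : (single o i (-r) : Matrix n n R) = -single o i r :=
        (singleAddMonoidHom o i).map_neg r
      rw [vecMulVec_diag] at this
      convert this using 1
      simp only [smul_add, smul_sub, smul_single, smul_eq_mul, mul_one, hneg]
      abel
  have key : M = (∑ i, ∑ j, if i = j then single i i (M i i) - single o o (M i i)
      else single i j (M i j)) + ϖ • single o o c := by
    rw [smul_single, smul_eq_mul, ← hM]
    conv_lhs => rw [matrix_eq_sum_single M]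
    have hs : (single o o M.trace : Matrix n n R) =
        ∑ i, ∑ j, if i = j then single o o (M i i) else 0 := by
      simp only [Finset.sum_ite_eq, Finset.mem_univ, if_true]
      rw [trace]
      exact map_sum (singleAddMonoidHom o o) _ _
    rw [hs, ← Finset.sum_add_distrib]
    refine Finset.sum_congr rfl fun i _ => ?_
    rw [← Finset.sum_add_distrib]
    refine Finset.sum_congr rfl fun j _ => ?_
    split_ifs with h
    · subst h; abel
    · simp
  rw [key]
  refine IsLeading.congr (IsLeading.sum hm _ _ fun i _ => IsLeading.sum hm _ _ fun j _ => ?_) _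
  split_ifs with h
  · exact hdiag i _
  · exact hoff i j h _

/-- Modulo `ϖ ^ (2 * m)`, `det (1 + ϖ ^ m • M)` is `1 + ϖ ^ m * tr M`, so determinant one makes the
trace divisible by `ϖ`. -/
theorem trace_of_det_eq_one [IsDomain R] (hϖ : ϖ ≠ 0) (hm : 1 ≤ m) (M : Matrix n n R)
    (h : (1 + ϖ ^ m • M).det = 1) : ∃ c, M.trace = ϖ * c := by
  obtain ⟨t, rfl⟩ := Nat.exists_eq_add_of_le' hm
  rw [det_one_add_smul] at h
  generalize Polynomial.eval (ϖ ^ (t + 1)) _ = P at h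
  refine ⟨-(P * ϖ ^ t), mul_right_cancel₀ (pow_ne_zero (t + 1) hϖ) ?_⟩
  linear_combination h

/-- Successive approximation: if at every level `m ≥ 1` the subgroup `H` realizes all multiples of
the `N i j`, then every `g ≡ 1` modulo `ϖ` is congruent to an element of `H` modulo any power
of `ϖ`. -/
theorem exists_approx [IsDomain R] (hϖ : ϖ ≠ 0) (o : n)
    (hN : ∀ m, 1 ≤ m → ∀ i j (r : R),
      IsLeading H ϖ m (r • vecMulVec (colVec o i j) (rowVec o i j)))
    (g : Matrix.SpecialLinearGroup n R) (A : Matrix n n R) (hg : (g : Matrix n n R) = 1 + ϖ • A) (m : ℕ) :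
    ∃ h ∈ H, ∃ C : Matrix n n R, (g : Matrix n n R) = h + ϖ ^ (m + 1) • C := by
  induction m with
  | zero => exact ⟨1, H.one_mem, A, by simpa using hg⟩
  | succ m ih =>
    obtain ⟨h, hh, C, e⟩ := ih
    have e1 : ((h⁻¹ * g : Matrix.SpecialLinearGroup n R) : Matrix n n R) =
        1 + ϖ ^ (m + 1) • ((h⁻¹ : Matrix.SpecialLinearGroup n R) * C : Matrix n n R) := by
      rw [Matrix.SpecialLinearGroup.coe_mul, e, mul_add, ← Matrix.SpecialLinearGroup.coe_mul, inv_mul_cancel,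
        mul_smul_comm, Matrix.SpecialLinearGroup.coe_one]
    obtain ⟨c, hc⟩ := trace_of_det_eq_one hϖ (Nat.le_add_left 1 m) _
      (by rw [← e1]; exact (h⁻¹ * g).2)
    obtain ⟨h', hh', D, e'⟩ := isLeading_of_trace (Nat.le_add_left 1 m) o
      (hN (m + 1) (by omega)) _ c hc
    refine ⟨h * h', H.mul_mem hh hh', -(h * D), ?_⟩
    rw [← e1] at e'
    have e2 : (g : Matrix n n R) = h * ((h⁻¹ * g : Matrix.SpecialLinearGroup n R) : Matrix n n R) := by
      rw [← Matrix.SpecialLinearGroup.coe_mul, mul_inv_cancel_left]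
    rw [Matrix.SpecialLinearGroup.coe_mul, e', mul_add, ← e2, mul_smul_comm, smul_neg]
    abel

end Algebra

/-! ### The completed ring of integers -/

section Local

open NumberField

variable {k : Type*} [Field k] [NumberField k] (v : HeightOneSpectrum (𝓞 k))

theorem valued_algebraMap {v : HeightOneSpectrum (𝓞 k)} (a : 𝓞 k) :
    Valued.v ((algebraMap (𝓞 k) (v.adicCompletionIntegers k) a : v.adicCompletionIntegers k) :
      v.adicCompletion k) = v.intValuation a :=
  (v.valuedAdicCompletion_eq_valuation (K := k) a).trans (v.valuation_of_algebraMap a)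

theorem exists_uniformizer : ∃ ϖ : 𝓞 k, ϖ ∈ v.asIdeal ∧
    Valued.v ((algebraMap (𝓞 k) (v.adicCompletionIntegers k) ϖ : v.adicCompletionIntegers k) :
      v.adicCompletion k) = WithZero.exp (-1 : ℤ) := by
  obtain ⟨ϖ, h⟩ := v.intValuation_exists_uniformizer
  refine ⟨ϖ, ?_, ?_⟩
  · rw [← v.intValuation_lt_one_iff_mem, h, ← WithZero.exp_zero, WithZero.exp_lt_exp]; simp
  · exact (valued_algebraMap ϖ).trans h

variable {v}

theorem dvd_of_valued_le {x y : v.adicCompletionIntegers k}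
    (h : Valued.v (x : v.adicCompletion k) ≤ Valued.v (y : v.adicCompletion k)) : y ∣ x :=
  (HeightOneSpectrum.adicCompletionIntegers.integers k v).dvd_of_le h

/-- The residue field of `𝒪ᵥ` is covered by `𝓞 k`. -/
theorem exists_sub_lt_one (r : v.adicCompletionIntegers k) : ∃ a : 𝓞 k,
    Valued.v ((r - algebraMap (𝓞 k) (v.adicCompletionIntegers k) a : v.adicCompletionIntegers k) :
      v.adicCompletion k) < 1 := by
  have hU : {y : v.adicCompletion k | Valued.v (y - r) < 1} ∈ nhds (r : v.adicCompletion k) := by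
    rw [Valued.mem_nhds]
    refine ⟨1, fun y hy => ?_⟩
    simpa [Valuation.restrict_lt_iff_lt_embedding] using hy
  obtain ⟨_, hx, x, rfl⟩ := mem_closure_iff_nhds.1
    (v.denseRange_algebraMap k (r : v.adicCompletion k)) _ hU
  have hx' : Valued.v (algebraMap k (v.adicCompletion k) x - r) < 1 := hx
  have hvx (y : k) : Valued.v (algebraMap k (v.adicCompletion k) y) = v.valuation k y :=
    v.valuedAdicCompletion_eq_valuation' y
  have hx1 : v.valuation k x ≤ 1 := by
    rw [← hvx, ← sub_add_cancel (algebraMap k (v.adicCompletion k) x) r]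
    exact (Valuation.map_add _ _ _).trans (max_le hx'.le r.2)
  obtain ⟨a, ha⟩ := v.exists_valuation_sub_lt_of_integer hx1 1
  rw [← hvx, map_sub] at ha
  refine ⟨a, ?_⟩
  have e : ((r - algebraMap (𝓞 k) (v.adicCompletionIntegers k) a : v.adicCompletionIntegers k) :
      v.adicCompletion k) = -(algebraMap k (v.adicCompletion k) x - r) -
        (algebraMap k (v.adicCompletion k) (algebraMap (𝓞 k) k a) -
          algebraMap k (v.adicCompletion k) x) := by
    have : ((algebraMap (𝓞 k) (v.adicCompletionIntegers k) a : v.adicCompletionIntegers k) :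
      v.adicCompletion k) = algebraMap k (v.adicCompletion k) (algebraMap (𝓞 k) k a) := rfl
    push_cast
    rw [this]; ring
  rw [e]
  refine (Valuation.map_sub _ _ _).trans_lt (max_lt ?_ ha)
  rwa [Valuation.map_neg]

/-- Every neighbourhood of `x` contains the cosets `x + ϖ ^ m 𝒪ᵥ` for all large `m`. -/
theorem mem_nhds_pow {ϖ : v.adicCompletionIntegers k}
    (hϖ : Valued.v (ϖ : v.adicCompletion k) = WithZero.exp (-1 : ℤ))
    (x : v.adicCompletionIntegers k) (U : Set (v.adicCompletionIntegers k)) (hU : U ∈ nhds x) :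
    ∃ m : ℕ, ∀ m' ≥ m, ∀ c, x + ϖ ^ m' * c ∈ U := by
  obtain ⟨W, hW, hWU⟩ := mem_nhds_subtype _ _ _ |>.1 hU
  obtain ⟨γ, hγ⟩ := Valued.mem_nhds.1 hW
  set g : WithZero (Multiplicative ℤ) := MonoidWithZeroHom.ValueGroup₀.embedding γ.1 with hg
  have hg0 : g ≠ 0 := by simp [hg]
  refine ⟨(1 - WithZero.log g).toNat, fun m hm c => hWU (hγ ?_)⟩
  rw [Set.mem_ofPred_eq, Valuation.restrict_lt_iff_lt_embedding, ← hg]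
  have e : ((x + ϖ ^ m * c : v.adicCompletionIntegers k) : v.adicCompletion k) - x =
      (ϖ : v.adicCompletion k) ^ m * c := by push_cast; ring
  rw [e, map_mul, map_pow, hϖ, ← WithZero.exp_nsmul]
  calc _ ≤ WithZero.exp (m • (-1 : ℤ)) := mul_le_of_le_one_right' c.2
    _ < WithZero.exp (WithZero.log g) := by
        rw [WithZero.exp_lt_exp]; simp; omega
    _ = g := WithZero.exp_log hg0

theorem dvd_of_valued_lt_one {ϖ x : v.adicCompletionIntegers k}
    (hϖ : Valued.v (ϖ : v.adicCompletion k) = WithZero.exp (-1 : ℤ))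
    (hx : Valued.v (x : v.adicCompletion k) < 1) : ϖ ∣ x := by
  refine dvd_of_valued_le ?_
  rw [hϖ]
  by_cases h0 : Valued.v (x : v.adicCompletion k) = 0
  · simp [h0]
  · rw [← WithZero.exp_log h0, ← WithZero.exp_zero, WithZero.exp_lt_exp] at hx
    rw [← WithZero.exp_log h0, WithZero.exp_le_exp]
    omega

theorem mem_maximalIdeal_iff_dvd {ϖ : v.adicCompletionIntegers k}
    (hϖ : Valued.v (ϖ : v.adicCompletion k) = WithZero.exp (-1 : ℤ))
    (x : v.adicCompletionIntegers k) :
    x ∈ IsLocalRing.maximalIdeal (v.adicCompletionIntegers k) ↔ ϖ ∣ x := by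
  rw [IsLocalRing.mem_maximalIdeal, mem_nonunits_iff,
    HeightOneSpectrum.adicCompletionIntegers.isUnit_iff_valued_eq_one]
  constructor
  · exact fun h => dvd_of_valued_lt_one hϖ (lt_of_le_of_ne x.2 h)
  · rintro ⟨c, rfl⟩
    refine ne_of_lt ?_
    push_cast
    rw [map_mul, hϖ]
    calc _ ≤ WithZero.exp (-1 : ℤ) := mul_le_of_le_one_right' c.2
      _ < 1 := by rw [← WithZero.exp_zero, WithZero.exp_lt_exp]; simp

/-- The reduction kernel `Γᵥ(1)` consists of the elements of the form `1 + ϖ • A`. -/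
theorem mem_ker_iff {n : Type*} [Fintype n] [DecidableEq n] {ϖ : v.adicCompletionIntegers k}
    (hϖ : Valued.v (ϖ : v.adicCompletion k) = WithZero.exp (-1 : ℤ))
    (g : Matrix.SpecialLinearGroup n (v.adicCompletionIntegers k)) :
    g ∈ MonoidHom.ker (Matrix.SpecialLinearGroup.map (n := n)
      (Ideal.Quotient.mk (IsLocalRing.maximalIdeal (v.adicCompletionIntegers k)))) ↔
    ∃ A, (g : Matrix n n (v.adicCompletionIntegers k)) = 1 + ϖ • A := by
  have h1 : g ∈ MonoidHom.ker (Matrix.SpecialLinearGroup.map (n := n)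
      (Ideal.Quotient.mk (IsLocalRing.maximalIdeal (v.adicCompletionIntegers k)))) ↔
      ∀ i j, ϖ ∣ (g : Matrix n n (v.adicCompletionIntegers k)) i j -
        (1 : Matrix n n (v.adicCompletionIntegers k)) i j := by
    rw [MonoidHom.mem_ker, ← map_one (Matrix.SpecialLinearGroup.map (n := n)
      (Ideal.Quotient.mk (IsLocalRing.maximalIdeal (v.adicCompletionIntegers k)))),
      Matrix.SpecialLinearGroup.ext_iff]
    refine forall_congr' fun i => forall_congr' fun j => ?_
    rw [← mem_maximalIdeal_iff_dvd hϖ]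
    exact Ideal.Quotient.eq
  rw [h1]
  constructor
  · intro h
    choose A hA using h
    refine ⟨Matrix.of A, ?_⟩
    ext i j : 1
    rw [Matrix.add_apply, Matrix.smul_apply, Matrix.of_apply, smul_eq_mul, ← hA]
    ring
  · rintro ⟨A, hA⟩ i j
    exact ⟨A i j, by rw [hA]; simp⟩

/-- A subgroup containing the transvections `1 + b • N i j` for all `b` in the prime `v` of `𝓞 k`
realizes every `𝒪ᵥ`-multiple of `N i j` at each level `m ≥ 1`, since `𝓞 k` surjects onto the residue
field and `ϖ ^ m a ∈ v` for `a ∈ 𝓞 k`. -/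
theorem isLeading_smul {n : Type*} [Fintype n] [DecidableEq n] {ϖ : 𝓞 k} (hv : ϖ ∈ v.asIdeal)
    (hϖ : Valued.v ((algebraMap (𝓞 k) (v.adicCompletionIntegers k) ϖ :
      v.adicCompletionIntegers k) : v.adicCompletion k) = WithZero.exp (-1 : ℤ))
    (H : Subgroup (Matrix.SpecialLinearGroup n (v.adicCompletionIntegers k)))
    (x y : n → v.adicCompletionIntegers k) (hxy : y ⬝ᵥ x = 0)
    (hH : ∀ b ∈ v.asIdeal, transvectionHom x y hxy
      (Multiplicative.ofAdd (algebraMap (𝓞 k) (v.adicCompletionIntegers k) b)) ∈ H)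
    (m : ℕ) (hm : 1 ≤ m) (r : v.adicCompletionIntegers k) :
    IsLeading H (algebraMap (𝓞 k) (v.adicCompletionIntegers k) ϖ) m (r • vecMulVec x y) := by
  obtain ⟨a, ha⟩ := exists_sub_lt_one r
  obtain ⟨c, hc⟩ := dvd_of_valued_lt_one hϖ ha
  have h1 : ϖ ^ m * a ∈ v.asIdeal :=
    Ideal.mul_mem_right _ _ (Ideal.pow_mem_of_mem _ hv m (by omega))
  have hr : r = algebraMap (𝓞 k) (v.adicCompletionIntegers k) a +
      algebraMap (𝓞 k) (v.adicCompletionIntegers k) ϖ * c := by rw [← hc]; ring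
  rw [hr, add_smul, mul_smul]
  refine IsLeading.congr ⟨_, hH _ h1, 0, ?_⟩ _
  simp [mul_smul]

end Local

end CongruenceGenerators

open CongruenceGenerators

/-- Let `k` be a number field of degree `d` over `ℚ`, `v` a nonzero prime
ideal of its ring of integers, `𝒪ᵥ` the ring of integers of the `v`-adic completion, and
`𝔪ᵥ` its maximal ideal. For a positive integer `s`, the kernel `Γᵥ(1)` of the reduction map
`SL_s(𝒪ᵥ) → SL_s(𝒪ᵥ/𝔪ᵥ)` is topologically generated by at most `s²d²` elements. -/
theorem stmt4 (k : Type*) [Field k] [NumberField k] (d : ℕ)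
    (hd : Module.finrank ℚ k = d) (s : ℕ) (hs : 0 < s)
    (v : HeightOneSpectrum (NumberField.RingOfIntegers k)) :
    letI : TopologicalSpace (Matrix.SpecialLinearGroup (Fin s) (v.adicCompletionIntegers k)) :=
      TopologicalSpace.induced
        (fun A => (A : Matrix (Fin s) (Fin s) (v.adicCompletionIntegers k))) inferInstance
    ∀ Γv1 : Subgroup (Matrix.SpecialLinearGroup (Fin s) (v.adicCompletionIntegers k)),
      Γv1 = MonoidHom.ker (Matrix.SpecialLinearGroup.map (n := Fin s)
          (Ideal.Quotient.mk (IsLocalRing.maximalIdeal (v.adicCompletionIntegers k)))) →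
      ∃ S : Finset Γv1, S.card ≤ s ^ 2 * d ^ 2 ∧
        Dense ((Subgroup.closure (S : Set Γv1) : Subgroup Γv1) : Set Γv1) := by
  intro Γv1 hΓ
  subst hΓ
  obtain ⟨ϖ, hϖv, hϖ⟩ := exists_uniformizer v
  set R := v.adicCompletionIntegers k
  set p : R := algebraMap (NumberField.RingOfIntegers k) R ϖ with hp
  set Γ := MonoidHom.ker (Matrix.SpecialLinearGroup.map (n := Fin s)
          (Ideal.Quotient.mk (IsLocalRing.maximalIdeal (v.adicCompletionIntegers k)))) with hΓ
  have hp0 : p ≠ 0 := by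
    intro h
    rw [h] at hϖ
    rw [ZeroMemClass.coe_zero, map_zero] at hϖ
    exact WithZero.exp_ne_zero hϖ.symm
  let o : Fin s := ⟨0, hs⟩
  let T (i j : Fin s) : Multiplicative R →* Matrix.SpecialLinearGroup (Fin s) R :=
    transvectionHom (colVec o i j) (rowVec o i j) (rowVec_dotProduct_colVec o i j)
  let φ (b : NumberField.RingOfIntegers k) : Multiplicative R :=
    Multiplicative.ofAdd (algebraMap (NumberField.RingOfIntegers k) R b)
  have hT : ∀ i j, ∀ b ∈ v.asIdeal, T i j (φ b) ∈ Γ := by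
    intro i j b hb
    rw [hΓ, mem_ker_iff hϖ]
    obtain ⟨c, hc⟩ : p ∣ algebraMap (NumberField.RingOfIntegers k) R b := by
      refine dvd_of_valued_lt_one hϖ ?_
      rw [valued_algebraMap]
      exact (v.intValuation_lt_one_iff_mem b).2 hb
    refine ⟨c • Matrix.vecMulVec (colVec o i j) (rowVec o i j), ?_⟩
    simp only [T, φ, coe_transvectionHom, toAdd_ofAdd, hc, mul_smul]
  let V : Submodule ℤ (NumberField.RingOfIntegers k) := v.asIdeal.restrictScalars ℤ
  let B := Module.finBasis ℤ V
  have hrank : Module.finrank ℤ V ≤ d := by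
    rw [← hd, ← NumberField.RingOfIntegers.rank k]
    exact Submodule.finrank_le V
  let gen (t : Fin s × Fin s × Fin (Module.finrank ℤ V)) : Γ :=
    ⟨T t.1 t.2.1 (φ (B t.2.2)), hT _ _ _ (B t.2.2).2⟩
  classical
  refine ⟨Finset.univ.image gen, ?_, ?_⟩
  · refine Finset.card_image_le.trans ?_
    rw [Finset.card_univ]
    simp only [Fintype.card_prod, Fintype.card_fin]
    calc s * (s * Module.finrank ℤ V) = s ^ 2 * Module.finrank ℤ V := by ring
      _ ≤ s ^ 2 * d ^ 2 := by gcongr; exact hrank.trans (Nat.le_self_pow two_ne_zero d)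
  set G : Subgroup Γ := Subgroup.closure ((Finset.univ.image gen : Finset Γ) : Set Γ) with hG
  let H : Subgroup (Matrix.SpecialLinearGroup (Fin s) R) := G.map Γ.subtype
  have hH : ∀ i j, ∀ b ∈ v.asIdeal, T i j (φ b) ∈ H := by
    intro i j
    -- The `b` with `T i j (φ b) ∈ H` form an additive group containing the basis `B` of `v`.
    let A : AddSubgroup (NumberField.RingOfIntegers k) :=
      (Subgroup.toAddSubgroup' (H.comap (T i j))).comap
        (algebraMap (NumberField.RingOfIntegers k) R).toAddMonoidHom
    have hA : V ≤ AddSubgroup.toIntSubmodule A := by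
      have hV : V = (Submodule.span ℤ (Set.range B)).map V.subtype := by
        rw [B.span_eq, Submodule.map_top, Submodule.range_subtype]
      rw [hV, Submodule.map_span, Submodule.span_le]
      rintro _ ⟨_, ⟨l, rfl⟩, rfl⟩
      exact ⟨gen (i, j, l), Subgroup.subset_closure (by simp), rfl⟩
    exact fun b hb => hA hb
  rw [dense_iff_inter_open]
  rintro U hU ⟨g, hg⟩
  obtain ⟨A, hA⟩ := (mem_ker_iff hϖ g.1).1 g.2
  have happrox := exists_approx (H := H) hp0 o
    (fun m hm i j r => isLeading_smul hϖv hϖ H _ _ _ (hH i j) m hm r) g.1 A hA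
  choose h hhH C hC using happrox
  -- The approximations `h m = g - ϖ ^ (m + 1) C m` converge to `g`, entry by entry.
  have hlim : Filter.Tendsto (fun m => (h m : Matrix (Fin s) (Fin s) R)) Filter.atTop
      (nhds (g.1 : Matrix (Fin s) (Fin s) R)) := by
    refine tendsto_pi_nhds.2 fun i => tendsto_pi_nhds.2 fun j => ?_
    refine fun W hW => ?_
    obtain ⟨M, hM⟩ := mem_nhds_pow hϖ _ W hW
    refine Filter.mem_map.2 (Filter.mem_atTop_sets.2 ⟨M, fun m hm => ?_⟩)
    have := hM (m + 1) (by omega) (-(C m i j))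
    rw [hC m] at this
    simpa using this
  obtain ⟨U', hU', rfl⟩ := isOpen_induced_iff.1 hU
  obtain ⟨W, hW, rfl⟩ := isOpen_induced_iff.1 hU'
  obtain ⟨m, hm⟩ := (hlim.eventually (hW.mem_nhds hg)).exists
  obtain ⟨y, hy, hyh⟩ := hhH m
  exact ⟨y, by rw [← hyh] at hm; exact hm, hy⟩
end

section
/- Let d ≥ 1 be an integer and let (G_i)_{i ∈ ι} be a family of finite quasi-simple groups, each of which is generated by 2 elements, such that for every i the set { j ∈ ι : G_j/Z(G_j) is isomorphic to G_i/Z(G_i) } has at most d elements. Then the product ∏_{i ∈ ι} G_i, equipped with the product topology where each factor is discrete, is topologically generated by at most 2d elements. -/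
/-!
Split `ι` into `d` colour classes so that two distinct indices with isomorphic central quotients
get different colours. For each colour take two elements of the product: in the coordinates of
that colour they are the two given generators, and elsewhere they are `1`. Let `H` be the subgroup
generated by these `2d` elements; it surjects onto each factor.

Density of `H` means that `H` surjects onto finite subproducts. Since the factors are perfect,
commutators reduce this to pairs (`exists_apply_eq_and_eq_one`): it is enough that for `i ≠ j`
every element of `G i` is the `i`-th coordinate of some `h ∈ H` with `h j = 1`. For `i`, `j` of
different colours this is clear from the generators. For the same colour the central quotients of
`G i` and `G j` are not isomorphic, and a Goursat argument applies (`pair_of_not_iso`).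
-/

open scoped commutatorElement

/-- The elements of `G i` that occur as `i`-th coordinate of an `h ∈ H` satisfying `h ∈ K`. -/
def coordSubgroup {ι : Type*} {G : ι → Type*} [∀ i, Group (G i)]
    (H K : Subgroup (∀ i, G i)) (i : ι) : Subgroup (G i) :=
  (H ⊓ K).map (Pi.evalMonoidHom G i)

lemma mem_coordSubgroup {ι : Type*} {G : ι → Type*} [∀ i, Group (G i)]
    {H K : Subgroup (∀ i, G i)} {i : ι} {g : G i} :
    g ∈ coordSubgroup H K i ↔ ∃ h ∈ H, h ∈ K ∧ h i = g := by
  simp [coordSubgroup, Subgroup.mem_map, and_assoc]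

/-- If `H` realises all of the perfect group `G i` in coordinate `i` both under the constraint `K`
and under the constraint `L`, then commutators realise it under every constraint `M ≥ ⁅K, L⁆`. -/
lemma coordSubgroup_eq_top_of_commutator {ι : Type*} {G : ι → Type*} [∀ i, Group (G i)]
    {H K L M : Subgroup (∀ i, G i)} {i : ι} (hperfect : commutator (G i) = ⊤)
    (hK : coordSubgroup H K i = ⊤) (hL : coordSubgroup H L i = ⊤)
    (hM : ∀ x ∈ K, ∀ y ∈ L, ⁅x, y⁆ ∈ M) : coordSubgroup H M i = ⊤ := by
  rw [eq_top_iff, ← hperfect, commutator_def, Subgroup.commutator_le]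
  intro a _ b _
  obtain ⟨x, hx, hxK, rfl⟩ := mem_coordSubgroup.1 (hK ▸ Subgroup.mem_top a)
  obtain ⟨y, hy, hyL, rfl⟩ := mem_coordSubgroup.1 (hL ▸ Subgroup.mem_top b)
  refine mem_coordSubgroup.2 ⟨⁅x, y⁆, ?_, hM x hxK y hyL, rfl⟩
  rw [commutatorElement_def]
  exact H.mul_mem (H.mul_mem (H.mul_mem hx hy) (H.inv_mem hx)) (H.inv_mem hy)

/-- The constraint "trivial in every coordinate of `F`". -/
def trivialOn {ι : Type*} (G : ι → Type*) [∀ i, Group (G i)] (F : Set ι) :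
    Subgroup (∀ i, G i) where
  carrier := {h | ∀ j ∈ F, h j = 1}
  one_mem' := fun _ _ => rfl
  mul_mem' := fun ha hb j hj => by simp [ha j hj, hb j hj]
  inv_mem' := fun ha j hj => by simp [ha j hj]

/-- A proper normal subgroup of a quasi-simple group is central. -/
lemma normal_le_center_or_eq_top {Q : Type*} [Group Q] (hperfect : commutator Q = ⊤)
    (hsimple : IsSimpleGroup (Q ⧸ Subgroup.center Q)) (N : Subgroup Q) [hN : N.Normal] :
    N ≤ Subgroup.center Q ∨ N = ⊤ := by
  have hn : (N.map (QuotientGroup.mk' (Subgroup.center Q))).Normal :=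
    hN.map _ (QuotientGroup.mk'_surjective _)
  rcases hn.eq_bot_or_eq_top with h | h
  · left
    rwa [Subgroup.map_eq_bot_iff, QuotientGroup.ker_mk'] at h
  · right
    -- Here `Q = N Z(Q)`, so `[Q, Q] ≤ N`.
    have key : ∀ a : Q, ∃ n ∈ N, ∃ z ∈ Subgroup.center Q, a = n * z := by
      intro a
      obtain ⟨n, hnN, hna⟩ := Subgroup.mem_map.1 (h ▸ Subgroup.mem_top (a : Q ⧸ Subgroup.center Q))
      exact ⟨n, hnN, n⁻¹ * a, QuotientGroup.eq.1 hna, by group⟩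
    rw [eq_top_iff, ← hperfect, commutator_def, Subgroup.commutator_le]
    intro a _ b _
    obtain ⟨n, hnN, z, hz, rfl⟩ := key a
    have h1 : ⁅n * z, b⁆ = n * (b * n⁻¹ * b⁻¹) := by
      have := Subgroup.mem_center_iff.1 hz b
      calc ⁅n * z, b⁆ = n * (z * b) * z⁻¹ * n⁻¹ * b⁻¹ := by rw [commutatorElement_def]; group
        _ = n * (b * n⁻¹ * b⁻¹) := by rw [← this]; group
    rw [h1]
    exact N.mul_mem hnN (hN.conj_mem _ (N.inv_mem hnN) b)

/-- Goursat-type step: if `H` surjects onto the quasi-simple groups `G i` and `G j`, whose central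
quotients are not isomorphic, then `H` realises every element of `G i` with trivial
`j`-th coordinate. -/
lemma pair_of_not_iso {ι : Type*} {G : ι → Type*} [∀ i, Group (G i)] {i j : ι}
    (hperfect : ∀ i, commutator (G i) = ⊤)
    (hsimple : ∀ i, IsSimpleGroup (G i ⧸ Subgroup.center (G i)))
    (H : Subgroup (∀ i, G i)) (hH : ∀ i, ∀ g : G i, ∃ h ∈ H, h i = g)
    (hiso : IsEmpty ((G j ⧸ Subgroup.center (G j)) ≃* (G i ⧸ Subgroup.center (G i)))) :
    coordSubgroup H (trivialOn G {j}) i = ⊤ := by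
  let K : Subgroup (∀ i, G i) := (Subgroup.center (G j)).comap (Pi.evalMonoidHom G j)
  have hnorm : (coordSubgroup H K i).Normal := by
    refine ⟨fun n hn g => ?_⟩
    obtain ⟨x, hx, hxK, rfl⟩ := mem_coordSubgroup.1 hn
    obtain ⟨y, hy, rfl⟩ := hH i g
    exact mem_coordSubgroup.2 ⟨y * x * y⁻¹, H.mul_mem (H.mul_mem hy hx) (H.inv_mem hy),
      (inferInstance : K.Normal).conj_mem x hxK y, rfl⟩
  rcases normal_le_center_or_eq_top (hperfect i) (hsimple i) (coordSubgroup H K i) with h | h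
  · -- `h j` central forces `h i` central, so there is a surjection of simple central quotients.
    exfalso
    let f : H →* G i ⧸ Subgroup.center (G i) :=
      (QuotientGroup.mk' _).comp ((Pi.evalMonoidHom G i).comp H.subtype)
    let g : H →* G j ⧸ Subgroup.center (G j) :=
      (QuotientGroup.mk' _).comp ((Pi.evalMonoidHom G j).comp H.subtype)
    have hf : Function.Surjective f := by
      intro q
      obtain ⟨a, rfl⟩ := QuotientGroup.mk'_surjective _ q
      obtain ⟨x, hx, rfl⟩ := hH i a
      exact ⟨⟨x, hx⟩, rfl⟩
    have hg : Function.Surjective g := by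
      intro q
      obtain ⟨a, rfl⟩ := QuotientGroup.mk'_surjective _ q
      obtain ⟨x, hx, rfl⟩ := hH j a
      exact ⟨⟨x, hx⟩, rfl⟩
    have hker : g.ker ≤ f.ker := by
      rintro ⟨x, hx⟩ hxg
      have hxK : x ∈ K := (QuotientGroup.eq_one_iff (x j)).1 hxg
      exact (QuotientGroup.eq_one_iff (x i)).2 (h (mem_coordSubgroup.2 ⟨x, hx, hxK, rfl⟩))
    let φ := g.liftOfSurjective hg ⟨f, hker⟩
    have hφ : ∀ x, φ (g x) = f x := fun x =>
      MonoidHom.liftOfRightInverse_comp_apply g _ _ ⟨f, hker⟩ x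
    have hφs : Function.Surjective φ := by
      intro q
      obtain ⟨x, rfl⟩ := hf q
      exact ⟨g x, hφ x⟩
    have hni := (hsimple i).toNontrivial
    have hkerφ : φ.ker = ⊥ := by
      rcases (inferInstance : φ.ker.Normal).eq_bot_or_eq_top with h0 | h0
      · exact h0
      · exfalso
        obtain ⟨q, hq⟩ := exists_ne (1 : G i ⧸ Subgroup.center (G i))
        obtain ⟨p, rfl⟩ := hφs q
        exact hq (MonoidHom.mem_ker.1 (h0 ▸ Subgroup.mem_top p))
    exact hiso.false (MulEquiv.ofBijective φ ⟨(MonoidHom.ker_eq_bot_iff φ).1 hkerφ, hφs⟩)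
  · refine coordSubgroup_eq_top_of_commutator (hperfect i) h h ?_
    intro x hx y _ k hk
    obtain rfl : k = j := hk
    have : y k * x k = x k * y k := Subgroup.mem_center_iff.1 hx (y k)
    change ⁅x k, y k⁆ = 1
    rw [commutatorElement_eq_one_iff_mul_comm, this]

/-- If `H` realises each element of `G i` with any one prescribed other coordinate trivial, then it
does so with any finite set of other coordinates trivial, as `G i` is perfect. -/
lemma exists_apply_eq_and_eq_one {ι : Type*} {G : ι → Type*} [∀ i, Group (G i)]
    (hperfect : ∀ i, commutator (G i) = ⊤) (H : Subgroup (∀ i, G i))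
    (hH : ∀ i, ∀ g : G i, ∃ h ∈ H, h i = g)
    (hpair : ∀ i j, i ≠ j → coordSubgroup H (trivialOn G {j}) i = ⊤)
    (i : ι) (F : Finset ι) (hF : i ∉ F) : coordSubgroup H (trivialOn G F) i = ⊤ := by
  classical
  induction F using Finset.induction_on with
  | empty =>
    rw [eq_top_iff]
    intro g _
    obtain ⟨h, hh, rfl⟩ := hH i g
    exact mem_coordSubgroup.2 ⟨h, hh, fun j hj => by simp at hj, rfl⟩
  | insert j F _ ih =>
    rw [Finset.mem_insert, not_or] at hF
    refine coordSubgroup_eq_top_of_commutator (hperfect i) (hpair i j hF.1) (ih hF.2) ?_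
    intro x hx y hy k hk
    change ⁅x k, y k⁆ = 1
    rcases Finset.mem_insert.1 (Finset.mem_coe.1 hk) with rfl | hk
    · rw [hx k rfl, commutatorElement_one_left]
    · rw [hy k hk, commutatorElement_one_right]

/-- A subgroup that realises each element of each `G i` with finitely many other coordinates
trivial surjects onto every finite subproduct. -/
lemma exists_eq_on_finset {ι : Type*} {G : ι → Type*} [∀ i, Group (G i)]
    (H : Subgroup (∀ i, G i))
    (h1 : ∀ i (F : Finset ι), i ∉ F → coordSubgroup H (trivialOn G F) i = ⊤)
    (F : Finset ι) (g : ∀ i, G i) : ∃ h ∈ H, ∀ i ∈ F, h i = g i := by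
  classical
  induction F using Finset.induction_on with
  | empty => exact ⟨1, H.one_mem, by simp⟩
  | insert j F hj ih =>
    obtain ⟨h, hh, hF⟩ := ih
    obtain ⟨x, hx, hxF, hxj⟩ := mem_coordSubgroup.1
      (h1 j F hj ▸ Subgroup.mem_top ((h j)⁻¹ * g j))
    refine ⟨h * x, H.mul_mem hh hx, fun i hi => ?_⟩
    rcases Finset.mem_insert.1 hi with rfl | hi
    · simp [hxj]
    · simp [hF i hi, hxF i hi]

/-- A generating set with at most two elements yields a generating pair, possibly with repeated or
trivial entries. -/
lemma exists_fin_two_closure {Q : Type*} [Group Q]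
    (h : ∃ S : Finset Q, S.card ≤ 2 ∧ Subgroup.closure (S : Set Q) = ⊤) :
    ∃ a : Fin 2 → Q, Subgroup.closure (Set.range a) = ⊤ := by
  obtain ⟨S, hS, hc⟩ := h
  refine ⟨fun k => if hk : (k : ℕ) < S.card then (S.equivFin.symm ⟨k, hk⟩ : Q) else 1, ?_⟩
  rw [eq_top_iff, ← hc]
  refine Subgroup.closure_mono fun s hs => ?_
  refine ⟨⟨S.equivFin ⟨s, hs⟩, lt_of_lt_of_le (S.equivFin ⟨s, hs⟩).2 hS⟩, ?_⟩
  simp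

/-- A colouring of the indices by `d` colours that separates distinct indices having isomorphic
central quotients. -/
lemma exists_colouring {ι : Type*} (d : ℕ) (hd : 1 ≤ d) (G : ι → Type*) [∀ i, Group (G i)]
    (hmult : ∀ i, ({j | Nonempty ((G j ⧸ Subgroup.center (G j)) ≃*
        (G i ⧸ Subgroup.center (G i)))} : Set ι).encard ≤ (d : ℕ∞)) :
    ∃ c : ι → Fin d, ∀ i j, i ≠ j → c i = c j →
      IsEmpty ((G j ⧸ Subgroup.center (G j)) ≃* (G i ⧸ Subgroup.center (G i))) := by
  have : Nonempty (Fin d) := ⟨⟨0, hd⟩⟩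
  have key : ∀ A : Set ι, ∃ f : ι → Fin d, A.encard ≤ (d : ℕ∞) → Set.InjOn f A := by
    intro A
    by_cases hA : A.encard ≤ (d : ℕ∞)
    · obtain ⟨f, -, hf⟩ := (Set.finite_of_encard_le_coe hA).exists_injOn_of_encard_le
        (t := (Set.univ : Set (Fin d))) (by simpa using hA)
      exact ⟨f, fun _ => hf⟩
    · exact ⟨fun _ => Classical.arbitrary _, fun h => absurd h hA⟩
  choose f hf using key
  -- The injection depends on the isomorphism class only, as a set of indices.
  refine ⟨fun i => f {j | Nonempty ((G j ⧸ Subgroup.center (G j)) ≃*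
    (G i ⧸ Subgroup.center (G i)))} i, fun i j hij hc => ⟨fun e => hij ?_⟩⟩
  have hAA : {k | Nonempty ((G k ⧸ Subgroup.center (G k)) ≃* (G i ⧸ Subgroup.center (G i)))} =
      {k | Nonempty ((G k ⧸ Subgroup.center (G k)) ≃* (G j ⧸ Subgroup.center (G j)))} := by
    ext k
    exact ⟨fun ⟨u⟩ => ⟨u.trans e.symm⟩, fun ⟨u⟩ => ⟨u.trans e⟩⟩
  simp only [← hAA] at hc
  exact hf _ (hmult i) ⟨MulEquiv.refl _⟩ ⟨e⟩ hc

/-- Let `d ≥ 1` and let `(G i)` be a family of finite quasi-simple groups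
(perfect, with simple central quotient), each generated by 2 elements, such that for each
`i` at most `d` indices `j` have `G j / Z(G j)` isomorphic to `G i / Z(G i)`. Then
`∏ i, G i`, with the product topology where each factor is discrete, is topologically
generated by at most `2d` elements. -/
theorem stmt5 {ι : Type*} (d : ℕ) (hd : 1 ≤ d) (G : ι → Type*)
    [∀ i, Group (G i)] [∀ i, Finite (G i)]
    (hperfect : ∀ i, commutator (G i) = ⊤)
    (hsimple : ∀ i, IsSimpleGroup (G i ⧸ Subgroup.center (G i)))
    (hgen : ∀ i, ∃ S : Finset (G i), S.card ≤ 2 ∧ Subgroup.closure (S : Set (G i)) = ⊤)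
    (hmult : ∀ i, ({j | Nonempty ((G j ⧸ Subgroup.center (G j)) ≃*
        (G i ⧸ Subgroup.center (G i)))} : Set ι).encard ≤ (d : ℕ∞)) :
    letI : ∀ i, TopologicalSpace (G i) := fun _ => ⊥
    ∃ S : Finset (∀ i, G i), S.card ≤ 2 * d ∧
      Dense ((Subgroup.closure (S : Set (∀ i, G i)) : Subgroup (∀ i, G i))
        : Set (∀ i, G i)) := by

  classical
  let _ : ∀ i, TopologicalSpace (G i) := fun _ => ⊥
  obtain ⟨c, hc⟩ := exists_colouring d hd G hmult
  choose a ha using fun i => exists_fin_two_closure (hgen i)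
  let s : Fin d × Fin 2 → ∀ i, G i := fun p i => if c i = p.1 then a i p.2 else 1
  refine ⟨Finset.univ.image s, Finset.card_image_le.trans (by simp [mul_comm]), ?_⟩
  set H := Subgroup.closure ((Finset.univ.image s : Finset (∀ i, G i)) : Set (∀ i, G i)) with hHdef
  have hs : ∀ p, s p ∈ H := fun p => Subgroup.subset_closure (by simp)
  -- Whatever constraint the two generators of colour `c i` satisfy, they realise all of `G i`.
  have htop : ∀ (i : ι) (K : Subgroup (∀ i, G i)), (∀ e, s (c i, e) ∈ K) →
      coordSubgroup H K i = ⊤ := by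
    intro i K hK
    rw [eq_top_iff, ← ha i, Subgroup.closure_le]
    rintro _ ⟨e, rfl⟩
    exact mem_coordSubgroup.2 ⟨s (c i, e), hs _, hK e, by simp [s]⟩
  have hH : ∀ i, ∀ g : G i, ∃ h ∈ H, h i = g := by
    intro i g
    obtain ⟨h, hh, -, rfl⟩ := mem_coordSubgroup.1
      (htop i ⊤ (fun _ => Subgroup.mem_top _) ▸ Subgroup.mem_top g)
    exact ⟨h, hh, rfl⟩
  have hpair : ∀ i j, i ≠ j → coordSubgroup H (trivialOn G {j}) i = ⊤ := by
    intro i j hij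
    by_cases hcij : c i = c j
    · exact pair_of_not_iso hperfect hsimple H hH (hc i j hij hcij)
    · refine htop i _ fun e k hk => ?_
      obtain rfl : k = j := hk
      simp [s, Ne.symm hcij]
  intro g
  rw [mem_closure_iff]
  intro U hU hgU
  obtain ⟨F, u, hu, hFU⟩ := isOpen_pi_iff.1 hU g hgU
  obtain ⟨h, hh, hF⟩ := exists_eq_on_finset H
    (exists_apply_eq_and_eq_one hperfect H hH hpair) F g
  exact ⟨h, hFU fun i hi => by rw [hF i hi]; exact (hu i hi).2, hh⟩
end
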